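/- arXiv:2011.08322 — 2 statements merged into one kernel-verified Lean document; each statement's English description precedes it below -/
import Mathlib

section
/- For a multi-index α ∈ ℕ^d, let e_{11} denote the multi-index with a single 1 in position (j,k) = (1,1) and define λ(α) = (ω₂(α)/ω₂(α − e_{11})) − ω₂(α + e_{11})/ω₂(α) when α_{11} ≥ 1, and λ(α) = −ω₂(α + e_{11})/ω₂(α) when α_{11} = 0. Then for every real p > 0, the series ∑_{α ∈ ℕ^d} |λ(α)|^p converges if and only if: p > 1/2 in case d = 1; p > max{ d, a_1 p_{11}(d − m_1) } in case d > 1 and m_1 = 1; and p > max{ d, p_{11}(d − 1), a_1 p_{11}(d − m_1) } in case d > 1 and m_1 > 1. -/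
/-!
Fix the distinguished coordinate `n = α_{11}` and put `h = 1 / p_{11}`, `a = a_1`,
`x = (n + 1) h`. As a function of `n`, the norm `ω₂` is a constant times
`Γ(x) / Γ(x + S) * Γ((x + S) / a) / Γ((x + S) / a + T)` (`gammaQuot`), where `S` and `T - 1` are
linear forms, with positive coefficients, in the shifted coordinates `α_{jk} + 1`: those of the
`m_1 - 1` other positions of the first block, and those of the `d - m_1` positions of the other
blocks (`exists_omegaTwo_update`). The factor
`1 / ∑_k s_k` of `ω₂` is absorbed by `v Γ(v) = Γ(v + 1)`.

*Size of one eigenvalue.* Let `R` be the ratio of `ω₂` at `α + e_{11}` and at `α`. For `n ≥ 1`,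
`|λ| = R (1 - exp (-Δ))` with `Δ` the second difference of `log ω₂` in direction `e_{11}`.
Euler's product for `Γ` writes the second difference of `log Γ` as a series of terms
`2 log y - log (y + h) - log (y - h)`, whose decrements are comparable to those of the
telescoping terms `1 / y - 1 / (y + 1)`. Hence `Δ ≍ S / (x u) + T / (u v)` with `u = x + S` and
`v = u + a T`: both contributions are nonnegative, so nothing cancels. Log-convexity of `Γ` gives
`R ≍ (x / u) ^ h (u / v) ^ (h / a)`. Altogether `|λ|` is comparable, uniformly in `α` and
including `n = 0`, to an explicit function `model` of `n + 1`, `S + 1`, `T`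
(`jump_comparable_model`).

*Sufficiency.* In logarithmic coordinates `(ξ, σ, τ)` of the positive octant, the exponent of
`model` is piecewise linear, and each of its pieces is spanned by vectors with entries `0` and `1`.
An upper bound by a linear function may therefore be tested at the seven nonzero such vectors
(`exponent_le`), where the exponent is `-2` at `(1,0,0)`, `-h` at `(0,1,0)` and `(0,1,1)`,
`-h / a` at `(0,0,1)`, and `-1` at the other three. Under the stated conditions `model ^ q` is thus
dominated by `∏ i, (α i + 1) ^ (-e)` for some `e > 1` (`summable_model`).

*Necessity.* On the dyadic boxes `[N, 2N)^I × {0}^{Iᶜ}` the model is at least a constant times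
`N ^ (-b)`, with `b` the value just listed for the direction of `I`, and a box has `N ^ |I|` points;
summability forces `|I| < b q` (`card_lt_of_summable`).
-/

/-- `ω₂(α)`: the squared `L²` norm of the monomial `z^α` on the generalized egg domain
`Ω₂ = {z : ∑_k (∑_j |z_{jk}|^{2 p_{jk}})^{a_k} < 1}`. -/
noncomputable def omegaTwo (K : ℕ) (m : Fin K → ℕ) (p : (k : Fin K) → Fin (m k) → ℝ)
    (a : Fin K → ℝ) (α : (Σ k : Fin K, Fin (m k)) → ℕ) : ℝ :=
  (Real.pi ^ (∑ k, m k) / ∏ k, ∏ j, p k j) * (1 / ∏ k, a k) *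
    (∏ k, (∏ j, Real.Gamma (((α ⟨k, j⟩ : ℝ) + 1) / p k j)) /
      Real.Gamma (∑ j, ((α ⟨k, j⟩ : ℝ) + 1) / p k j)) *
    ((∏ k, Real.Gamma (∑ j, ((α ⟨k, j⟩ : ℝ) + 1) / (a k * p k j))) /
      Real.Gamma (∑ k, ∑ j, ((α ⟨k, j⟩ : ℝ) + 1) / (a k * p k j))) /
    (∑ k, ∑ j, ((α ⟨k, j⟩ : ℝ) + 1) / (a k * p k j))

/-- `λ(α)`: the eigenvalue of the self-commutator `[M_{z_{11}}, M_{z_{11}}*]` at the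
normalized monomial `z^α/√ω₂(α)`, where `x` is the distinguished coordinate. -/
noncomputable def lambdaTwo (K : ℕ) (m : Fin K → ℕ) (p : (k : Fin K) → Fin (m k) → ℝ)
    (a : Fin K → ℝ) (x : Σ k : Fin K, Fin (m k)) (α : (Σ k : Fin K, Fin (m k)) → ℕ) : ℝ :=
  if α x = 0 then
    -(omegaTwo K m p a (Function.update α x (α x + 1)) / omegaTwo K m p a α)
  else
    omegaTwo K m p a α / omegaTwo K m p a (Function.update α x (α x - 1))
      - omegaTwo K m p a (Function.update α x (α x + 1)) / omegaTwo K m p a α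

open Filter Topology

/-! ### Second differences of `log Γ` -/

/-- Minus the second difference, with step `h`, of `log` at `y`. By Euler's product, the second
difference of `log Γ` at `x` is the sum of `logDiff h (x + m)` over `m ∈ ℕ`. -/
noncomputable def logDiff (h y : ℝ) : ℝ := 2 * Real.log y - Real.log (y + h) - Real.log (y - h)

/-- The telescoping term `1 / y - 1 / (y + 1)`, against which `logDiff h` is compared. -/
noncomputable def tele (y : ℝ) : ℝ := y⁻¹ - (y + 1)⁻¹

/-- A constant `C` for which `C * tele - logDiff h` is antitone on `[2h, ∞)`. -/
noncomputable def cUp (h : ℝ) : ℝ := 4 / 3 * h ^ 2 * (1 + 1 / (2 * h)) ^ 2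

lemma hasDerivAt_logDiff {h y : ℝ} (hh : 0 < h) (hy : 2 * h ≤ y) :
    HasDerivAt (logDiff h) (-(2 * h ^ 2 / (y * (y ^ 2 - h ^ 2)))) y := by
  have h1 : 0 < y := by linarith
  have h2 : 0 < y + h := by linarith
  have h3 : 0 < y - h := by linarith
  have d1 := ((Real.hasDerivAt_log h1.ne').const_mul 2)
  have d2 := ((hasDerivAt_id y).add_const h).log h2.ne'
  have d3 := ((hasDerivAt_id y).sub_const h).log h3.ne'
  refine ((d1.sub d2).sub d3).congr_deriv ?_
  have : y ^ 2 - h ^ 2 = (y + h) * (y - h) := by ring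
  rw [this]
  simp only [id]
  field_simp
  ring

lemma hasDerivAt_tele {y : ℝ} (hy : 0 < y) :
    HasDerivAt tele (-((2 * y + 1) / (y ^ 2 * (y + 1) ^ 2))) y := by
  have d1 := (hasDerivAt_inv hy.ne')
  have h2 : 0 < y + 1 := by linarith
  have d2 := ((hasDerivAt_id y).add_const 1).inv h2.ne'
  refine (d1.sub d2).congr_deriv ?_
  simp only [id]
  field_simp
  ring

/-- A function whose derivative is nonpositive on `[b, ∞)` is antitone there. -/
lemma antitone_aux {f f' : ℝ → ℝ} {b y z : ℝ} (hf : ∀ t, b ≤ t → HasDerivAt f (f' t) t)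
    (hf' : ∀ t, b ≤ t → f' t ≤ 0) (hy : b ≤ y) (hyz : y ≤ z) : f z ≤ f y := by
  have : AntitoneOn f (Set.Ici b) := by
    apply antitoneOn_of_deriv_nonpos (convex_Ici b)
    · exact fun t ht => (hf t ht).continuousAt.continuousWithinAt
    · intro t ht
      exact (hf t (interior_subset ht)).differentiableAt.differentiableWithinAt
    · intro t ht
      rw [(hf t (interior_subset ht)).deriv]
      exact hf' t (interior_subset ht)
  exact this hy (hy.trans hyz) hyz

lemma logDiff_lower {h y z : ℝ} (hh : 0 < h) (hy : 2 * h ≤ y) (hyz : y ≤ z) :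
    h ^ 2 * (tele y - tele z) ≤ logDiff h y - logDiff h z := by
  have := antitone_aux (f := fun t => logDiff h t - h ^ 2 * tele t) (b := 2 * h)
    (fun t ht => (hasDerivAt_logDiff hh ht).sub
      ((hasDerivAt_tele (by linarith)).const_mul (h ^ 2))) (fun t ht => ?_) hy hyz
  · linarith
  · have h1 : 0 < t := by linarith
    have h2 : 0 < t ^ 2 - h ^ 2 := by nlinarith
    have : h ^ 2 * ((2 * t + 1) / (t ^ 2 * (t + 1) ^ 2)) ≤ 2 * h ^ 2 / (t * (t ^ 2 - h ^ 2)) := by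
      rw [← mul_div_assoc, div_le_div_iff₀ (by positivity) (by positivity)]
      have e : (2 * t + 1) * (t ^ 2 - h ^ 2) ≤ 2 * t * (t + 1) ^ 2 := by nlinarith [sq_nonneg h]
      have := mul_le_mul_of_nonneg_left e (by positivity : 0 ≤ h ^ 2 * t)
      linarith
    linarith

lemma logDiff_upper {h y z : ℝ} (hh : 0 < h) (hy : 2 * h ≤ y) (hyz : y ≤ z) :
    logDiff h y - logDiff h z ≤ cUp h * (tele y - tele z) := by
  have := antitone_aux (f := fun t => cUp h * tele t - logDiff h t) (b := 2 * h)
    (fun t ht => ((hasDerivAt_tele (by linarith)).const_mul (cUp h)).sub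
      (hasDerivAt_logDiff hh ht)) (fun t ht => ?_) hy hyz
  · linarith
  · have h1 : 0 < t := by linarith
    have h2 : 0 < t ^ 2 - h ^ 2 := by nlinarith
    have e1 : t + 1 ≤ (1 + 1 / (2 * h)) * t := by
      have : 1 ≤ 1 / (2 * h) * t := by
        rw [one_div, inv_mul_eq_div, le_div_iff₀ (by positivity)]; linarith
      linarith
    have e2 : (t + 1) ^ 2 ≤ (1 + 1 / (2 * h)) ^ 2 * t ^ 2 := by
      rw [← mul_pow]; gcongr
    have : 2 * h ^ 2 / (t * (t ^ 2 - h ^ 2)) ≤ cUp h * ((2 * t + 1) / (t ^ 2 * (t + 1) ^ 2)) := by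
      rw [← mul_div_assoc, div_le_div_iff₀ (by positivity) (by positivity)]
      unfold cUp
      have e3 : t ^ 2 ≤ 4 / 3 * (t ^ 2 - h ^ 2) := by nlinarith
      calc 2 * h ^ 2 * (t ^ 2 * (t + 1) ^ 2)
          ≤ 2 * h ^ 2 * ((4 / 3 * (t ^ 2 - h ^ 2)) * ((1 + 1 / (2 * h)) ^ 2 * t ^ 2)) := by
            gcongr
        _ = 4 / 3 * h ^ 2 * (1 + 1 / (2 * h)) ^ 2 * (2 * t) * (t * (t ^ 2 - h ^ 2)) := by ring
        _ ≤ _ := by gcongr; linarith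
    linarith

/-- The second difference of `log Γ` at `x` with step `h`. -/
noncomputable def gammaDiff (h x : ℝ) : ℝ :=
  Real.log (Real.Gamma (x + h)) - 2 * Real.log (Real.Gamma x) + Real.log (Real.Gamma (x - h))

/-- Euler's product for `Γ`, in the logarithmic form of the Bohr–Mollerup theory; the terms other
than the `logDiff` cancel in a second difference. -/
lemma tendsto_sum_logDiff {h x : ℝ} (hh : 0 < h) (hx : 2 * h ≤ x) :
    Tendsto (fun n : ℕ => ∑ m ∈ Finset.range (n + 1), logDiff h (x + m)) atTop
      (𝓝 (gammaDiff h x)) := by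
  have t1 := Real.BohrMollerup.tendsto_log_gamma (x := x + h) (by linarith)
  have t2 := Real.BohrMollerup.tendsto_log_gamma (x := x) (by linarith)
  have t3 := Real.BohrMollerup.tendsto_log_gamma (x := x - h) (by linarith)
  refine ((t1.sub (t2.const_mul 2)).add t3).congr fun n => ?_
  simp only [Real.BohrMollerup.logGammaSeq, logDiff, Finset.sum_sub_distrib, ← Finset.mul_sum]
  have e1 : ∀ m : ℕ, x + h + m = x + m + h := fun m => by ring
  have e2 : ∀ m : ℕ, x - h + m = x + m - h := fun m => by ring
  simp only [e1, e2]
  ring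

lemma tendsto_sum_tele {x : ℝ} :
    Tendsto (fun n : ℕ => ∑ m ∈ Finset.range (n + 1), tele (x + m)) atTop (𝓝 x⁻¹) := by
  have e : ∀ n : ℕ, ∑ m ∈ Finset.range (n + 1), tele (x + m) = x⁻¹ - (x + (n + 1 : ℕ))⁻¹ := by
    intro n
    have := Finset.sum_range_sub' (fun m : ℕ => (x + m)⁻¹) (n + 1)
    simp only [Nat.cast_zero, add_zero] at this
    rw [← this]
    refine Finset.sum_congr rfl fun m _ => ?_
    simp only [tele]; push_cast; ring_nf
  simp only [e]
  have : Tendsto (fun n : ℕ => (x + (n + 1 : ℕ))⁻¹) atTop (𝓝 0) := by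
    apply Tendsto.inv_tendsto_atTop
    apply tendsto_atTop_add_const_left
    exact tendsto_natCast_atTop_atTop.comp (tendsto_add_atTop_nat 1)
  simpa using (tendsto_const_nhds (x := x⁻¹)).sub this

lemma inv_sub_inv_add {x S : ℝ} (hx : 0 < x) (hS : 0 ≤ S) :
    x⁻¹ - (x + S)⁻¹ = S / (x * (x + S)) := by
  have : 0 < x + S := by linarith
  field_simp; ring

/-- The decrement of `gammaDiff h` from `x` to `x + S` is comparable to `1 / x - 1 / (x + S)`, by
summing the termwise comparison of `logDiff` with `tele`. -/
lemma gammaDiff_bounds {h x S : ℝ} (hh : 0 < h) (hx : 2 * h ≤ x) (hS : 0 ≤ S) :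
    h ^ 2 * (S / (x * (x + S))) ≤ gammaDiff h x - gammaDiff h (x + S) ∧
      gammaDiff h x - gammaDiff h (x + S) ≤ cUp h * (S / (x * (x + S))) := by
  rw [← inv_sub_inv_add (by linarith) hS]
  have t := (tendsto_sum_logDiff hh hx).sub (tendsto_sum_logDiff hh (x := x + S) (by linarith))
  have s := (tendsto_sum_tele (x := x)).sub (tendsto_sum_tele (x := x + S))
  constructor
  · refine le_of_tendsto_of_tendsto' (s.const_mul _) t fun n => ?_
    rw [← Finset.sum_sub_distrib, ← Finset.sum_sub_distrib, Finset.mul_sum]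
    refine Finset.sum_le_sum fun m _ => logDiff_lower hh ?_ ?_
    · have : (0:ℝ) ≤ m := m.cast_nonneg
      linarith
    · linarith
  · refine le_of_tendsto_of_tendsto' t (s.const_mul _) fun n => ?_
    rw [← Finset.sum_sub_distrib, ← Finset.sum_sub_distrib, Finset.mul_sum]
    refine Finset.sum_le_sum fun m _ => logDiff_upper hh ?_ ?_
    · have : (0:ℝ) ≤ m := m.cast_nonneg
      linarith
    · linarith

/-- Wendel's upper bound: by convexity of `log Γ`, its slope on `[x, x + h]` is at most its slope
on `[x + h, x + h + 1]`, which is `log (x + h)`. -/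
lemma gamma_ratio_upper {h x : ℝ} (hh : 0 < h) (hx : 0 < x) :
    Real.Gamma (x + h) / Real.Gamma x ≤ (x + h) ^ h := by
  have c := Real.convexOn_log_Gamma
  have := c.slope_mono_adjacent (x := x) (y := x + h) (z := x + h + 1) hx
    (by simp; linarith) (by linarith) (by linarith)
  have g1 := Real.Gamma_pos_of_pos hx
  have g2 := Real.Gamma_pos_of_pos (show 0 < x + h by linarith)
  have h2 : 0 < x + h := by linarith
  simp only [Function.comp] at this
  rw [Real.Gamma_add_one h2.ne', Real.log_mul h2.ne' g2.ne'] at this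
  rw [div_le_div_iff₀ (by linarith) (by linarith)] at this
  rw [Real.rpow_def_of_pos h2, ← Real.log_le_iff_le_exp (by positivity),
    Real.log_div g2.ne' g1.ne']
  linarith

/-- Wendel's lower bound: the slope `log x` of `log Γ` on `[x, x + 1]` is at most its slope on
`[x + 1, x + 1 + h]`. -/
lemma gamma_ratio_lower {h x : ℝ} (hh : 0 < h) (hx : 0 < x) :
    x ^ h * (x / (x + h)) ≤ Real.Gamma (x + h) / Real.Gamma x := by
  have c := Real.convexOn_log_Gamma
  have := c.slope_mono_adjacent (x := x) (y := x + 1) (z := x + 1 + h) hx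
    (by simp; linarith) (by linarith) (by linarith)
  have g1 := Real.Gamma_pos_of_pos hx
  have h2 : 0 < x + h := by linarith
  have g2 := Real.Gamma_pos_of_pos h2
  simp only [Function.comp] at this
  rw [show x + 1 + h = x + h + 1 by ring, Real.Gamma_add_one h2.ne',
    Real.log_mul h2.ne' g2.ne', Real.Gamma_add_one hx.ne', Real.log_mul hx.ne' g1.ne'] at this
  rw [div_le_div_iff₀ (by linarith) (by linarith)] at this
  rw [← Real.log_le_log_iff (by positivity) (by positivity), Real.log_div g2.ne' g1.ne',
    Real.log_mul (by positivity) (by positivity), Real.log_rpow hx, Real.log_div hx.ne' h2.ne']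
  linarith


/-! ### Comparable positive families -/

/-- Two pointwise positive families are comparable if each is bounded by a constant multiple of
the other. Positivity is part of the definition so that comparability passes to inverses, maxima
and real powers. -/
def Comparable {β : Type*} (f g : β → ℝ) : Prop :=
  (∀ b, 0 < f b) ∧ (∀ b, 0 < g b) ∧ ∃ C, 0 < C ∧ ∀ b, f b ≤ C * g b ∧ g b ≤ C * f b

namespace Comparable

variable {β : Type*} {f g f' g' k : β → ℝ}

lemma of_bounds (C D : ℝ) (hf : ∀ b, 0 < f b) (hg : ∀ b, 0 < g b)
    (h1 : ∀ b, f b ≤ C * g b) (h2 : ∀ b, g b ≤ D * f b) : Comparable f g := by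
  refine ⟨hf, hg, max (max C D) 1, by positivity, fun b => ⟨(h1 b).trans ?_, (h2 b).trans ?_⟩⟩
  · exact mul_le_mul_of_nonneg_right (by simp) (hg b).le
  · exact mul_le_mul_of_nonneg_right (by simp) (hf b).le

lemma symm (h : Comparable f g) : Comparable g f :=
  ⟨h.2.1, h.1, h.2.2.imp fun _ hC => ⟨hC.1, fun b => (hC.2 b).symm⟩⟩

lemma refl (hf : ∀ b, 0 < f b) : Comparable f f :=
  of_bounds 1 1 hf hf (fun b => by simp) (fun b => by simp)

lemma trans (h : Comparable f g) (h' : Comparable g k) : Comparable f k := by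
  obtain ⟨hf, hg, C, hC, hb⟩ := h
  obtain ⟨_, hk, D, hD, hb'⟩ := h'
  refine of_bounds (C * D) (D * C) hf hk (fun b => ?_) (fun b => ?_)
  · calc f b ≤ C * g b := (hb b).1
      _ ≤ C * (D * k b) := by gcongr; exact (hb' b).1
      _ = _ := by ring
  · calc k b ≤ D * g b := (hb' b).2
      _ ≤ D * (C * f b) := by gcongr; exact (hb b).2
      _ = _ := by ring

lemma mul (h : Comparable f g) (h' : Comparable f' g') :
    Comparable (fun b => f b * f' b) (fun b => g b * g' b) := by
  obtain ⟨hf, hg, C, hC, hb⟩ := h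
  obtain ⟨hf', hg', D, hD, hb'⟩ := h'
  refine of_bounds (C * D) (C * D) (fun b => mul_pos (hf b) (hf' b))
    (fun b => mul_pos (hg b) (hg' b)) (fun b => ?_) (fun b => ?_)
  · rw [mul_mul_mul_comm]
    exact mul_le_mul (hb b).1 (hb' b).1 (hf' b).le (mul_pos hC (hg b)).le
  · rw [mul_mul_mul_comm]
    exact mul_le_mul (hb b).2 (hb' b).2 (hg' b).le (mul_pos hC (hf b)).le

lemma inv (h : Comparable f g) : Comparable (fun b => (f b)⁻¹) (fun b => (g b)⁻¹) := by
  obtain ⟨hf, hg, C, hC, hb⟩ := h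
  refine of_bounds C C (fun b => inv_pos.2 (hf b)) (fun b => inv_pos.2 (hg b))
    (fun b => ?_) (fun b => ?_)
  · have := hf b; have := hg b
    rw [← div_eq_mul_inv, inv_le_comm₀ (by positivity) (by positivity), inv_div,
      div_le_iff₀ hC, mul_comm]
    exact (hb b).2
  · have := hf b; have := hg b
    rw [← div_eq_mul_inv, inv_le_comm₀ (by positivity) (by positivity), inv_div,
      div_le_iff₀ hC, mul_comm]
    exact (hb b).1

lemma div (h : Comparable f g) (h' : Comparable f' g') :
    Comparable (fun b => f b / f' b) (fun b => g b / g' b) := by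
  simp only [div_eq_mul_inv]
  exact h.mul h'.inv

lemma add (h : Comparable f g) (h' : Comparable f' g') :
    Comparable (fun b => f b + f' b) (fun b => g b + g' b) := by
  obtain ⟨hf, hg, C, hC, hb⟩ := h
  obtain ⟨hf', hg', D, hD, hb'⟩ := h'
  refine of_bounds (C + D) (C + D) (fun b => add_pos (hf b) (hf' b))
    (fun b => add_pos (hg b) (hg' b)) (fun b => ?_) (fun b => ?_)
  · have := mul_pos hC (hg' b); have := mul_pos hD (hg b)
    linarith [(hb b).1, (hb' b).1]
  · have := mul_pos hC (hf' b); have := mul_pos hD (hf b)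
    linarith [(hb b).2, (hb' b).2]

lemma const_mul (h : Comparable f g) {c : ℝ} (hc : 0 < c) :
    Comparable (fun b => c * f b) g := by
  refine trans ?_ h
  refine of_bounds c c⁻¹ (fun b => mul_pos hc (h.1 b)) h.1 (fun b => le_rfl) (fun b => ?_)
  rw [inv_mul_cancel_left₀ hc.ne']

lemma rpow_nonneg (h : Comparable f g) {r : ℝ} (hr : 0 ≤ r) :
    Comparable (fun b => f b ^ r) (fun b => g b ^ r) := by
  obtain ⟨hf, hg, C, hC, hb⟩ := h
  refine of_bounds (C ^ r) (C ^ r) (fun b => Real.rpow_pos_of_pos (hf b) r)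
    (fun b => Real.rpow_pos_of_pos (hg b) r) (fun b => ?_) (fun b => ?_)
  · rw [← Real.mul_rpow hC.le (hg b).le]
    exact Real.rpow_le_rpow (hf b).le (hb b).1 hr
  · rw [← Real.mul_rpow hC.le (hf b).le]
    exact Real.rpow_le_rpow (hg b).le (hb b).2 hr

lemma add_max (hf : ∀ b, 0 < f b) (hg : ∀ b, 0 < g b) :
    Comparable (fun b => f b + g b) (fun b => max (f b) (g b)) := by
  refine of_bounds 2 1 (fun b => add_pos (hf b) (hg b)) (fun b => lt_max_of_lt_left (hf b))
    (fun b => ?_) (fun b => ?_)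
  · linarith [le_max_left (f b) (g b), le_max_right (f b) (g b)]
  · have := hf b; have := hg b
    rw [one_mul, max_le_iff]; constructor <;> linarith

lemma max_left (h : Comparable f g) (hk : ∀ b, 0 < k b) :
    Comparable (fun b => max (f b) (k b)) (fun b => max (g b) (k b)) :=
  ((add_max h.1 hk).symm.trans (h.add (refl hk))).trans (add_max h.2.1 hk)

lemma summable_rpow_iff (h : Comparable f g) {q : ℝ} (hq : 0 ≤ q) :
    Summable (fun b => f b ^ q) ↔ Summable (fun b => g b ^ q) := by
  obtain ⟨hf, hg, C, hC, hb⟩ := h.rpow_nonneg hq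
  constructor <;> intro hs
  · exact Summable.of_nonneg_of_le (fun b => (hg b).le) (fun b => (hb b).2) (hs.mul_left C)
  · exact Summable.of_nonneg_of_le (fun b => (hf b).le) (fun b => (hb b).1) (hs.mul_left C)

end Comparable

/-! ### The dependence of the norm on the distinguished coordinate -/

/-- `Γ(y + h) / Γ(y) ≍ y ^ h`, uniformly for `y` bounded away from `0`. -/
lemma comparable_gamma_ratio {β : Type*} {h y₀ : ℝ} (hh : 0 < h) (hy₀ : 0 < y₀) {y : β → ℝ}
    (hy : ∀ b, y₀ ≤ y b) :
    Comparable (fun b => Real.Gamma (y b + h) / Real.Gamma (y b)) (fun b => y b ^ h) := by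
  have hy' : ∀ b, 0 < y b := fun b => hy₀.trans_le (hy b)
  have hle : ∀ b, y b + h ≤ (1 + h / y₀) * y b := fun b => by
    have : h ≤ h / y₀ * y b := by
      rw [div_mul_eq_mul_div, le_div_iff₀ hy₀]
      exact mul_le_mul_of_nonneg_left (hy b) hh.le
    linarith
  refine Comparable.of_bounds ((1 + h / y₀) ^ h) (1 + h / y₀)
    (fun b => div_pos (Real.Gamma_pos_of_pos (by linarith [hy' b])) (Real.Gamma_pos_of_pos (hy' b)))
    (fun b => Real.rpow_pos_of_pos (hy' b) h) (fun b => ?_) (fun b => ?_)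
  · refine (gamma_ratio_upper hh (hy' b)).trans ?_
    rw [← Real.mul_rpow (by positivity) (hy' b).le]
    exact Real.rpow_le_rpow (by linarith [hy' b]) (hle b) hh.le
  · have h1 := gamma_ratio_lower hh (hy' b)
    have h2 : 0 < y b + h := by linarith [hy' b]
    have h3 := hy' b
    have h4 : y b ^ h ≤ (1 + h / y₀) * (y b ^ h * (y b / (y b + h))) := by
      have : 1 ≤ (1 + h / y₀) * (y b / (y b + h)) := by
        rw [← mul_div_assoc, le_div_iff₀ h2, one_mul]; exact hle b
      have := mul_le_mul_of_nonneg_left this (Real.rpow_nonneg h3.le h)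
      linarith
    exact h4.trans (mul_le_mul_of_nonneg_left h1 (by positivity))

/-- The factor of `ω₂` that depends on the distinguished coordinate `α_{11}`, through
`x = (α_{11} + 1) / p_{11}`. Here `S` collects the other coordinates of the first block, and
`T - 1` those of the remaining blocks. -/
noncomputable def gammaQuot (a S T x : ℝ) : ℝ :=
  Real.Gamma x / Real.Gamma (x + S) * (Real.Gamma ((x + S) / a) / Real.Gamma ((x + S) / a + T))

/-- The size of the second difference of `log ∘ gammaQuot a S T` at `x`: with `u = x + S` and
`v = u + a * T`, it is `(1 / x - 1 / u) + (1 / u - 1 / v) / a`. -/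
noncomputable def decay (a x S T : ℝ) : ℝ :=
  S / (x * (x + S)) + T / ((x + S) * (x + S + a * T))

lemma gammaQuot_pos {a S T x : ℝ} (ha : 0 < a) (hx : 0 < x) (hS : 0 ≤ S) (hT : 0 ≤ T) :
    0 < gammaQuot a S T x := by
  have h1 : 0 < x + S := by linarith
  have h2 : 0 < (x + S) / a := by positivity
  have h3 : 0 < (x + S) / a + T := by linarith
  have := Real.Gamma_pos_of_pos hx
  have := Real.Gamma_pos_of_pos h1
  have := Real.Gamma_pos_of_pos h2
  have := Real.Gamma_pos_of_pos h3
  unfold gammaQuot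
  positivity

lemma log_gammaQuot {a S T x : ℝ} (ha : 0 < a) (hx : 0 < x) (hS : 0 ≤ S) (hT : 0 ≤ T) :
    Real.log (gammaQuot a S T x) = Real.log (Real.Gamma x) - Real.log (Real.Gamma (x + S)) +
      (Real.log (Real.Gamma ((x + S) / a)) - Real.log (Real.Gamma ((x + S) / a + T))) := by
  have h1 : 0 < x + S := by linarith
  have h2 : 0 < (x + S) / a := by positivity
  have h3 : 0 < (x + S) / a + T := by linarith
  have := (Real.Gamma_pos_of_pos hx).ne'
  have := (Real.Gamma_pos_of_pos h1).ne'
  have := (Real.Gamma_pos_of_pos h2).ne'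
  have := (Real.Gamma_pos_of_pos h3).ne'
  unfold gammaQuot
  rw [Real.log_mul (by positivity) (by positivity), Real.log_div (by assumption) (by assumption),
    Real.log_div (by assumption) (by assumption)]

/-- Consecutive quotients of `gammaQuot` differ by a factor `exp (-Δ)`, where `Δ`, the second
difference of its logarithm, is comparable to `decay`. The two Gamma quotients contribute with
the same sign, so no cancellation occurs. -/
lemma exists_second_difference {a h : ℝ} (ha : 0 < a) (hh : 0 < h) :
    ∃ c C : ℝ, 0 < c ∧ 0 < C ∧ ∀ x S T : ℝ, 2 * h ≤ x → 0 ≤ S → 0 ≤ T →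
      ∃ Δ : ℝ, c * decay a x S T ≤ Δ ∧ Δ ≤ C * decay a x S T ∧
        gammaQuot a S T x / gammaQuot a S T (x - h) =
          gammaQuot a S T (x + h) / gammaQuot a S T x * Real.exp (-Δ) := by
  refine ⟨h ^ 2, max (cUp h) (cUp (h / a) * a ^ 2) + 1, by positivity, ?_, ?_⟩
  · have : 0 ≤ cUp h := by unfold cUp; positivity
    have := le_max_left (cUp h) (cUp (h / a) * a ^ 2)
    linarith
  intro x S T hx hS hT
  have hu : 0 < x + S := by linarith
  have hua : (x + S + h) / a = (x + S) / a + h / a := by ring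
  have hua' : (x + S - h) / a = (x + S) / a - h / a := by ring
  obtain ⟨l1, u1⟩ := gammaDiff_bounds hh hx hS
  obtain ⟨l2, u2⟩ := gammaDiff_bounds (h := h / a) (x := (x + S) / a) (S := T) (by positivity)
    (by rw [← mul_div_assoc]; gcongr; linarith) hT
  have hv : 0 < x + S + a * T := by positivity
  have e : T / ((x + S) / a * ((x + S) / a + T)) = a ^ 2 * (T / ((x + S) * (x + S + a * T))) := by
    field_simp
  rw [e] at l2 u2
  have hA : 0 ≤ S / (x * (x + S)) := div_nonneg hS (by nlinarith)
  have hB : 0 ≤ T / ((x + S) * (x + S + a * T)) := by positivity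
  refine ⟨(gammaDiff h x - gammaDiff h (x + S)) +
    (gammaDiff (h / a) ((x + S) / a) - gammaDiff (h / a) ((x + S) / a + T)), ?_, ?_, ?_⟩
  · have : (h / a) ^ 2 * (a ^ 2 * (T / ((x + S) * (x + S + a * T)))) =
        h ^ 2 * (T / ((x + S) * (x + S + a * T))) := by field_simp
    unfold decay
    linarith
  · have h1 := mul_le_mul_of_nonneg_right (le_max_left (cUp h) (cUp (h / a) * a ^ 2)) hA
    have h2 := mul_le_mul_of_nonneg_right (le_max_right (cUp h) (cUp (h / a) * a ^ 2)) hB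
    unfold decay
    linarith
  · have p1 := gammaQuot_pos (T := T) ha (by linarith : 0 < x) hS hT
    have p2 := gammaQuot_pos (T := T) ha (by linarith : 0 < x + h) hS hT
    have p3 := gammaQuot_pos (T := T) ha (by linarith : 0 < x - h) hS hT
    rw [← Real.log_injOn_pos.eq_iff (Set.mem_Ioi.2 (by positivity)) (Set.mem_Ioi.2 (by positivity)),
      Real.log_mul (by positivity) (by positivity), Real.log_exp, Real.log_div p1.ne' p3.ne',
      Real.log_div p2.ne' p1.ne', log_gammaQuot ha (by linarith) hS hT,
      log_gammaQuot ha (by linarith) hS hT, log_gammaQuot ha (by linarith) hS hT]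
    simp only [gammaDiff]
    rw [show x + h + S = x + S + h by ring, show x - h + S = x + S - h by ring, hua, hua',
      show (x + S) / a + h / a + T = (x + S) / a + T + h / a by ring,
      show (x + S) / a - h / a + T = (x + S) / a + T - h / a by ring]
    ring

/-- The eigenvalue `λ(α)` with the opposite sign, written with `gammaQuot`: the difference of two
consecutive quotients, of which only the first is present when `n = α_{11} = 0`. -/
noncomputable def jump (a h : ℝ) (n : ℕ) (S T : ℝ) : ℝ :=
  if n = 0 then gammaQuot a S T (2 * h) / gammaQuot a S T h
  else gammaQuot a S T ((n + 2) * h) / gammaQuot a S T ((n + 1) * h)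
    - gammaQuot a S T ((n + 1) * h) / gammaQuot a S T (n * h)

/-- The function comparable to `|λ(α)|` when `X = α_{11} + 1` and `s`, `T` are `1` plus the linear
forms in the two groups of remaining coordinates; `h = 1 / p_{11}` and
`r = 1 / (a_1 p_{11})`. Sums of positive quantities are replaced by maxima. -/
noncomputable def model (h r X s T : ℝ) : ℝ :=
  (X / max X s) ^ h * (max X s / max (max X s) T) ^ r *
    (s / (X * max X s) + T / (max X s * max (max X s) T))

/-- Elementary bounds for `decay`. The upper bound `1 / h + 1 / (a * h)` allows `1 - exp (-Δ)` to
be replaced by `Δ`, the third bound allows `S` to be replaced by `S + 1`, and the last one,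
at `x = h`, covers `n = 0`, where the second quotient is missing. -/
lemma decay_bounds {a h x S T : ℝ} (ha : 0 < a) (hh : 0 < h) (hx : h ≤ x) (hS : 0 ≤ S)
    (hT : 1 ≤ T) :
    0 < decay a x S T ∧ decay a x S T ≤ 1 / h + 1 / (a * h) ∧
      1 / (x * (x + S)) ≤ (1 + 1 / h + a / h) * decay a x S T ∧
      (x = h → 1 ≤ (2 * h + 2 * h * (2 * h + a)) * decay a x S T) := by
  have hx0 : 0 < x := by linarith
  have hu : 0 < x + S := by linarith
  have hv : 0 < x + S + a * T := by positivity
  have hA : 0 ≤ S / (x * (x + S)) := by positivity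
  have hB : 0 < T / ((x + S) * (x + S + a * T)) := by positivity
  unfold decay
  refine ⟨by linarith, add_le_add ?_ ?_, ?_, ?_⟩
  · rw [div_le_div_iff₀ (by positivity) hh]
    nlinarith
  · rw [div_le_div_iff₀ (by positivity) (by positivity)]
    have : a * T * h ≤ (x + S + a * T) * (x + S) := by
      apply mul_le_mul <;> nlinarith
    linarith
  · rcases le_total 1 S with h1 | h1
    · have h2 : 1 / (x * (x + S)) ≤ S / (x * (x + S)) := by gcongr
      have h3 : 0 ≤ (1 / h + a / h) * (S / (x * (x + S)) + T / ((x + S) * (x + S + a * T))) := by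
        positivity
      linarith
    · have h2 : 1 / (x * (x + S)) ≤ (1 + 1 / h + a / h) * (T / ((x + S) * (x + S + a * T))) := by
        rw [← mul_div_assoc, div_le_div_iff₀ (by positivity) (by positivity)]
        have e1 : 1 ≤ x / h := by rw [le_div_iff₀ hh]; linarith
        have e2 : x + S + a * T ≤ (1 + 1 / h + a / h) * T * x := by
          have : (1 + 1 / h + a / h) * T * x = T * x + T * (x / h) + a * T * (x / h) := by ring
          rw [this]
          have i1 : x ≤ T * x := by nlinarith
          have i2 : 1 ≤ T * (x / h) := by nlinarith
          have i3 : a * T ≤ a * T * (x / h) := le_mul_of_one_le_right (by positivity) e1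
          linarith
        have := mul_le_mul_of_nonneg_left e2 hu.le
        linarith
      have h3 : 0 ≤ (1 + 1 / h + a / h) * (S / (x * (x + S))) := by positivity
      linarith
  · rintro rfl
    rcases le_total x S with h1 | h1
    · have h2 : 1 ≤ 2 * x * (S / (x * (x + S))) := by
        rw [← mul_div_assoc, le_div_iff₀ (by positivity)]
        nlinarith
      have h3 : 0 ≤ (2 * x * (2 * x + a)) * (S / (x * (x + S)) + T / ((x + S) * (x + S + a * T))) := by
        positivity
      have h4 : 0 ≤ 2 * x * (T / ((x + S) * (x + S + a * T))) := by positivity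
      linarith
    · have h2 : 1 ≤ (2 * x * (2 * x + a)) * (T / ((x + S) * (x + S + a * T))) := by
        rw [← mul_div_assoc, le_div_iff₀ (by positivity), one_mul]
        have e2 : x + S + a * T ≤ (2 * x + a) * T := by nlinarith
        have : (x + S) * (x + S + a * T) ≤ (2 * x) * ((2 * x + a) * T) := by
          apply mul_le_mul <;> linarith
        linarith
      have h3 : 0 ≤ 2 * x * (S / (x * (x + S)) + T / ((x + S) * (x + S + a * T))) := by
        positivity
      have h4 : 0 ≤ (2 * x * (2 * x + a)) * (S / (x * (x + S))) := by positivity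
      linarith

/-- `jump` is a quotient of consecutive norms times `1 - exp (-Δ)`, respectively times `1` for
`n = 0`; that last factor is comparable to `decay`. -/
lemma jump_comparable {β : Type*} {a h : ℝ} (ha : 0 < a) (hh : 0 < h) (n : β → ℕ) (S T : β → ℝ)
    (hS : ∀ b, 0 ≤ S b) (hT : ∀ b, 1 ≤ T b) :
    Comparable (fun b => jump a h (n b) (S b) (T b))
      (fun b => gammaQuot a (S b) (T b) ((n b + 2) * h) / gammaQuot a (S b) (T b) ((n b + 1) * h)
        * decay a ((n b + 1) * h) (S b) (T b)) := by
  obtain ⟨c, C, hc, hC, H⟩ := exists_second_difference ha hh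
  set B := 1 / h + 1 / (a * h) with hBdef
  have hB : 0 < B := by positivity
  set L := 2 * h + 2 * h * (2 * h + a) with hLdef
  have hL : 0 < L := by positivity
  have key : ∀ b, ∃ E : ℝ, 0 < E ∧
      jump a h (n b) (S b) (T b) = gammaQuot a (S b) (T b) ((n b + 2) * h) /
        gammaQuot a (S b) (T b) ((n b + 1) * h) * E ∧
      E ≤ (C + L) * decay a ((n b + 1) * h) (S b) (T b) ∧
      decay a ((n b + 1) * h) (S b) (T b) ≤ (B + (1 + c * B) / c) * E := by
    intro b
    have hn : (0 : ℝ) ≤ n b := (n b).cast_nonneg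
    have hT0 : 0 ≤ T b := zero_le_one.trans (hT b)
    obtain ⟨d1, d2, -, d4⟩ := decay_bounds (x := (n b + 1) * h) ha hh (by nlinarith) (hS b) (hT b)
    by_cases h0 : n b = 0
    · refine ⟨1, one_pos, ?_, ?_, ?_⟩
      · simp [jump, h0]
      · have := d4 (by simp [h0])
        nlinarith
      · have : 0 ≤ (1 + c * B) / c := by positivity
        linarith
    · have hn1 : (1 : ℝ) ≤ n b := by exact_mod_cast Nat.one_le_iff_ne_zero.2 h0
      obtain ⟨Δ, l, u, e⟩ := H ((n b + 1) * h) (S b) (T b) (by nlinarith) (hS b) hT0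
      rw [show (n b + 1) * h - h = n b * h by ring, show (n b + 1) * h + h = (n b + 2) * h by ring] at e
      set W := decay a ((n b + 1) * h) (S b) (T b) with hW
      have hΔ : 0 < Δ := lt_of_lt_of_le (by positivity) l
      -- `1 - exp (-Δ) ≥ 1 - 1 / (1 + c * W)`, and `W` is bounded above by `B`.
      have hlow : W ≤ (1 + c * B) / c * (1 - Real.exp (-Δ)) := by
        have e1 : Real.exp (-Δ) ≤ (1 + c * W)⁻¹ := by
          rw [Real.exp_neg]
          gcongr
          linarith [Real.add_one_le_exp Δ]
        have e2 : c * W / (1 + c * B) ≤ 1 - (1 + c * W)⁻¹ := by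
          have : 1 - (1 + c * W)⁻¹ = c * W / (1 + c * W) := by field_simp; ring
          rw [this]
          gcongr
        have e3 : W = (1 + c * B) / c * (c * W / (1 + c * B)) := by field_simp
        calc W = _ := e3
          _ ≤ _ := by gcongr; linarith
      refine ⟨1 - Real.exp (-Δ), ?_, ?_, ?_, ?_⟩
      · linarith [Real.exp_lt_one_iff.2 (neg_lt_zero.2 hΔ)]
      · rw [jump, if_neg h0, e]; ring
      · have := mul_pos hL d1
        linarith [Real.one_sub_le_exp_neg Δ]
      · have : 0 ≤ B * (1 - Real.exp (-Δ)) :=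
          mul_nonneg hB.le (by linarith [Real.exp_lt_one_iff.2 (neg_lt_zero.2 hΔ)])
        linarith
  choose E hE1 hE2 hE3 hE4 using key
  have hR : ∀ b, 0 < gammaQuot a (S b) (T b) ((n b + 2) * h) /
        gammaQuot a (S b) (T b) ((n b + 1) * h) := fun b =>
    div_pos (gammaQuot_pos ha (by positivity) (hS b) (zero_le_one.trans (hT b)))
      (gammaQuot_pos ha (by positivity) (hS b) (zero_le_one.trans (hT b)))
  simp only [hE2]
  refine (Comparable.refl hR).mul (Comparable.of_bounds _ _ hE1 (fun b => ?_) hE3 hE4)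
  exact (decay_bounds ha hh (by nlinarith [(n b).cast_nonneg (α := ℝ)]) (hS b) (hT b)).1

lemma gamma_ratio_comparable {β : Type*} {a h : ℝ} (ha : 0 < a) (hh : 0 < h) (n : β → ℕ)
    (S T : β → ℝ) (hS : ∀ b, 0 ≤ S b) (hT : ∀ b, 1 ≤ T b) :
    Comparable (fun b => gammaQuot a (S b) (T b) ((n b + 2) * h) /
        gammaQuot a (S b) (T b) ((n b + 1) * h))
      (fun b => ((n b + 1) * h) ^ h / ((n b + 1) * h + S b) ^ h *
        ((((n b + 1) * h + S b) / a) ^ (h / a) / (((n b + 1) * h + S b) / a + T b) ^ (h / a))) := by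
  have hx : ∀ b, h ≤ (n b + 1) * h := fun b => by nlinarith [(n b).cast_nonneg (α := ℝ)]
  have hu : ∀ b, h ≤ (n b + 1) * h + S b := fun b => by linarith [hx b, hS b]
  have hu' : ∀ b, h / a ≤ ((n b + 1) * h + S b) / a := fun b => by gcongr; exact hu b
  have hv : ∀ b, h / a ≤ ((n b + 1) * h + S b) / a + T b := fun b => by linarith [hu' b, hT b]
  have hha : 0 < h / a := by positivity
  have c1 := comparable_gamma_ratio hh hh hx
  have c2 := comparable_gamma_ratio hh hh hu
  have c3 := comparable_gamma_ratio hha hha hu'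
  have c4 := comparable_gamma_ratio hha hha hv
  convert (c1.div c2).mul (c3.div c4) using 2 with b
  simp only [gammaQuot]
  rw [show (n b + 2) * h + S b = (n b + 1) * h + S b + h by ring,
    show (n b + 2) * h = (n b + 1) * h + h by ring,
    show ((n b + 1) * h + S b + h) / a = ((n b + 1) * h + S b) / a + h / a by ring,
    show ((n b + 1) * h + S b) / a + h / a + T b = ((n b + 1) * h + S b) / a + T b + h / a by ring]
  have p1 := (Real.Gamma_pos_of_pos (hh.trans_le (hx b))).ne'
  have p2 := (Real.Gamma_pos_of_pos (hh.trans_le (hu b))).ne'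
  have p3 := (Real.Gamma_pos_of_pos (hha.trans_le (hu' b))).ne'
  have p4 := (Real.Gamma_pos_of_pos (hha.trans_le (hv b))).ne'
  have p5 := (Real.Gamma_pos_of_pos (add_pos (hh.trans_le (hx b)) hh)).ne'
  have p6 := (Real.Gamma_pos_of_pos (add_pos (hh.trans_le (hu b)) hh)).ne'
  have p7 := (Real.Gamma_pos_of_pos (add_pos (hha.trans_le (hu' b)) hha)).ne'
  have p8 := (Real.Gamma_pos_of_pos (add_pos (hha.trans_le (hv b)) hha)).ne'
  field_simp

lemma jump_comparable_model {β : Type*} {a h : ℝ} (ha : 0 < a) (hh : 0 < h) (n : β → ℕ)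
    (S T : β → ℝ) (hS : ∀ b, 0 ≤ S b) (hT : ∀ b, 1 ≤ T b) :
    Comparable (fun b => jump a h (n b) (S b) (T b))
      (fun b => model h (h / a) (n b + 1) (S b + 1) (T b)) := by
  have hX : ∀ b, (0 : ℝ) < n b + 1 := fun b => by positivity
  have hs : ∀ b, 0 < S b + 1 := fun b => by linarith [hS b]
  have hT0 : ∀ b, 0 < T b := fun b => by linarith [hT b]
  have hM : ∀ b, 0 < max ((n b : ℝ) + 1) (S b + 1) := fun b => lt_max_of_lt_left (hX b)
  have cx : Comparable (fun b => (n b + 1 : ℝ) * h) (fun b => (n b + 1 : ℝ)) := by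
    simpa only [mul_comm] using (Comparable.refl hX).const_mul hh
  have hx : ∀ b, h ≤ (n b + 1) * h := fun b => by nlinarith [(n b).cast_nonneg (α := ℝ)]
  have hu : ∀ b, 0 < (n b + 1) * h + S b := fun b => by linarith [hx b, hS b]
  have cu : Comparable (fun b => (n b + 1 : ℝ) * h + S b)
      (fun b => max ((n b : ℝ) + 1) (S b + 1)) := by
    refine Comparable.trans ?_ (Comparable.add_max hX hs)
    refine Comparable.of_bounds (h + 1) (2 / h + 1) hu
      (fun b => add_pos (hX b) (hs b)) (fun b => ?_) (fun b => ?_)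
    · have := mul_nonneg hh.le (hs b).le
      linarith [hX b]
    · have e : (2 / h + 1) * ((n b + 1) * h + S b) =
        2 * (n b + 1) + 2 / h * S b + ((n b + 1) * h + S b) := by field_simp
      have : 0 ≤ 2 / h * S b := mul_nonneg (by positivity) (hS b)
      rw [e]
      linarith [mul_pos (hX b) hh, (n b).cast_nonneg (α := ℝ)]
  have caT : Comparable (fun b => a * T b) T := (Comparable.refl hT0).const_mul ha
  have cv : Comparable (fun b => (n b + 1 : ℝ) * h + S b + a * T b)
      (fun b => max (max ((n b : ℝ) + 1) (S b + 1)) (T b)) :=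
    (cu.add caT).trans (Comparable.add_max hM hT0)
  have cua : Comparable (fun b => ((n b + 1 : ℝ) * h + S b) / a)
      (fun b => max ((n b : ℝ) + 1) (S b + 1)) := by
    simpa only [div_eq_inv_mul] using cu.const_mul (inv_pos.2 ha)
  have cva : Comparable (fun b => ((n b + 1 : ℝ) * h + S b) / a + T b)
      (fun b => max (max ((n b : ℝ) + 1) (S b + 1)) (T b)) :=
    (cua.add (Comparable.refl hT0)).trans (Comparable.add_max hM hT0)
  have hha : 0 ≤ h / a := by positivity
  have cR := (gamma_ratio_comparable ha hh n S T hS hT).trans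
    (((cx.rpow_nonneg hh.le).div (cu.rpow_nonneg hh.le)).mul
      ((cua.rpow_nonneg hha).div (cva.rpow_nonneg hha)))
  have hd := fun b => decay_bounds ha hh (hx b) (hS b) (hT b)
  -- Replacing `S` by `S + 1` only adds the term `1 / (x * (x + S))`.
  have cD : Comparable (fun b => decay a ((n b + 1) * h) (S b) (T b))
      (fun b => (S b + 1) / (((n b + 1) * h) * ((n b + 1) * h + S b)) +
        T b / (((n b + 1) * h + S b) * ((n b + 1) * h + S b + a * T b))) := by
    have hp : ∀ b, 0 < 1 / (((n b + 1) * h) * ((n b + 1) * h + S b)) := fun b =>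
      one_div_pos.2 (mul_pos (mul_pos (hX b) hh) (hu b))
    have hsplit : ∀ b, (S b + 1) / (((n b + 1) * h) * ((n b + 1) * h + S b)) +
        T b / (((n b + 1) * h + S b) * ((n b + 1) * h + S b + a * T b)) =
        decay a ((n b + 1) * h) (S b) (T b) + 1 / (((n b + 1) * h) * ((n b + 1) * h + S b)) := by
      intro b; unfold decay; ring
    simp only [hsplit]
    refine Comparable.of_bounds 1 (1 + (1 + 1 / h + a / h)) (fun b => (hd b).1)
      (fun b => add_pos (hd b).1 (hp b)) (fun b => ?_) (fun b => ?_)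
    · linarith [hp b]
    · linarith [(hd b).2.2.1]
  have cD' := cD.trans ((((Comparable.refl hs).div (cx.mul cu))).add
    ((Comparable.refl hT0).div (cu.mul cv)))
  refine (jump_comparable ha hh n S T hS hT).trans ((cR.mul cD').trans ?_)
  have hm : ∀ b, 0 < model h (h / a) (n b + 1) (S b + 1) (T b) := fun b => by
    have := hX b; have := hs b; have := hT0 b
    unfold model
    positivity
  convert Comparable.refl hm using 2 with b
  unfold model
  rw [Real.div_rpow (hX b).le (hM b).le, Real.div_rpow (hM b).le (le_max_of_le_left (hM b).le)]

/-! ### Piecewise linear bound for the model -/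

lemma Comparable.max {β : Type*} {f g f' g' : β → ℝ} (h : Comparable f g) (h' : Comparable f' g') :
    Comparable (fun b => max (f b) (f' b)) (fun b => max (g b) (g' b)) :=
  ((Comparable.add_max h.1 h'.1).symm.trans (h.add h')).trans (Comparable.add_max h.2.1 h'.2.1)

lemma Comparable.model {β : Type*} {h r : ℝ} (hh : 0 ≤ h) (hr : 0 ≤ r) {X s T X' s' T' : β → ℝ}
    (cX : Comparable X X') (cs : Comparable s s') (cT : Comparable T T') :
    Comparable (fun b => model h r (X b) (s b) (T b)) (fun b => model h r (X' b) (s' b) (T' b)) := by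
  have c1 := cX.max cs
  have c2 := c1.max cT
  exact (((cX.div c1).rpow_nonneg hh).mul ((c1.div c2).rpow_nonneg hr)).mul
    ((cs.div (cX.mul c1)).add (cT.div (c1.mul c2)))

/-- A linear bound for the logarithm of `model ^ q`. Subdivide the octant by the order of
`ξ, σ, τ`; each chamber is spanned by three of the `0`-`1` vectors and the exponent is a maximum
of two linear functions on it. The hypothesis `cijk` is the bound at the vector `(i, j, k)`; it is
required only where those of `σ, τ` with a nonzero entry in that vector are positive. -/
lemma exponent_le {h r q e f g ξ σ τ : ℝ} (hq : 0 ≤ q) (hξ : 0 ≤ ξ) (hσ : 0 ≤ σ) (hτ : 0 ≤ τ)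
    (c100 : e ≤ 2 * q) (c010 : 0 < σ → f ≤ h * q) (c001 : 0 < τ → g ≤ r * q)
    (c110 : 0 < σ → e + f ≤ q) (c101 : 0 < τ → e + g ≤ q)
    (c011 : 0 < σ → 0 < τ → f + g ≤ h * q) (c111 : 0 < σ → 0 < τ → e + f + g ≤ q) :
    (h * (ξ - max ξ σ) + r * (max ξ σ - max (max ξ σ) τ) +
      max (σ - ξ - max ξ σ) (τ - max ξ σ - max (max ξ σ) τ)) * q ≤
      -(e * ξ + f * σ + g * τ) := by
  -- `Pijk` is `cijk` multiplied by the coefficient `t` of the vector `(i, j, k)`, which vanishes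
  -- where `cijk` is not available.
  have P100 : ∀ t, 0 ≤ t → 0 ≤ t * (2 * q - e) := fun t ht => mul_nonneg ht (by linarith)
  have P1 : ∀ {A : ℝ} {ρ : ℝ}, (0 < ρ → 0 ≤ A) → ∀ t, 0 ≤ t → t ≤ ρ → 0 ≤ t * A := by
    intro A ρ hA t ht htρ
    rcases ht.eq_or_lt with rfl | ht'
    · simp
    · exact mul_nonneg ht (hA (ht'.trans_le htρ))
  have P010 := P1 (A := h * q - f) (fun i => by linarith [c010 i])
  have P001 := P1 (A := r * q - g) (fun i => by linarith [c001 i])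
  have P110 := P1 (A := q - e - f) (fun i => by linarith [c110 i])
  have P101 := P1 (A := q - e - g) (fun i => by linarith [c101 i])
  have P011 := P1 (A := h * q - f - g) (ρ := min σ τ)
    (fun i => by linarith [c011 (lt_min_iff.1 i).1 (lt_min_iff.1 i).2])
  have P111 := P1 (A := q - e - f - g) (ρ := min σ τ)
    (fun i => by linarith [c111 (lt_min_iff.1 i).1 (lt_min_iff.1 i).2])
  have key : ∀ L, (L = σ - ξ - max ξ σ ∨ L = τ - max ξ σ - max (max ξ σ) τ) →
      (h * (ξ - max ξ σ) + r * (max ξ σ - max (max ξ σ) τ) + L) * q ≤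
        -(e * ξ + f * σ + g * τ) := by
    intro L hL
    rcases le_total ξ σ with h1 | h1
    · rw [max_eq_right h1] at hL ⊢
      rcases le_total σ τ with h2 | h2
      · rw [max_eq_right h2] at hL ⊢
        have a1 := P001 (τ - σ) (by linarith) (by linarith)
        have a2 := P011 (σ - ξ) (by linarith) (by rw [min_eq_left h2]; linarith)
        have a3 := P111 ξ hξ (by rw [min_eq_left h2]; linarith)
        have b1 := mul_nonneg hq (sub_nonneg.2 h1)
        have b2 := mul_nonneg hq (sub_nonneg.2 h2)
        have b3 := mul_nonneg hq hξ
        rcases hL with rfl | rfl <;> nlinarith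
      · rw [max_eq_left h2] at hL ⊢
        rcases le_total ξ τ with h3 | h3
        · have a1 := P010 (σ - τ) (by linarith) (by linarith)
          have a2 := P011 (τ - ξ) (by linarith) (by rw [min_eq_right h2]; linarith)
          have a3 := P111 ξ hξ (by rw [min_eq_right h2]; linarith)
          have b1 := mul_nonneg hq (sub_nonneg.2 h3)
          have b2 := mul_nonneg hq (sub_nonneg.2 h2)
          have b3 := mul_nonneg hq hξ
          rcases hL with rfl | rfl <;> nlinarith
        · have a1 := P010 (σ - ξ) (by linarith) (by linarith)
          have a2 := P110 (ξ - τ) (by linarith) (by linarith)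
          have a3 := P111 τ hτ (by rw [min_eq_right h2])
          have b1 := mul_nonneg hq (sub_nonneg.2 h3)
          have b2 := mul_nonneg hq (sub_nonneg.2 h1)
          have b3 := mul_nonneg hq hτ
          rcases hL with rfl | rfl <;> nlinarith
    · rw [max_eq_left h1] at hL ⊢
      rcases le_total ξ τ with h2 | h2
      · rw [max_eq_right h2] at hL ⊢
        have a1 := P001 (τ - ξ) (by linarith) (by linarith)
        have a2 := P101 (ξ - σ) (by linarith) (by linarith)
        have a3 := P111 σ hσ (by rw [min_eq_left (h1.trans h2)])
        have b1 := mul_nonneg hq (sub_nonneg.2 h1)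
        have b2 := mul_nonneg hq (sub_nonneg.2 h2)
        have b3 := mul_nonneg hq hσ
        rcases hL with rfl | rfl <;> nlinarith
      · rw [max_eq_left h2] at hL ⊢
        rcases le_total σ τ with h3 | h3
        · have a1 := P100 (ξ - τ) (by linarith)
          have a2 := P101 (τ - σ) (by linarith) (by linarith)
          have a3 := P111 σ hσ (by rw [min_eq_left h3])
          have b1 := mul_nonneg hq (sub_nonneg.2 h3)
          have b2 := mul_nonneg hq (sub_nonneg.2 h2)
          have b3 := mul_nonneg hq hσ
          rcases hL with rfl | rfl <;> nlinarith
        · have a1 := P100 (ξ - σ) (by linarith)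
          have a2 := P110 (σ - τ) (by linarith) (by linarith)
          have a3 := P111 τ hτ (by rw [min_eq_right h3])
          have b1 := mul_nonneg hq (sub_nonneg.2 h3)
          have b2 := mul_nonneg hq (sub_nonneg.2 h1)
          have b3 := mul_nonneg hq hτ
          rcases hL with rfl | rfl <;> nlinarith
  exact key _ (max_choice _ _)

lemma model_exp (h r ξ σ τ : ℝ) :
    model h r (Real.exp ξ) (Real.exp σ) (Real.exp τ) =
      Real.exp (h * (ξ - max ξ σ) + r * (max ξ σ - max (max ξ σ) τ)) *
        (Real.exp (σ - ξ - max ξ σ) + Real.exp (τ - max ξ σ - max (max ξ σ) τ)) := by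
  unfold model
  rw [← Real.exp_monotone.map_max, ← Real.exp_monotone.map_max, ← Real.exp_sub, ← Real.exp_sub,
    ← Real.exp_mul, ← Real.exp_mul, ← Real.exp_add, ← Real.exp_add, ← Real.exp_add,
    ← Real.exp_sub, ← Real.exp_sub]
  ring_nf

lemma model_rpow_le {h r q e f g X s T : ℝ} (hq : 0 ≤ q) (hX : 1 ≤ X) (hs : 1 ≤ s) (hT : 1 ≤ T)
    (c100 : e ≤ 2 * q) (c010 : 1 < s → f ≤ h * q) (c001 : 1 < T → g ≤ r * q)
    (c110 : 1 < s → e + f ≤ q) (c101 : 1 < T → e + g ≤ q)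
    (c011 : 1 < s → 1 < T → f + g ≤ h * q) (c111 : 1 < s → 1 < T → e + f + g ≤ q) :
    model h r X s T ^ q ≤ 2 ^ q * (X ^ (-e) * s ^ (-f) * T ^ (-g)) := by
  have hX0 : 0 < X := by linarith
  have hs0 : 0 < s := by linarith
  have hT0 : 0 < T := by linarith
  have ls : 0 < Real.log s → 1 < s := (Real.log_pos_iff hs0.le).1
  have lT : 0 < Real.log T → 1 < T := (Real.log_pos_iff hT0.le).1
  have key := exponent_le (h := h) (r := r) (q := q) (e := e) (f := f) (g := g) hq
    (Real.log_nonneg hX) (Real.log_nonneg hs) (Real.log_nonneg hT) c100 (fun i => c010 (ls i))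
    (fun i => c001 (lT i)) (fun i => c110 (ls i)) (fun i => c101 (lT i))
    (fun i j => c011 (ls i) (lT j)) (fun i j => c111 (ls i) (lT j))
  have e1 := model_exp h r (Real.log X) (Real.log s) (Real.log T)
  rw [Real.exp_log hX0, Real.exp_log hs0, Real.exp_log hT0] at e1
  have hm : model h r X s T ≤ 2 * Real.exp (h * (Real.log X - max (Real.log X) (Real.log s)) +
      r * (max (Real.log X) (Real.log s) - max (max (Real.log X) (Real.log s)) (Real.log T)) +
      max (Real.log s - Real.log X - max (Real.log X) (Real.log s))
        (Real.log T - max (Real.log X) (Real.log s) -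
          max (max (Real.log X) (Real.log s)) (Real.log T))) := by
    rw [e1, Real.exp_add _ (max (_ - _ - _) _), mul_left_comm]
    refine mul_le_mul_of_nonneg_left ?_ (Real.exp_nonneg _)
    have i1 := Real.exp_le_exp.2 (le_max_left
      (Real.log s - Real.log X - max (Real.log X) (Real.log s))
        (Real.log T - max (Real.log X) (Real.log s) -
          max (max (Real.log X) (Real.log s)) (Real.log T)))
    have i2 := Real.exp_le_exp.2 (le_max_right
      (Real.log s - Real.log X - max (Real.log X) (Real.log s))
        (Real.log T - max (Real.log X) (Real.log s) -
          max (max (Real.log X) (Real.log s)) (Real.log T)))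
    linarith
  have hm0 : 0 ≤ model h r X s T := by unfold model; positivity
  refine (Real.rpow_le_rpow hm0 hm hq).trans ?_
  rw [Real.mul_rpow (by norm_num) (Real.exp_nonneg _), ← Real.exp_mul,
    Real.rpow_def_of_pos hX0, Real.rpow_def_of_pos hs0, Real.rpow_def_of_pos hT0,
    ← Real.exp_add, ← Real.exp_add]
  refine mul_le_mul_of_nonneg_left (Real.exp_le_exp.2 (key.trans (le_of_eq ?_))) (by positivity)
  ring

/-! ### Lattice sums -/

lemma summable_prod_rpow {ι : Type*} [Fintype ι] [DecidableEq ι] {e : ℝ} (he : 1 < e) :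
    Summable (fun α : ι → ℕ => ∏ i, ((α i : ℝ) + 1) ^ (-e)) := by
  have hs : Summable (fun n : ℕ => ((n : ℝ) + 1) ^ (-e)) := by
    have := (summable_nat_add_iff 1).2 (Real.summable_nat_rpow.2 (by linarith : -e < -1))
    simpa using this
  have h0 : ∀ n : ℕ, 0 ≤ ((n : ℝ) + 1) ^ (-e) := fun n => by positivity
  refine summable_of_sum_le (c := ∏ _i : ι, ∑' n : ℕ, ((n : ℝ) + 1) ^ (-e))
    (fun α => Finset.prod_nonneg fun i _ => h0 _) fun u => ?_
  have hsub : u ⊆ Fintype.piFinset (fun i => u.image fun α => α i) := fun α hα =>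
    Fintype.mem_piFinset.2 fun i => Finset.mem_image_of_mem _ hα
  refine (Finset.sum_le_sum_of_subset_of_nonneg hsub
    (fun α _ _ => Finset.prod_nonneg fun i _ => h0 _)).trans ?_
  rw [← Finset.prod_univ_sum (fun i => u.image fun α => α i) (fun _ (n : ℕ) => ((n : ℝ) + 1) ^ (-e))]
  exact Finset.prod_le_prod (fun i _ => Finset.sum_nonneg fun n _ => h0 n)
    (fun i _ => hs.sum_le_tsum _ fun n _ => h0 n)

/-- `1 + ∑ i ∈ J, w i * (α i + 1)`; the summand `1` makes it equal to `1`, rather than `0`, when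
`J` is empty. -/
noncomputable def linForm {ι : Type*} (w : ι → ℝ) (J : Finset ι) (α : ι → ℕ) : ℝ :=
  1 + ∑ i ∈ J, w i * (α i + 1)

lemma le_linForm {ι : Type*} {w : ι → ℝ} (hw : ∀ i, 0 < w i) {J : Finset ι} (α : ι → ℕ) {i : ι}
    (hi : i ∈ J) : w i * (α i + 1) ≤ linForm w J α := by
  have := Finset.single_le_sum (f := fun i => w i * (α i + 1 : ℝ))
    (fun j _ => mul_nonneg (hw j).le (by positivity)) hi
  unfold linForm; linarith

lemma one_le_linForm {ι : Type*} {w : ι → ℝ} (hw : ∀ i, 0 < w i) (J : Finset ι) (α : ι → ℕ) :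
    1 ≤ linForm w J α := by
  have := Finset.sum_nonneg (s := J) (f := fun i => w i * (α i + 1 : ℝ))
    (fun j _ => mul_nonneg (hw j).le (by positivity))
  unfold linForm; linarith

/-- A negative power of a positive linear form is bounded by a product of powers of the
coordinates, since the form dominates each of its terms. -/
lemma linForm_rpow_le {ι : Type*} {w : ι → ℝ} (hw : ∀ i, 0 < w i) (J : Finset ι) (α : ι → ℕ)
    {e : ℝ} (he : 0 ≤ e) :
    linForm w J α ^ (-(J.card * e)) ≤ (∏ i ∈ J, w i ^ (-e)) * ∏ i ∈ J, ((α i : ℝ) + 1) ^ (-e) := by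
  have h0 : 0 ≤ linForm w J α := zero_le_one.trans (one_le_linForm hw J α)
  rw [← mul_neg, mul_comm, Real.rpow_mul h0, Real.rpow_natCast, ← Finset.prod_const,
    ← Finset.prod_mul_distrib]
  refine Finset.prod_le_prod (fun i _ => by positivity) fun i hi => ?_
  rw [← Real.mul_rpow (hw i).le (by positivity)]
  exact Real.rpow_le_rpow_of_nonpos (mul_pos (hw i) (by positivity)) (le_linForm hw α hi)
    (by linarith)

section Lattice

variable {ι : Type*} [DecidableEq ι]

/-- Sufficiency. The conditions say that the exponent of `model ^ q` at each `0`-`1` vector is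
smaller than minus the number of coordinates growing in that direction. -/
lemma summable_model [Fintype ι] {x₀ : ι} {J₁ J₂ : Finset ι} {w : ι → ℝ} (hw : ∀ i, 0 < w i)
    (h1 : x₀ ∉ J₁ ∪ J₂) (h2 : Disjoint J₁ J₂) (h3 : insert x₀ (J₁ ∪ J₂) = Finset.univ)
    {h r q : ℝ} (hq : 0 ≤ q)
    (c100 : 1 < 2 * q) (c010 : J₁.Nonempty → J₁.card < h * q) (c001 : J₂.Nonempty → J₂.card < r * q)
    (c110 : J₁.Nonempty → 1 + J₁.card < q) (c101 : J₂.Nonempty → 1 + J₂.card < q)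
    (c011 : J₁.Nonempty → J₂.Nonempty → J₁.card + J₂.card < h * q)
    (c111 : J₁.Nonempty → J₂.Nonempty → 1 + J₁.card + J₂.card < q) :
    Summable (fun α : ι → ℕ => model h r (α x₀ + 1) (linForm w J₁ α) (linForm w J₂ α) ^ q) := by
  -- The finitely many strict inequalities survive a common factor `e > 1` close to `1`.
  have ev : ∀ A B : ℝ, A < B → ∀ᶠ e in 𝓝[>] (1 : ℝ), A * e ≤ B := by
    intro A B hAB
    have : Tendsto (fun e : ℝ => A * e) (𝓝[>] 1) (𝓝 (A * 1)) :=
      ((continuous_const.mul continuous_id).tendsto 1).mono_left nhdsWithin_le_nhds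
    rw [mul_one] at this
    exact (this.eventually_lt_const hAB).mono fun _ h => h.le
  obtain ⟨e, he, e100, e010, e001, e110, e101, e011, e111⟩ :=
    (eventually_mem_nhdsWithin.and ((ev _ _ c100).and
      ((eventually_imp_distrib_left.2 fun i => ev _ _ (c010 i)).and
      ((eventually_imp_distrib_left.2 fun i => ev _ _ (c001 i)).and
      ((eventually_imp_distrib_left.2 fun i => ev _ _ (c110 i)).and
      ((eventually_imp_distrib_left.2 fun i => ev _ _ (c101 i)).and
      ((eventually_imp_distrib_left.2 fun i => eventually_imp_distrib_left.2 fun j =>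
          ev _ _ (c011 i j)).and
       (eventually_imp_distrib_left.2 fun i => eventually_imp_distrib_left.2 fun j =>
          ev _ _ (c111 i j))))))))).exists
  have he1 : (1 : ℝ) < e := he
  have ne : ∀ (J : Finset ι) (α : ι → ℕ), 1 < linForm w J α → J.Nonempty := by
    intro J α hJ
    by_contra hne
    rw [Finset.not_nonempty_iff_eq_empty] at hne
    simp [hne, linForm] at hJ
  refine Summable.of_nonneg_of_le (fun α => ?_) (fun α => ?_)
    ((summable_prod_rpow he1).mul_left
      (2 ^ q * ((∏ i ∈ J₁, w i ^ (-e)) * ∏ i ∈ J₂, w i ^ (-e))))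
  · have i1 := one_le_linForm hw J₁ α
    have i2 := one_le_linForm hw J₂ α
    have : 0 ≤ model h r (α x₀ + 1) (linForm w J₁ α) (linForm w J₂ α) := by
      unfold model; positivity
    positivity
  · have i1 := one_le_linForm hw J₁ α
    have i2 := one_le_linForm hw J₂ α
    refine (model_rpow_le (e := e) (f := J₁.card * e) (g := J₂.card * e) hq (by simp) i1 i2
      (by linarith) (fun i => e010 (ne _ _ i)) (fun i => e001 (ne _ _ i))
      (fun i => by linarith [e110 (ne _ _ i)]) (fun i => by linarith [e101 (ne _ _ i)])
      (fun i j => by linarith [e011 (ne _ _ i) (ne _ _ j)])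
      (fun i j => by linarith [e111 (ne _ _ i) (ne _ _ j)])).trans ?_
    have l1 := linForm_rpow_le hw J₁ α (e := e) (by linarith)
    have l2 := linForm_rpow_le hw J₂ α (e := e) (by linarith)
    rw [← h3, Finset.prod_insert h1, Finset.prod_union h2, mul_assoc (2 ^ q)]
    refine mul_le_mul_of_nonneg_left ?_ (by positivity)
    have q1 : 0 ≤ linForm w J₁ α ^ (-(J₁.card * e)) := by positivity
    have q2 : 0 ≤ linForm w J₂ α ^ (-(J₂.card * e)) := by positivity
    have q3 : 0 ≤ ((α x₀ : ℝ) + 1) ^ (-e) := by positivity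
    calc _ = ((α x₀ : ℝ) + 1) ^ (-e) * (linForm w J₁ α ^ (-(J₁.card * e)) *
          linForm w J₂ α ^ (-(J₂.card * e))) := by ring
      _ ≤ ((α x₀ : ℝ) + 1) ^ (-e) * (((∏ i ∈ J₁, w i ^ (-e)) * ∏ i ∈ J₁, ((α i : ℝ) + 1) ^ (-e)) *
          ((∏ i ∈ J₂, w i ^ (-e)) * ∏ i ∈ J₂, ((α i : ℝ) + 1) ^ (-e))) :=
        mul_le_mul_of_nonneg_left (mul_le_mul l1 l2 q2 (q1.trans l1)) q3
      _ = _ := by ring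

/-- The pairs `(N, α)` with `N ≥ 1` and `α` in the box `[N, 2N)` in the coordinates of `I` and `0`
in the others. Comparability over this type is uniform in `N`. -/
abbrev DyadicBox (I : Finset ι) : Type _ :=
  {p : ℕ × (ι → ℕ) // 1 ≤ p.1 ∧ ∀ i, if i ∈ I then p.1 ≤ p.2 i ∧ p.2 i < 2 * p.1 else p.2 i = 0}

/-- If `F` is at least a constant times `N ^ (-b)` on the boxes `[N, 2N)^I`, which have `N ^ |I|`
points, then `|I| < b q` is necessary for summability of `F ^ q`: otherwise the sums over these
boxes do not tend to `0`, although the boxes leave every finite set. -/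
lemma card_lt_of_summable [Fintype ι] {F : (ι → ℕ) → ℝ} (hF0 : ∀ α, 0 ≤ F α) {q : ℝ} (hq : 0 ≤ q)
    (hF : Summable fun α => F α ^ q) {I : Finset ι} (hI : I.Nonempty) {G : DyadicBox I → ℝ}
    (hFG : Comparable (fun b : DyadicBox I => F b.1.2) G) {b : ℝ}
    (hG : ∀ p : DyadicBox I, (p.1.1 : ℝ) ^ (-b) ≤ G p) : I.card < b * q := by
  by_contra! hcon
  obtain ⟨-, -, C, hC, hb⟩ := hFG
  obtain ⟨i₀, hi₀⟩ := hI
  obtain ⟨u, hu⟩ := summable_iff_vanishing_norm.1 hF (C ^ q)⁻¹ (by positivity)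
  set N : ℕ := 1 + u.sup (fun α => α i₀) with hN
  have hN1 : 1 ≤ N := by omega
  have hNr : (1 : ℝ) ≤ N := by exact_mod_cast hN1
  set t : Finset (ι → ℕ) := Fintype.piFinset fun i => if i ∈ I then Finset.Ico N (2 * N) else {0}
    with ht
  have hmem : ∀ α ∈ t, ∀ i, if i ∈ I then N ≤ α i ∧ α i < 2 * N else α i = 0 := by
    intro α hα i
    have := Fintype.mem_piFinset.1 hα i
    split_ifs with hi <;> simpa [hi] using this
  have hdisj : Disjoint t u := by
    rw [Finset.disjoint_left]
    intro α hα hαu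
    have h1 := hmem α hα i₀
    rw [if_pos hi₀] at h1
    have h2 : α i₀ ≤ u.sup (fun α => α i₀) := Finset.le_sup (f := fun α : ι → ℕ => α i₀) hαu
    omega
  have hcard : t.card = N ^ I.card := by
    rw [ht, Fintype.card_piFinset]
    have : ∀ i, (if i ∈ I then Finset.Ico N (2 * N) else {0} : Finset ℕ).card =
        if i ∈ I then N else 1 := by
      intro i; split_ifs <;> simp; omega
    simp only [this]
    rw [Finset.prod_ite_mem]
    simp
  have hle : ∀ α ∈ t, (C ^ q)⁻¹ * (N : ℝ) ^ (-(b * q)) ≤ F α ^ q := by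
    intro α hα
    have h1 := (hG ⟨(N, α), hN1, hmem α hα⟩).trans (hb ⟨(N, α), hN1, hmem α hα⟩).2
    simp only at h1
    have h2 := Real.rpow_le_rpow (by positivity) h1 hq
    rw [Real.mul_rpow hC.le (hF0 α), ← Real.rpow_mul (by positivity), neg_mul] at h2
    rwa [inv_mul_le_iff₀ (by positivity)]
  have h3 := hu t hdisj
  have h4 := Finset.card_nsmul_le_sum t _ _ hle
  rw [hcard, nsmul_eq_mul, Nat.cast_pow, ← Real.rpow_natCast] at h4
  have h5 : (N : ℝ) ^ (I.card : ℝ) * ((C ^ q)⁻¹ * (N : ℝ) ^ (-(b * q))) =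
      (C ^ q)⁻¹ * (N : ℝ) ^ (I.card - b * q) := by
    rw [sub_eq_add_neg, Real.rpow_add (by positivity)]; ring
  have h6 : 1 ≤ (N : ℝ) ^ (I.card - b * q) := Real.one_le_rpow hNr (by linarith)
  have h7 : (C ^ q)⁻¹ ≤ (C ^ q)⁻¹ * (N : ℝ) ^ (I.card - b * q) :=
    le_mul_of_one_le_right (by positivity) h6
  have h8 := (le_abs_self _).trans_lt h3
  linarith

/-- On the boxes, a linear form involving a growing coordinate has size `N`. -/
lemma linForm_comparable {w : ι → ℝ} (hw : ∀ i, 0 < w i) {I J : Finset ι} {i₀ : ι} (hI : i₀ ∈ I)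
    (hJ : i₀ ∈ J) :
    Comparable (fun b : DyadicBox I => linForm w J b.1.2) (fun b => (b.1.1 : ℝ)) := by
  have h1 : ∀ b : DyadicBox I, (1 : ℝ) ≤ b.1.1 := fun b => by exact_mod_cast b.2.1
  refine Comparable.of_bounds (1 + ∑ i ∈ J, w i * 2) (w i₀)⁻¹
    (fun b => zero_lt_one.trans_le (one_le_linForm hw J _)) (fun b => by linarith [h1 b])
    (fun b => ?_) (fun b => ?_)
  · have : ∀ i, (b.1.2 i : ℝ) + 1 ≤ 2 * b.1.1 := by
      intro i
      have := b.2.2 i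
      have := b.2.1
      have : b.1.2 i + 1 ≤ 2 * b.1.1 := by split_ifs at * <;> omega
      exact_mod_cast this
    unfold linForm
    rw [add_mul, Finset.sum_mul]
    refine add_le_add (by linarith [h1 b]) (Finset.sum_le_sum fun i _ => ?_)
    rw [mul_assoc]
    exact mul_le_mul_of_nonneg_left (this i) (hw i).le
  · have h2 := le_linForm hw b.1.2 hJ
    have h3 := b.2.2 i₀
    rw [if_pos hI] at h3
    have h4 : (b.1.1 : ℝ) ≤ b.1.2 i₀ := by exact_mod_cast h3.1
    rw [← div_eq_inv_mul, le_div_iff₀ (hw i₀), mul_comm]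
    exact (mul_le_mul_of_nonneg_left (by linarith) (hw i₀).le).trans h2

/-- On the boxes, a linear form without growing coordinates is constant. -/
lemma linForm_comparable_one {w : ι → ℝ} (hw : ∀ i, 0 < w i) {I J : Finset ι} (hIJ : Disjoint I J) :
    Comparable (fun b : DyadicBox I => linForm w J b.1.2) (fun _ => 1) := by
  refine Comparable.of_bounds (linForm w J fun _ => 0) 1
    (fun b => zero_lt_one.trans_le (one_le_linForm hw J _)) (fun b => one_pos)
    (fun b => ?_) (fun b => by simpa using one_le_linForm hw J b.1.2)
  rw [mul_one]
  refine le_of_eq ?_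
  unfold linForm
  congr 1
  refine Finset.sum_congr rfl fun i hi => ?_
  have := b.2.2 i
  rw [if_neg (fun h => Finset.disjoint_left.1 hIJ h hi)] at this
  simp [this]

lemma coord_comparable {I : Finset ι} {i₀ : ι} (hI : i₀ ∈ I) :
    Comparable (fun b : DyadicBox I => (b.1.2 i₀ : ℝ) + 1) (fun b => (b.1.1 : ℝ)) := by
  have h1 : ∀ b : DyadicBox I, (1 : ℝ) ≤ b.1.1 := fun b => by exact_mod_cast b.2.1
  refine Comparable.of_bounds 2 1 (fun b => by positivity) (fun b => by linarith [h1 b])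
    (fun b => ?_) (fun b => ?_)
  all_goals
    have h3 := b.2.2 i₀
    rw [if_pos hI] at h3
  · have : b.1.2 i₀ + 1 ≤ 2 * b.1.1 := by omega
    exact_mod_cast this
  · have : b.1.1 ≤ 1 * (b.1.2 i₀ + 1) := by omega
    exact_mod_cast this

lemma coord_comparable_one {I : Finset ι} {i₀ : ι} (hI : i₀ ∉ I) :
    Comparable (fun b : DyadicBox I => (b.1.2 i₀ : ℝ) + 1) (fun _ => 1) := by
  have : ∀ b : DyadicBox I, (b.1.2 i₀ : ℝ) + 1 = 1 := fun b => by
    have h3 := b.2.2 i₀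
    rw [if_neg hI] at h3
    simp [h3]
  simp only [this]
  exact Comparable.refl fun _ => one_pos

/-- All three arguments at scale `N`, except that one of `s`, `t` may stay smaller. -/
lemma le_model_full {h r N s t : ℝ} (hN : 1 ≤ N) (hs : 1 ≤ s) (hsN : s ≤ N) (ht : 1 ≤ t)
    (htN : t ≤ N) (hst : s = N ∨ t = N) : N ^ (-1 : ℝ) ≤ model h r N s t := by
  have hN0 : 0 < N := by linarith
  rw [model, max_eq_left hsN, max_eq_left htN, div_self hN0.ne', Real.one_rpow, Real.one_rpow,
    one_mul, one_mul, Real.rpow_neg_one]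
  have e1 : N⁻¹ = N / (N * N) := by field_simp
  have p1 : 0 ≤ s / (N * N) := by positivity
  have p2 : 0 ≤ t / (N * N) := by positivity
  rcases hst with rfl | rfl <;> rw [e1] <;> linarith

lemma le_model_axis {h r N : ℝ} (hN : 1 ≤ N) : N ^ (-2 : ℝ) ≤ model h r N 1 1 := by
  have hN0 : 0 < N := by linarith
  rw [model, max_eq_left hN, max_eq_left hN, div_self hN0.ne', Real.one_rpow, Real.one_rpow,
    one_mul, one_mul, show (-2 : ℝ) = -(2 : ℕ) by norm_num, Real.rpow_neg hN0.le,
    Real.rpow_natCast]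
  have e1 : (N ^ 2)⁻¹ = 1 / (N * N) := by field_simp
  have p1 : 0 ≤ 1 / (N * N) := by positivity
  rw [e1]
  linarith

lemma le_model_face {h r N t : ℝ} (hN : 1 ≤ N) (ht : 1 ≤ t) (htN : t ≤ N) :
    N ^ (-h) ≤ model h r 1 N t := by
  have hN0 : 0 < N := by linarith
  rw [model, max_eq_right hN, max_eq_left htN, div_self hN0.ne', Real.one_rpow, mul_one,
    Real.div_rpow zero_le_one hN0.le, Real.one_rpow, one_div, Real.rpow_neg hN0.le, one_mul,
    div_self hN0.ne']
  have : 0 ≤ t / (N * N) := by positivity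
  exact le_mul_of_one_le_right (by positivity) (by linarith)

lemma le_model_edge {h r N : ℝ} (hN : 1 ≤ N) : N ^ (-r) ≤ model h r 1 1 N := by
  have hN0 : 0 < N := by linarith
  rw [model, max_self, max_eq_right hN, div_self one_ne_zero, Real.one_rpow, one_mul,
    Real.div_rpow zero_le_one hN0.le, Real.one_rpow, one_div, Real.rpow_neg hN0.le, one_mul,
    one_mul, div_self hN0.ne']
  exact le_mul_of_one_le_right (by positivity) (by norm_num)

/-- If the coordinates of `J` all grow, the linear form has size `N`, or `1` when `J` is empty. -/
lemma linForm_dichotomy {w : ι → ℝ} (hw : ∀ i, 0 < w i) {I J : Finset ι} (hJ : J ⊆ I) :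
    ∃ t : DyadicBox I → ℝ, Comparable (fun b : DyadicBox I => linForm w J b.1.2) t ∧
      (∀ b, 1 ≤ t b ∧ t b ≤ b.1.1) ∧ (J.Nonempty → ∀ b, t b = b.1.1) := by
  have h1 : ∀ b : DyadicBox I, (1 : ℝ) ≤ b.1.1 := fun b => by exact_mod_cast b.2.1
  rcases J.eq_empty_or_nonempty with rfl | ⟨i, hi⟩
  · exact ⟨fun _ => 1, linForm_comparable_one hw (by simp), fun b => ⟨le_rfl, h1 b⟩, by simp⟩
  · exact ⟨_, linForm_comparable hw (hJ hi) hi, fun b => ⟨h1 b, le_rfl⟩, fun _ _ => rfl⟩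

/-- Necessity. The four conditions come from the boxes over `{x₀}`, over all three groups of
coordinates, over `J₁ ∪ J₂`, and over `J₂`. -/
lemma summable_model_necessary [Fintype ι] {x₀ : ι} {J₁ J₂ : Finset ι} {w : ι → ℝ} (hw : ∀ i, 0 < w i)
    (h1 : x₀ ∉ J₁ ∪ J₂) (h2 : Disjoint J₁ J₂)
    {h r q : ℝ} (hh : 0 ≤ h) (hr : 0 ≤ r) (hq : 0 ≤ q)
    (hs : Summable (fun α : ι → ℕ =>
      model h r (α x₀ + 1) (linForm w J₁ α) (linForm w J₂ α) ^ q)) :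
    (J₁ = ∅ → J₂ = ∅ → 1 < 2 * q) ∧
    (J₁.Nonempty ∨ J₂.Nonempty → 1 + J₁.card + J₂.card < q) ∧
    (J₁.Nonempty → J₁.card + J₂.card < h * q) ∧ (J₂.Nonempty → J₂.card < r * q) := by
  have hm0 : ∀ α : ι → ℕ, 0 ≤ model h r (α x₀ + 1) (linForm w J₁ α) (linForm w J₂ α) := by
    intro α
    have i1 := one_le_linForm hw J₁ α
    have i2 := one_le_linForm hw J₂ α
    unfold model; positivity
  have hb : ∀ (I : Finset ι) (b : DyadicBox I), (1 : ℝ) ≤ b.1.1 := fun I b => by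
    exact_mod_cast b.2.1
  refine ⟨?_, ?_, ?_, ?_⟩
  · rintro rfl rfl
    have := card_lt_of_summable hm0 hq hs (I := {x₀}) (by simp) (b := 2)
      (Comparable.model hh hr (coord_comparable (by simp)) (linForm_comparable_one hw (by simp))
        (linForm_comparable_one hw (by simp))) (fun p => le_model_axis (hb _ p))
    simpa using this
  · intro hne
    obtain ⟨s, cs, hs1, hs2⟩ := linForm_dichotomy hw
      (show J₁ ⊆ insert x₀ (J₁ ∪ J₂) from fun i hi => by simp [hi])
    obtain ⟨t, ct, ht1, ht2⟩ := linForm_dichotomy hw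
      (show J₂ ⊆ insert x₀ (J₁ ∪ J₂) from fun i hi => by simp [hi])
    have := card_lt_of_summable hm0 hq hs (I := insert x₀ (J₁ ∪ J₂)) (by simp) (b := 1)
      (Comparable.model hh hr (coord_comparable (by simp)) cs ct)
      (fun p => le_model_full (hb _ p) (hs1 p).1 (hs1 p).2 (ht1 p).1 (ht1 p).2
        (hne.imp (fun i => hs2 i p) (fun i => ht2 i p)))
    rw [Finset.card_insert_of_notMem h1, Finset.card_union_of_disjoint h2] at this
    push_cast at this
    linarith
  · intro hne
    obtain ⟨s, cs, -, hs2⟩ := linForm_dichotomy hw (Finset.subset_union_left (s₁ := J₁) (s₂ := J₂))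
    obtain ⟨t, ct, ht1, -⟩ := linForm_dichotomy hw (Finset.subset_union_right (s₁ := J₁) (s₂ := J₂))
    have := card_lt_of_summable hm0 hq hs (I := J₁ ∪ J₂) (hne.mono Finset.subset_union_left) (b := h)
      (Comparable.model hh hr (coord_comparable_one h1) cs ct)
      (fun p => by rw [hs2 hne p]; exact le_model_face (hb _ p) (ht1 p).1 (ht1 p).2)
    rw [Finset.card_union_of_disjoint h2] at this
    exact_mod_cast this
  · rintro ⟨i, hi⟩
    exact card_lt_of_summable hm0 hq hs (I := J₂) ⟨i, hi⟩ (b := r)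
      (Comparable.model hh hr (coord_comparable_one fun h => h1 (Finset.mem_union_right _ h))
        (linForm_comparable_one hw h2.symm) (linForm_comparable hw hi hi))
      (fun p => le_model_edge (hb _ p))

end Lattice

/-! ### The self-commutator -/

/-- `ω₂` as a function of the distinguished coordinate alone. The denominator `∑ s_k` is merged
into the last Gamma factor by `v * Γ(v) = Γ(v + 1)`, whence the `1 +` in the third argument of
`gammaQuot`. -/
lemma exists_omegaTwo_update {K : ℕ} {m : Fin K → ℕ} (hm : ∀ k, 0 < m k) {p : (k : Fin K) → Fin (m k) → ℝ}
    (hp : ∀ k j, 0 < p k j) {a : Fin K → ℝ} (ha : ∀ k, 0 < a k) (k₀ : Fin K) (j₀ : Fin (m k₀))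
    (α : (Σ k : Fin K, Fin (m k)) → ℕ) :
    ∃ P : ℝ, 0 < P ∧ ∀ n : ℕ, omegaTwo K m p a (Function.update α ⟨k₀, j₀⟩ n) =
      P * gammaQuot (a k₀) (∑ j ∈ Finset.univ.erase j₀, ((α ⟨k₀, j⟩ : ℝ) + 1) / p k₀ j)
        (1 + ∑ k ∈ Finset.univ.erase k₀, ∑ j, ((α ⟨k, j⟩ : ℝ) + 1) / (a k * p k j))
        ((n + 1) * (1 / p k₀ j₀)) := by
  have hG : ∀ k j, 0 < Real.Gamma (((α ⟨k, j⟩ : ℝ) + 1) / p k j) := fun k j =>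
    Real.Gamma_pos_of_pos (div_pos (by positivity) (hp k j))
  have hne : ∀ k : Fin K, (Finset.univ : Finset (Fin (m k))).Nonempty := fun k =>
    Finset.univ_nonempty_iff.2 ⟨⟨0, hm k⟩⟩
  set S : ℝ := ∑ j ∈ Finset.univ.erase j₀, ((α ⟨k₀, j⟩ : ℝ) + 1) / p k₀ j with hS
  set T : ℝ := ∑ k ∈ Finset.univ.erase k₀, ∑ j, ((α ⟨k, j⟩ : ℝ) + 1) / (a k * p k j) with hT
  have hS0 : 0 ≤ S := Finset.sum_nonneg fun j _ => div_nonneg (by positivity) (hp k₀ j).le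
  have hT0 : 0 ≤ T := Finset.sum_nonneg fun k _ => Finset.sum_nonneg fun j _ =>
    div_nonneg (by positivity) (mul_nonneg (ha k).le (hp k j).le)
  refine ⟨(Real.pi ^ (∑ k, m k) / ∏ k, ∏ j, p k j) * (1 / ∏ k, a k) *
    (∏ k ∈ Finset.univ.erase k₀, (∏ j, Real.Gamma (((α ⟨k, j⟩ : ℝ) + 1) / p k j)) /
      Real.Gamma (∑ j, ((α ⟨k, j⟩ : ℝ) + 1) / p k j)) *
    (∏ j ∈ Finset.univ.erase j₀, Real.Gamma (((α ⟨k₀, j⟩ : ℝ) + 1) / p k₀ j)) *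
    (∏ k ∈ Finset.univ.erase k₀, Real.Gamma (∑ j, ((α ⟨k, j⟩ : ℝ) + 1) / (a k * p k j))), ?_,
    fun n => ?_⟩
  · refine mul_pos (mul_pos (mul_pos (mul_pos ?_ ?_) ?_) ?_) ?_
    · exact div_pos (pow_pos Real.pi_pos _) (Finset.prod_pos fun k _ =>
        Finset.prod_pos fun j _ => hp k j)
    · exact one_div_pos.2 (Finset.prod_pos fun k _ => ha k)
    · exact Finset.prod_pos fun k _ => div_pos (Finset.prod_pos fun j _ => hG k j)
        (Real.Gamma_pos_of_pos (Finset.sum_pos (fun j _ => div_pos (by positivity) (hp k j))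
          (hne k)))
    · exact Finset.prod_pos fun j _ => hG k₀ j
    · exact Finset.prod_pos fun k _ => Real.Gamma_pos_of_pos (Finset.sum_pos
        (fun j _ => div_pos (by positivity) (mul_pos (ha k) (hp k j))) (hne k))
  · have e1 : ∀ k ∈ Finset.univ.erase k₀, ∀ j : Fin (m k),
        Function.update α ⟨k₀, j₀⟩ n ⟨k, j⟩ = α ⟨k, j⟩ := by
      intro k hk j
      refine Function.update_of_ne (fun h => ?_) _ _
      exact (Finset.mem_erase.1 hk).1 (congrArg Sigma.fst h)
    have e2 : ∀ j ∈ Finset.univ.erase j₀,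
        Function.update α ⟨k₀, j₀⟩ n ⟨k₀, j⟩ = α ⟨k₀, j⟩ := by
      intro j hj
      refine Function.update_of_ne (fun h => ?_) _ _
      exact (Finset.mem_erase.1 hj).1 (eq_of_heq (Sigma.mk.inj h).2)
    have e3 : Function.update α ⟨k₀, j₀⟩ n ⟨k₀, j₀⟩ = n := Function.update_self _ _ _
    unfold omegaTwo
    set β := Function.update α ⟨k₀, j₀⟩ n with hβ
    set x : ℝ := (n + 1) * (1 / p k₀ j₀) with hx
    have hx0 : 0 < x := mul_pos (by positivity) (one_div_pos.2 (hp _ _))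
    have hak := ha k₀
    have ex : ((n : ℝ) + 1) / p k₀ j₀ = x := by rw [hx]; ring
    have s1 : ∑ j, ((β ⟨k₀, j⟩ : ℝ) + 1) / p k₀ j = x + S := by
      rw [← Finset.add_sum_erase _ _ (Finset.mem_univ j₀), e3, ex, hS]
      exact congrArg (x + ·) (Finset.sum_congr rfl fun j hj => by rw [e2 j hj])
    have s2 : ∑ j, ((β ⟨k₀, j⟩ : ℝ) + 1) / (a k₀ * p k₀ j) = (x + S) / a k₀ := by
      rw [← s1, Finset.sum_div]
      exact Finset.sum_congr rfl fun j _ => by rw [div_div, mul_comm (a k₀)]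
    have s3 : ∑ k, ∑ j, ((β ⟨k, j⟩ : ℝ) + 1) / (a k * p k j) = (x + S) / a k₀ + T := by
      rw [← Finset.add_sum_erase _ _ (Finset.mem_univ k₀), s2, hT]
      exact congrArg ((x + S) / a k₀ + ·) (Finset.sum_congr rfl fun k hk =>
        Finset.sum_congr rfl fun j _ => by rw [e1 k hk j])
    have s4 : ∏ j, Real.Gamma (((β ⟨k₀, j⟩ : ℝ) + 1) / p k₀ j) = Real.Gamma x *
        ∏ j ∈ Finset.univ.erase j₀, Real.Gamma (((α ⟨k₀, j⟩ : ℝ) + 1) / p k₀ j) := by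
      rw [← Finset.mul_prod_erase _ _ (Finset.mem_univ j₀), e3, ex]
      exact congrArg (Real.Gamma x * ·) (Finset.prod_congr rfl fun j hj => by rw [e2 j hj])
    have s5 : ∏ k, (∏ j, Real.Gamma (((β ⟨k, j⟩ : ℝ) + 1) / p k j)) /
        Real.Gamma (∑ j, ((β ⟨k, j⟩ : ℝ) + 1) / p k j) = (Real.Gamma x *
        ∏ j ∈ Finset.univ.erase j₀, Real.Gamma (((α ⟨k₀, j⟩ : ℝ) + 1) / p k₀ j)) /
          Real.Gamma (x + S) *
        ∏ k ∈ Finset.univ.erase k₀, (∏ j, Real.Gamma (((α ⟨k, j⟩ : ℝ) + 1) / p k j)) /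
      Real.Gamma (∑ j, ((α ⟨k, j⟩ : ℝ) + 1) / p k j) := by
      rw [← Finset.mul_prod_erase _ _ (Finset.mem_univ k₀), s4, s1]
      congr 1
      exact Finset.prod_congr rfl fun k hk => by simp only [e1 k hk]
    have s6 : ∏ k, Real.Gamma (∑ j, ((β ⟨k, j⟩ : ℝ) + 1) / (a k * p k j)) =
        Real.Gamma ((x + S) / a k₀) *
        ∏ k ∈ Finset.univ.erase k₀, Real.Gamma (∑ j, ((α ⟨k, j⟩ : ℝ) + 1) / (a k * p k j)) := by
      rw [← Finset.mul_prod_erase _ _ (Finset.mem_univ k₀), s2]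
      congr 1
      exact Finset.prod_congr rfl fun k hk => by simp only [e1 k hk]
    have hv : 0 < (x + S) / a k₀ + T := by positivity
    rw [s5, s6, s3, gammaQuot, show (x + S) / a k₀ + (1 + T) = (x + S) / a k₀ + T + 1 by ring,
      Real.Gamma_add_one hv.ne']
    have g1 := (Real.Gamma_pos_of_pos hv).ne'
    have g2 := (Real.Gamma_pos_of_pos (show 0 < x + S by positivity)).ne'
    have g3 := hv.ne'
    generalize (x + S) / a k₀ + T = V at *
    generalize (x + S) / a k₀ = U at *
    simp only [div_eq_mul_inv, mul_inv]
    ring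

lemma abs_lambdaTwo {K : ℕ} {m : Fin K → ℕ} (hm : ∀ k, 0 < m k) {p : (k : Fin K) → Fin (m k) → ℝ}
    (hp : ∀ k j, 0 < p k j) {a : Fin K → ℝ} (ha : ∀ k, 0 < a k) (k₀ : Fin K) (j₀ : Fin (m k₀))
    (α : (Σ k : Fin K, Fin (m k)) → ℕ) :
    |lambdaTwo K m p a ⟨k₀, j₀⟩ α| = |jump (a k₀) (1 / p k₀ j₀) (α ⟨k₀, j₀⟩)
      (∑ j ∈ Finset.univ.erase j₀, ((α ⟨k₀, j⟩ : ℝ) + 1) / p k₀ j)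
      (1 + ∑ k ∈ Finset.univ.erase k₀, ∑ j, ((α ⟨k, j⟩ : ℝ) + 1) / (a k * p k j))| := by
  obtain ⟨P, hP, H⟩ := exists_omegaTwo_update hm hp ha k₀ j₀ α
  have Hα := H (α ⟨k₀, j₀⟩)
  rw [Function.update_eq_self] at Hα
  unfold lambdaTwo jump
  rw [Hα, H, H]
  generalize ∑ j ∈ Finset.univ.erase j₀, ((α ⟨k₀, j⟩ : ℝ) + 1) / p k₀ j = S
  generalize 1 + ∑ k ∈ Finset.univ.erase k₀, ∑ j, ((α ⟨k, j⟩ : ℝ) + 1) / (a k * p k j) = T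
  by_cases h0 : α ⟨k₀, j₀⟩ = 0
  · rw [if_pos h0, if_pos h0, abs_neg, h0, mul_div_mul_left _ _ hP.ne']
    norm_num
  · obtain ⟨n, hn⟩ := Nat.exists_eq_succ_of_ne_zero h0
    rw [if_neg h0, if_neg h0, hn, abs_sub_comm, mul_div_mul_left _ _ hP.ne',
      mul_div_mul_left _ _ hP.ne']
    push_cast
    simp
    ring_nf

/-- Summability criterion for `∑_{α ∈ ℕ^d} |λ(α)|^q` on the generalized egg domain. -/
theorem self_commutator_summable_iff_egg_two (K : ℕ) (hK : 0 < K)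
    (m : Fin K → ℕ) (hm : ∀ k, 0 < m k)
    (p : (k : Fin K) → Fin (m k) → ℝ) (hp : ∀ k j, 0 < p k j)
    (a : Fin K → ℝ) (ha : ∀ k, 0 < a k)
    (d : ℕ) (hd : d = ∑ k, m k) (q : ℝ) (hq : 0 < q) :
    Summable (fun α : (Σ k : Fin K, Fin (m k)) → ℕ =>
        |lambdaTwo K m p a ⟨⟨0, hK⟩, ⟨0, hm ⟨0, hK⟩⟩⟩ α| ^ q) ↔
      ((d = 1 ∧ 1 / 2 < q) ∨
        (1 < d ∧ m ⟨0, hK⟩ = 1 ∧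
          max (d : ℝ)
            (a ⟨0, hK⟩ * p ⟨0, hK⟩ ⟨0, hm ⟨0, hK⟩⟩ * ((d : ℝ) - (m ⟨0, hK⟩ : ℝ))) < q) ∨
        (1 < d ∧ 1 < m ⟨0, hK⟩ ∧
          max (max (d : ℝ) (p ⟨0, hK⟩ ⟨0, hm ⟨0, hK⟩⟩ * ((d : ℝ) - 1)))
            (a ⟨0, hK⟩ * p ⟨0, hK⟩ ⟨0, hm ⟨0, hK⟩⟩ * ((d : ℝ) - (m ⟨0, hK⟩ : ℝ))) < q)) := by
  generalize hk₀ : (⟨0, hK⟩ : Fin K) = k₀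
  have hmk := hm k₀
  have hj : ∃ j₀ : Fin (m k₀), j₀ = ⟨0, hm k₀⟩ := ⟨_, rfl⟩
  obtain ⟨j₀, hj₀⟩ := hj
  rw [← hj₀]
  set h : ℝ := 1 / p k₀ j₀ with hh
  set r : ℝ := h / a k₀ with hr
  have hp0 := hp k₀ j₀
  have ha0 := ha k₀
  have hh0 : 0 < h := one_div_pos.2 hp0
  have hr0 : 0 < r := div_pos hh0 ha0
  -- `J₁` is the rest of the distinguished block, `J₂` the union of the other blocks.
  let J₁ : Finset (Σ k : Fin K, Fin (m k)) :=
    (Finset.univ.erase j₀).map ⟨Sigma.mk k₀, sigma_mk_injective⟩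
  let J₂ : Finset (Σ k : Fin K, Fin (m k)) := (Finset.univ.erase k₀).sigma fun _ => Finset.univ
  let w : (Σ k : Fin K, Fin (m k)) → ℝ := fun i =>
    if i.1 = k₀ then 1 / p i.1 i.2 else 1 / (a i.1 * p i.1 i.2)
  have hw : ∀ i, 0 < w i := fun i => by
    have := hp i.1 i.2
    have := ha i.1
    simp only [w]; split_ifs <;> positivity
  have h1 : (⟨k₀, j₀⟩ : Σ k : Fin K, Fin (m k)) ∉ J₁ ∪ J₂ := by
    simp [J₁, J₂]
  have h2 : Disjoint J₁ J₂ := by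
    rw [Finset.disjoint_left]
    rintro ⟨k, j⟩ hk
    simp only [J₁, Finset.mem_map, Function.Embedding.coeFn_mk] at hk
    obtain ⟨j', -, e⟩ := hk
    have : k = k₀ := (congrArg Sigma.fst e).symm
    simp [J₂, this]
  have h3 : insert (⟨k₀, j₀⟩ : Σ k : Fin K, Fin (m k)) (J₁ ∪ J₂) = Finset.univ := by
    refine Finset.eq_univ_of_forall ?_
    rintro ⟨k, j⟩
    by_cases hk : k = k₀
    · subst hk
      by_cases hj : j = j₀
      · simp [hj]
      · simp [J₁, hj]
    · simp [J₂, hk]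
  have hc1 : J₁.card = m k₀ - 1 := by simp [J₁]
  have hc2 : (J₂.card : ℕ) = d - m k₀ := by
    simp only [J₂, Finset.card_sigma, Finset.card_univ, Fintype.card_fin]
    rw [hd, ← Finset.add_sum_erase _ _ (Finset.mem_univ k₀)]
    simp
  have hmd : m k₀ ≤ d := by
    rw [hd]; exact Finset.single_le_sum (fun _ _ => Nat.zero_le _) (Finset.mem_univ k₀)
  have hl1 : ∀ α : (Σ k : Fin K, Fin (m k)) → ℕ,
      (∑ j ∈ Finset.univ.erase j₀, ((α ⟨k₀, j⟩ : ℝ) + 1) / p k₀ j) + 1 = linForm w J₁ α := by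
    intro α
    simp only [linForm, J₁, Finset.sum_map, Function.Embedding.coeFn_mk, w, if_true]
    rw [add_comm]
    exact congrArg (1 + ·) (Finset.sum_congr rfl fun j _ => by ring)
  have hl2 : ∀ α : (Σ k : Fin K, Fin (m k)) → ℕ,
      1 + ∑ k ∈ Finset.univ.erase k₀, ∑ j, ((α ⟨k, j⟩ : ℝ) + 1) / (a k * p k j) =
        linForm w J₂ α := by
    intro α
    simp only [linForm, J₂, Finset.sum_sigma, w]
    refine congrArg (1 + ·) (Finset.sum_congr rfl fun k hk => Finset.sum_congr rfl fun j _ => ?_)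
    rw [if_neg (Finset.mem_erase.1 hk).1]
    ring
  have hcomp := jump_comparable_model ha0 hh0
    (fun α : (Σ k : Fin K, Fin (m k)) → ℕ => α ⟨k₀, j₀⟩)
    (fun α => ∑ j ∈ Finset.univ.erase j₀, ((α ⟨k₀, j⟩ : ℝ) + 1) / p k₀ j)
    (fun α => 1 + ∑ k ∈ Finset.univ.erase k₀, ∑ j, ((α ⟨k, j⟩ : ℝ) + 1) / (a k * p k j))
    (fun α => Finset.sum_nonneg fun j _ => div_nonneg (by positivity) (hp k₀ j).le)
    (fun α => by rw [hl2]; exact one_le_linForm hw _ _)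
  have habs : ∀ α : (Σ k : Fin K, Fin (m k)) → ℕ, |lambdaTwo K m p a ⟨k₀, j₀⟩ α| =
      jump (a k₀) h (α ⟨k₀, j₀⟩)
      (∑ j ∈ Finset.univ.erase j₀, ((α ⟨k₀, j⟩ : ℝ) + 1) / p k₀ j)
      (1 + ∑ k ∈ Finset.univ.erase k₀, ∑ j, ((α ⟨k, j⟩ : ℝ) + 1) / (a k * p k j)) := by
    intro α
    rw [abs_lambdaTwo hm hp ha, abs_of_pos (hcomp.1 α)]
  simp only [habs]
  rw [hcomp.summable_rpow_iff hq.le]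
  simp only [hl1, hl2]
  rw [← hr]
  have r1 : (J₁.card : ℝ) = m k₀ - 1 := by rw [hc1, Nat.cast_sub hmk]; simp
  have r2 : (J₂.card : ℝ) = d - m k₀ := by rw [hc2, Nat.cast_sub hmd]
  have n1 : J₁.Nonempty ↔ 1 < m k₀ := by rw [← Finset.card_pos, hc1]; omega
  have n2 : J₂.Nonempty ↔ m k₀ < d := by rw [← Finset.card_pos, hc2]; omega
  have z1 : J₁ = ∅ ↔ m k₀ = 1 := by rw [← Finset.card_eq_zero, hc1]; omega
  have z2 : J₂ = ∅ ↔ d = m k₀ := by rw [← Finset.card_eq_zero, hc2]; omega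
  -- Multiplying by `p_{11}` and `a_1 p_{11}` puts the conditions in the stated form.
  have eh : ∀ A : ℝ, A < h * q ↔ p k₀ j₀ * A < q := fun A => by
    rw [hh, one_div, ← div_eq_inv_mul, lt_div_iff₀ hp0, mul_comm]
  have er : ∀ A : ℝ, A < r * q ↔ a k₀ * p k₀ j₀ * A < q := fun A => by
    have : r * q = q / (a k₀ * p k₀ j₀) := by rw [hr, hh]; field_simp
    rw [this, lt_div_iff₀ (by positivity), mul_comm]
  constructor
  · intro hs
    obtain ⟨c1, c2, c3, c4⟩ := summable_model_necessary hw h1 h2 hh0.le hr0.le hq.le hs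
    rw [z1, z2] at c1
    rw [n1, n2, r1, r2] at c2
    rw [n1, r1, r2, eh] at c3
    rw [n2, r2, er] at c4
    have c4' : a k₀ * p k₀ j₀ * ((d : ℝ) - m k₀) < q := by
      rcases hmd.eq_or_lt with e | e
      · rw [e]; simpa using hq
      · exact c4 e
    rcases Nat.lt_or_ge 1 (m k₀) with hm1 | hm1
    · refine Or.inr (Or.inr ⟨by omega, hm1, ?_⟩)
      have c3' := c3 hm1
      rw [show (m k₀ : ℝ) - 1 + (d - m k₀) = d - 1 by ring] at c3'
      exact max_lt (max_lt (by linarith [c2 (Or.inl hm1)]) c3') c4'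
    · have hm1' : m k₀ = 1 := by omega
      rcases Nat.lt_or_ge 1 d with hd1 | hd1
      · exact Or.inr (Or.inl ⟨hd1, hm1', max_lt (by linarith [c2 (Or.inr (by omega))]) c4'⟩)
      · exact Or.inl ⟨by omega, by linarith [c1 hm1' (by omega)]⟩
  · intro hc
    have suff := summable_model (h := h) (r := r) (q := q) hw h1 h2 h3 hq.le
    rw [n1, n2, r1, r2, eh, eh, er] at suff
    rcases hc with ⟨hd1, hc⟩ | ⟨hd1, hm1, hc⟩ | ⟨hd1, hm1, hc⟩
    · apply suff <;> intros <;> first | omega | linarith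
    · obtain ⟨b1, b2⟩ := max_lt_iff.1 hc
      have hd2 : (2 : ℝ) ≤ d := by exact_mod_cast hd1
      have hm2 : (m k₀ : ℝ) = 1 := by exact_mod_cast hm1
      apply suff <;> intros <;> first | omega | linarith
    · obtain ⟨b0, b2⟩ := max_lt_iff.1 hc
      obtain ⟨b1, b3⟩ := max_lt_iff.1 b0
      have hd2 : (2 : ℝ) ≤ d := by exact_mod_cast hd1
      have hm2 : (2 : ℝ) ≤ m k₀ := by exact_mod_cast hm1
      have hmd' : (m k₀ : ℝ) ≤ d := by exact_mod_cast hmd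
      have b4 : p k₀ j₀ * ((m k₀ : ℝ) - 1) ≤ p k₀ j₀ * (d - 1) := by gcongr
      apply suff <;> intros <;> first | linarith
end

section
/- Assume m_1 > 1. For a multi-index α ∈ ℕ^d, let e_{11} and e_{21} denote the multi-indices with a single 1 in positions (j,k) = (1,1) and (2,1) respectively, and define μ(α) = | √( ω₂(α) ω₂(α + e_{11} − e_{21}) / ω₂(α − e_{21})² ) − √( ω₂(α + e_{11})² / ( ω₂(α) ω₂(α + e_{11} − e_{21}) ) ) | when α_{21} ≥ 1, and μ(α) = 0 when α_{21} = 0. Then for every real p > 0, the series ∑_{α ∈ ℕ^d} μ(α)^p converges if and only if: p > d in case a_1 = 1; and p > max{ d, 2 a_1 (d − m_1) / (1/p_{11} + 1/p_{21}) } in case a_1 ≠ 1. -/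
/-- `μ(α)`: the eigenvalue of `√([M_{z_y}, M_{z_x}*][M_{z_y}, M_{z_x}*]*)` at the
normalized monomial `z^α/√ω₂(α)`; `x` and `y` are two distinguished coordinates. -/
noncomputable def muTwo (K : ℕ) (m : Fin K → ℕ) (p : (k : Fin K) → Fin (m k) → ℝ)
    (a : Fin K → ℝ) (x y : Σ k : Fin K, Fin (m k)) (α : (Σ k : Fin K, Fin (m k)) → ℕ) : ℝ :=
  if α y = 0 then 0
  else
    |Real.sqrt (omegaTwo K m p a α *
          omegaTwo K m p a (Function.update (Function.update α x (α x + 1)) y (α y - 1)) /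
          (omegaTwo K m p a (Function.update α y (α y - 1))) ^ 2)
      - Real.sqrt ((omegaTwo K m p a (Function.update α x (α x + 1))) ^ 2 /
          (omegaTwo K m p a α *
            omegaTwo K m p a
              (Function.update (Function.update α x (α x + 1)) y (α y - 1))))|


/-! ### Differences of `log Γ` -/
/-- The mixed second difference of `log Γ`. -/
noncomputable def lgD (s t x : ℝ) : ℝ :=
  Real.log (Real.Gamma (x + s + t)) + Real.log (Real.Gamma x)
    - Real.log (Real.Gamma (x + s)) - Real.log (Real.Gamma (x + t))

/-- One term of the series for `lgD`: `log (1 + st/(y(y+s+t)))` lies between two quantities that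
compare with telescoping series. -/
theorem lgD_term {s t y : ℝ} (hs : 0 < s) (ht : 0 < t) (hy : 0 < y) :
    s * t / ((y + s) * (y + t)) ≤
        Real.log (y + s) + Real.log (y + t) - Real.log y - Real.log (y + s + t) ∧
      Real.log (y + s) + Real.log (y + t) - Real.log y - Real.log (y + s + t) ≤
        s * t / y ^ 2 := by
  have e : Real.log (y + s) + Real.log (y + t) - Real.log y - Real.log (y + s + t) =
      Real.log ((y + s) * (y + t) / (y * (y + s + t))) := by
    rw [Real.log_div (by positivity) (by positivity), Real.log_mul (by positivity) (by positivity),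
      Real.log_mul (by positivity) (by positivity)]
    ring
  rw [e]
  constructor
  · have h := Real.one_sub_inv_le_log_of_pos
      (show 0 < (y + s) * (y + t) / (y * (y + s + t)) by positivity)
    refine le_trans (le_of_eq ?_) h
    field_simp
    ring
  · have h := Real.log_le_sub_one_of_pos
      (show 0 < (y + s) * (y + t) / (y * (y + s + t)) by positivity)
    refine h.trans ?_
    have : (y + s) * (y + t) / (y * (y + s + t)) - 1 = s * t / (y * (y + s + t)) := by
      field_simp
      ring
    rw [this]
    gcongr
    nlinarith [mul_pos hy hs, mul_pos hy ht]

/-- In the Euler limit for `log Γ` the terms `x log n + log n!` cancel, leaving a series for `lgD`. -/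
theorem lgD_tendsto {s t x : ℝ} (hs : 0 < s) (ht : 0 < t) (hx : 0 < x) :
    Filter.Tendsto (fun n : ℕ => ∑ i ∈ Finset.range (n + 1),
      (Real.log (x + i + s) + Real.log (x + i + t) - Real.log (x + i) - Real.log (x + i + s + t)))
      Filter.atTop (nhds (lgD s t x)) := by
  have h1 := Real.BohrMollerup.tendsto_log_gamma (show 0 < x + s + t by positivity)
  have h2 := Real.BohrMollerup.tendsto_log_gamma hx
  have h3 := Real.BohrMollerup.tendsto_log_gamma (show 0 < x + s by positivity)
  have h4 := Real.BohrMollerup.tendsto_log_gamma (show 0 < x + t by positivity)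
  refine (((h1.add h2).sub h3).sub h4).congr fun n => ?_
  simp only [Real.BohrMollerup.logGammaSeq, Finset.sum_sub_distrib, Finset.sum_add_distrib]
  have e1 : ∀ i : ℕ, x + i + s = x + s + i := fun i => by ring
  have e2 : ∀ i : ℕ, x + i + t = x + t + i := fun i => by ring
  have e3 : ∀ i : ℕ, x + s + i + t = x + s + t + i := fun i => by ring
  simp only [e1, e2, e3]
  ring

theorem sum_telescope (x : ℝ) (n : ℕ) :
    ∑ i ∈ Finset.range n, (1 / (x + i) - 1 / (x + i + 1)) = 1 / x - 1 / (x + n) := by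
  induction n with
  | zero => simp
  | succ n ih => rw [Finset.sum_range_succ, ih]; push_cast; ring_nf

theorem lgD_le {s t x : ℝ} (hs : 0 < s) (ht : 0 < t) (hx : 0 < x) :
    lgD s t x ≤ s * t * (1 + 1 / x) / x := by
  refine le_of_tendsto' (lgD_tendsto hs ht hx) fun n => ?_
  calc _ ≤ ∑ i ∈ Finset.range (n + 1), s * t * (1 + 1 / x) * (1 / (x + i) - 1 / (x + i + 1)) := by
        refine Finset.sum_le_sum fun i _ => ?_
        have hy : 0 < x + i := by positivity
        refine (lgD_term hs ht hy).2.trans ?_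
        have h1 : 1 / (x + (i : ℝ)) ≤ 1 / x := by
          apply one_div_le_one_div_of_le hx; linarith [(Nat.cast_nonneg i : (0 : ℝ) ≤ i)]
        have h2 : s * t / (x + i) ^ 2 =
            s * t * (1 + 1 / (x + i)) * (1 / (x + i) - 1 / (x + i + 1)) := by
          field_simp
          ring
        rw [h2]
        have h3 : 0 ≤ 1 / (x + (i : ℝ)) - 1 / (x + i + 1) := by
          rw [sub_nonneg]; apply one_div_le_one_div_of_le hy; linarith
        gcongr
    _ = s * t * (1 + 1 / x) * (1 / x - 1 / (x + (n + 1 : ℕ))) := by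
        rw [← Finset.mul_sum, sum_telescope]
    _ ≤ s * t * (1 + 1 / x) * (1 / x) := by
        gcongr
        have : 0 < 1 / (x + ((n + 1 : ℕ) : ℝ)) := by positivity
        linarith
    _ = _ := by ring

theorem le_lgD {s t x : ℝ} (hs : 0 < s) (ht : 0 < t) (hx : 0 < x) :
    s * t / (x + s + t) ≤ lgD s t x := by
  have hlim : Filter.Tendsto (fun n : ℕ => s * t * (1 / (x + s + t) - 1 / (x + s + t + (n + 1 : ℕ))))
      Filter.atTop (nhds (s * t * (1 / (x + s + t) - 0))) := by
    refine Filter.Tendsto.const_mul _ (Filter.Tendsto.const_sub _ ?_)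
    refine Filter.Tendsto.comp (g := fun n : ℕ => 1 / (x + s + t + (n : ℝ))) ?_
      (Filter.tendsto_add_atTop_nat 1)
    refine Filter.Tendsto.const_div_atTop ?_ _
    exact Filter.tendsto_atTop_add_const_left _ _ tendsto_natCast_atTop_atTop
  have := le_of_tendsto_of_tendsto' hlim (lgD_tendsto hs ht hx) fun n => ?_
  · refine le_trans (le_of_eq ?_) this
    ring
  · rw [← sum_telescope, Finset.mul_sum]
    refine Finset.sum_le_sum fun i _ => ?_
    have hy : 0 < x + i := by positivity
    refine le_trans ?_ (lgD_term hs ht hy).1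
    have h2 : s * t * (1 / (x + s + t + i) - 1 / (x + s + t + i + 1)) =
        s * t / ((x + s + t + i) * (x + s + t + i + 1)) := by
      field_simp
      ring
    rw [h2]
    refine div_le_div_of_nonneg_left (by positivity) (by positivity) ?_
    exact mul_le_mul (by linarith) (by linarith) (by positivity) (by positivity)

theorem lgD_pos {s t x : ℝ} (hs : 0 < s) (ht : 0 < t) (hx : 0 < x) : 0 < lgD s t x :=
  lt_of_lt_of_le (by positivity) (le_lgD hs ht hx)

theorem lgD_approx {s t x : ℝ} (hs : 0 < s) (ht : 0 < t) (hx : 0 < x) :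
    |lgD s t x - s * t / x| ≤ s * t * (1 + s + t) / x ^ 2 := by
  rw [abs_le]
  constructor
  · have h := le_lgD hs ht hx
    have h2 : s * t / x - s * t / (x + s + t) ≤ s * t * (1 + s + t) / x ^ 2 := by
      rw [div_sub_div _ _ (by positivity) (by positivity),
        div_le_div_iff₀ (by positivity) (by positivity)]
      have : 0 ≤ s * t * x * (x * x + (1 + s + t) * (s + t) * x + 0) := by positivity
      have h5 : 0 ≤ s * t * x * ((1 + s + t) * (s + t)) := by positivity
      have h6 : 0 ≤ s * t * x * x := by positivity
      nlinarith
    linarith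
  · have h := lgD_le hs ht hx
    have h2 : s * t * (1 + 1 / x) / x = s * t / x + s * t / x ^ 2 := by field_simp
    have h3 : s * t / x ^ 2 ≤ s * t * (1 + s + t) / x ^ 2 := by
      refine div_le_div_of_nonneg_right ?_ (by positivity)
      exact le_mul_of_one_le_right (by positivity) (by linarith)
    linarith

/-- The first difference of `log Γ`. -/
noncomputable def lgG (s x : ℝ) : ℝ :=
  Real.log (Real.Gamma (x + s)) - Real.log (Real.Gamma x)

/-- Log-convexity of `Γ`: the slope on `[x, x+s]` is at most the slope on `[x+s, x+s+1]`. -/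
theorem lgG_le {s x : ℝ} (hs : 0 < s) (hx : 0 < x) : lgG s x ≤ s * Real.log (x + s) := by
  have h := Real.convexOn_log_Gamma.slope_mono_adjacent (x := x) (y := x + s) (z := x + s + 1)
    hx (show 0 < x + s + 1 by positivity) (by linarith) (by linarith)
  have e : Real.log (Real.Gamma (x + s + 1)) = Real.log (x + s) + Real.log (Real.Gamma (x + s)) := by
    rw [Real.Gamma_add_one (by positivity), Real.log_mul (by positivity)
      (Real.Gamma_pos_of_pos (by positivity)).ne']
  simp only [Function.comp, e] at h
  rw [show x + s - x = s by ring, show x + s + 1 - (x + s) = 1 by ring, div_one, div_le_iff₀ hs] at h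
  unfold lgG
  linarith

/-- Log-convexity of `Γ`: the slope on `[x, x+1]` is at most the slope on `[x+1, x+1+s]`. -/
theorem le_lgG {s x : ℝ} (hs : 0 < s) (hx : 0 < x) :
    s * Real.log x - Real.log (1 + s / x) ≤ lgG s x := by
  have h := Real.convexOn_log_Gamma.slope_mono_adjacent (x := x) (y := x + 1) (z := x + 1 + s)
    hx (show 0 < x + 1 + s by positivity) (by linarith) (by linarith)
  have e : Real.log (Real.Gamma (x + 1)) = Real.log x + Real.log (Real.Gamma x) := by
    rw [Real.Gamma_add_one (by positivity), Real.log_mul (by positivity)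
      (Real.Gamma_pos_of_pos (by positivity)).ne']
  have e2 : Real.log (Real.Gamma (x + 1 + s)) = Real.log (x + s) + Real.log (Real.Gamma (x + s)) := by
    rw [add_right_comm, Real.Gamma_add_one (by positivity), Real.log_mul (by positivity)
      (Real.Gamma_pos_of_pos (by positivity)).ne']
  have e3 : Real.log (1 + s / x) = Real.log (x + s) - Real.log x := by
    rw [← Real.log_div (by positivity) (by positivity)]; congr 1; field_simp
  simp only [Function.comp, e, e2] at h
  rw [show x + 1 - x = 1 by ring, show x + 1 + s - (x + 1) = s by ring, div_one, le_div_iff₀ hs] at h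
  unfold lgG
  rw [e3]
  linarith

/-- `Γ(x+s)/Γ(x)` is comparable to `x^s`, uniformly on `[x₀, ∞)`. -/
theorem lgG_approx {s x₀ : ℝ} (hs : 0 < s) (hx₀ : 0 < x₀) :
    ∃ C, ∀ x, x₀ ≤ x → |lgG s x - s * Real.log x| ≤ C := by
  refine ⟨s * Real.log (1 + s / x₀) + Real.log (1 + s / x₀), fun x hx => ?_⟩
  have hx' : 0 < x := hx₀.trans_le hx
  have h1 := lgG_le hs hx'
  have h2 := le_lgG hs hx'
  have e3 : Real.log (1 + s / x) = Real.log (x + s) - Real.log x := by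
    rw [← Real.log_div (by positivity) (by positivity)]; congr 1; field_simp
  have h4 : Real.log (1 + s / x) ≤ Real.log (1 + s / x₀) := by gcongr
  have h5 : 0 ≤ Real.log (1 + s / x₀) := Real.log_nonneg (by
    have : 0 < s / x₀ := by positivity
    linarith)
  have h6 := mul_le_mul_of_nonneg_left h4 hs.le
  have h7 := mul_nonneg hs.le h5
  rw [e3] at h6
  rw [abs_le]
  constructor <;> linarith

/-! ### Bounds for the eigenvalues -/

/-- The logarithm of the prefactor `√(ω₂(β+e_x) ω₂(β+e_y)) / ω₂(β)`, where `σ = 1/p_x`,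
`τ = 1/p_y`, `A = (β_x+1)/p_x`, `B = (β_y+1)/p_y`, `S` is the sum of `(β_i+1)/p_i` over the block
containing `x` and `y`, and `Z` is the sum of all `s_k(β)` plus `1`. -/
noncomputable def lP (a σ τ A B S Z : ℝ) : ℝ :=
  (lgG σ A + lgG τ B - lgG σ S - lgG τ S + lgG (σ / a) (S / a) + lgG (τ / a) (S / a)
    - lgG (σ / a) Z - lgG (τ / a) Z) / 2

/-- The logarithm of `ω₂(β) ω₂(β+e_x+e_y) / (ω₂(β+e_x) ω₂(β+e_y))`, with the notation of `lP`: only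
the `Γ`-factors in `S` and `Z` contribute. -/
noncomputable def eE (a σ τ S Z : ℝ) : ℝ :=
  lgD (σ / a) (τ / a) (S / a) - lgD σ τ S - lgD (σ / a) (τ / a) Z

/-- The prefactor is comparable to `(A/S)^{σ/2} (B/S)^{τ/2} (S/Z)^{(σ+τ)/(2a)}`. -/
theorem lP_approx {a σ τ x₀ : ℝ} (ha : 0 < a) (hσ : 0 < σ) (hτ : 0 < τ) (hx₀ : 0 < x₀) :
    ∃ C, ∀ A B S Z, x₀ ≤ A → x₀ ≤ B → x₀ ≤ S → x₀ ≤ Z →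
      |lP a σ τ A B S Z - (σ * (Real.log A - Real.log S) / 2 + τ * (Real.log B - Real.log S) / 2
        + (σ + τ) / (2 * a) * (Real.log S - Real.log Z))| ≤ C := by
  obtain ⟨C1, h1⟩ := lgG_approx hσ hx₀
  obtain ⟨C2, h2⟩ := lgG_approx hτ hx₀
  obtain ⟨C3, h3⟩ := lgG_approx (show 0 < σ / a by positivity) (show 0 < min x₀ (x₀ / a) by positivity)
  obtain ⟨C4, h4⟩ := lgG_approx (show 0 < τ / a by positivity) (show 0 < min x₀ (x₀ / a) by positivity)
  refine ⟨C1 + C2 + C3 + C4 + |(σ + τ) / (2 * a) * Real.log a|, fun A B S Z hA hB hS hZ => ?_⟩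
  have hS' : min x₀ (x₀ / a) ≤ S / a := (min_le_right _ _).trans (by gcongr)
  have hZ' : min x₀ (x₀ / a) ≤ Z := (min_le_left _ _).trans hZ
  have k1 := abs_le.1 (h1 A hA)
  have k2 := abs_le.1 (h2 B hB)
  have k3 := abs_le.1 (h1 S hS)
  have k4 := abs_le.1 (h2 S hS)
  have k5 := abs_le.1 (h3 _ hS')
  have k6 := abs_le.1 (h4 _ hS')
  have k7 := abs_le.1 (h3 _ hZ')
  have k8 := abs_le.1 (h4 _ hZ')
  have e : Real.log (S / a) = Real.log S - Real.log a :=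
    Real.log_div (hx₀.trans_le hS).ne' ha.ne'
  rw [e] at k5 k6
  have e2 : (σ + τ) / (2 * a) = (σ / a + τ / a) / 2 := by field_simp
  have k9 := abs_le.1 (le_refl |(σ + τ) / (2 * a) * Real.log a|)
  rw [e2] at k9 ⊢
  unfold lP
  rw [abs_le]
  constructor <;> linarith

theorem abs_one_sub_exp_le (x : ℝ) : |1 - Real.exp x| ≤ |x| * Real.exp |x| := by
  rw [abs_le]
  have h1 : |x| ≤ |x| * Real.exp |x| :=
    le_mul_of_one_le_right (abs_nonneg _) (Real.one_le_exp (abs_nonneg _))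
  have h2 := Real.add_one_le_exp x
  have h3 := Real.add_one_le_exp (-|x|)
  have h4 : Real.exp x ≤ Real.exp |x| := Real.exp_le_exp.2 (le_abs_self x)
  have h5 : Real.exp (-|x|) * Real.exp |x| = 1 := by rw [← Real.exp_add]; simp
  have h6 := mul_le_mul_of_nonneg_right h3 (Real.exp_pos |x|).le
  have h7 := neg_abs_le x
  constructor <;> nlinarith

theorem lgD_le_div {s t x₀ x : ℝ} (hs : 0 < s) (ht : 0 < t) (hx₀ : 0 < x₀) (hx : x₀ ≤ x) :
    lgD s t x ≤ s * t * (1 + 1 / x₀) / x := by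
  have hx' := hx₀.trans_le hx
  refine (lgD_le hs ht hx').trans ?_
  gcongr

/-- A bound `|E| ≤ C / X` with `X ≥ x₀` controls `|1 - exp E|` by a multiple of `1 / X`. -/
theorem one_sub_exp_bound {C x₀ : ℝ} (hC : 0 < C) (hx₀ : 0 < x₀) :
    ∃ C', ∀ E X, x₀ ≤ X → |E| ≤ C / X → |1 - Real.exp E| ≤ Real.exp (C' - Real.log X) := by
  refine ⟨Real.log C + C / x₀, fun E X hX hE => ?_⟩
  have hX' := hx₀.trans_le hX
  have h1 : C / X ≤ C / x₀ := by gcongr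
  calc _ ≤ |E| * Real.exp |E| := abs_one_sub_exp_le E
    _ ≤ C / X * Real.exp (C / x₀) := by
        gcongr
        exact hE.trans h1
    _ = _ := by
        rw [Real.exp_sub, Real.exp_add, Real.exp_log hC, Real.exp_log hX']
        ring

/-- The upper bound `μ ≲ S⁻¹ (S/Z)^{(σ+τ)/(2a)}`. -/
theorem upper_general {a σ τ x₀ : ℝ} (ha : 0 < a) (hσ : 0 < σ) (hτ : 0 < τ) (hx₀ : 0 < x₀) :
    ∃ C, ∀ A B S Z, x₀ ≤ A → x₀ ≤ B → A ≤ S → B ≤ S → x₀ ≤ Z → S / a ≤ Z →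
      Real.exp (lP a σ τ A B S Z) * |1 - Real.exp (eE a σ τ S Z)| ≤
        Real.exp (C - Real.log S + (σ + τ) / (2 * a) * (Real.log S - Real.log Z)) := by
  obtain ⟨C1, h1⟩ := lP_approx ha hσ hτ hx₀
  set D1 := σ / a * (τ / a) * (1 + 1 / (x₀ / a)) * a with hD1
  set D2 := σ * τ * (1 + 1 / x₀) with hD2
  have hD1p : 0 < D1 := by positivity
  have hD2p : 0 < D2 := by positivity
  obtain ⟨C2, h2⟩ := one_sub_exp_bound (show 0 < D1 + D2 + D1 by positivity) hx₀
  refine ⟨C1 + C2, fun A B S Z hA hB hAS hBS hZ hSZ => ?_⟩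
  have hS := hA.trans hAS
  have hA' := hx₀.trans_le hA
  have hB' := hx₀.trans_le hB
  have hS' := hx₀.trans_le hS
  have hZ' := hx₀.trans_le hZ
  have hSa : x₀ / a ≤ S / a := by gcongr
  have e1 : lgD (σ / a) (τ / a) (S / a) ≤ D1 / S := by
    refine (lgD_le_div (by positivity) (by positivity) (by positivity) hSa).trans (le_of_eq ?_)
    rw [hD1]
    field_simp
  have e3 : lgD (σ / a) (τ / a) Z ≤ D1 / S := by
    refine (lgD_le_div (by positivity) (by positivity) (by positivity) (hSa.trans hSZ)).trans ?_
    calc _ ≤ σ / a * (τ / a) * (1 + 1 / (x₀ / a)) / (S / a) := by gcongr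
      _ = _ := by
        rw [hD1]
        field_simp
  have e2 : lgD σ τ S ≤ D2 / S := lgD_le_div hσ hτ hx₀ hS
  have p1 := lgD_pos (show 0 < σ / a by positivity) (show 0 < τ / a by positivity)
    (show 0 < S / a by positivity)
  have p2 := lgD_pos hσ hτ hS'
  have p3 := lgD_pos (show 0 < σ / a by positivity) (show 0 < τ / a by positivity) hZ'
  have hE : |eE a σ τ S Z| ≤ (D1 + D2 + D1) / S := by
    rw [add_div, add_div, abs_le]
    unfold eE
    constructor <;> linarith
  have h3 := h2 _ _ hS hE
  have h4 := (abs_le.1 (h1 A B S Z hA hB hS hZ)).2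
  have l1 : σ * (Real.log A - Real.log S) ≤ 0 :=
    mul_nonpos_of_nonneg_of_nonpos hσ.le (sub_nonpos.2 (Real.log_le_log hA' hAS))
  have l2 : τ * (Real.log B - Real.log S) ≤ 0 :=
    mul_nonpos_of_nonneg_of_nonpos hτ.le (sub_nonpos.2 (Real.log_le_log hB' hBS))
  calc _ ≤ Real.exp (C1 + (σ + τ) / (2 * a) * (Real.log S - Real.log Z)) *
        Real.exp (C2 - Real.log S) := by
        gcongr
        linarith
    _ = _ := by
        rw [← Real.exp_add]
        congr 1
        ring

/-- For `a = 1` the two second differences at `S` cancel, and `μ ≲ Z⁻¹`. -/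
theorem upper_one {σ τ x₀ : ℝ} (hσ : 0 < σ) (hτ : 0 < τ) (hx₀ : 0 < x₀) :
    ∃ C, ∀ A B S Z, x₀ ≤ A → x₀ ≤ B → A ≤ S → B ≤ S → S ≤ Z →
      Real.exp (lP 1 σ τ A B S Z) * |1 - Real.exp (eE 1 σ τ S Z)| ≤
        Real.exp (C - Real.log Z) := by
  obtain ⟨C1, h1⟩ := lP_approx one_pos hσ hτ hx₀
  obtain ⟨C2, h2⟩ := one_sub_exp_bound (show 0 < σ * τ * (1 + 1 / x₀) by positivity) hx₀
  refine ⟨C1 + C2, fun A B S Z hA hB hAS hBS hSZ => ?_⟩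
  have hS := hA.trans hAS
  have hZ := hS.trans hSZ
  have hA' := hx₀.trans_le hA
  have hB' := hx₀.trans_le hB
  have hS' := hx₀.trans_le hS
  have hZ' := hx₀.trans_le hZ
  have hE : |eE 1 σ τ S Z| ≤ σ * τ * (1 + 1 / x₀) / Z := by
    have : eE 1 σ τ S Z = - lgD σ τ Z := by simp [eE]
    rw [this, abs_neg, abs_of_pos (lgD_pos hσ hτ hZ')]
    exact lgD_le_div hσ hτ hx₀ hZ
  have h3 := h2 _ _ hZ hE
  have h4 := (abs_le.1 (h1 A B S Z hA hB hS hZ)).2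
  have l1 : σ * (Real.log A - Real.log S) ≤ 0 :=
    mul_nonpos_of_nonneg_of_nonpos hσ.le (sub_nonpos.2 (Real.log_le_log hA' hAS))
  have l2 : τ * (Real.log B - Real.log S) ≤ 0 :=
    mul_nonpos_of_nonneg_of_nonpos hτ.le (sub_nonpos.2 (Real.log_le_log hB' hBS))
  have l3 : (σ + τ) / (2 * 1) * (Real.log S - Real.log Z) ≤ 0 :=
    mul_nonpos_of_nonneg_of_nonpos (by positivity) (sub_nonpos.2 (Real.log_le_log hS' hSZ))
  calc _ ≤ Real.exp C1 * Real.exp (C2 - Real.log Z) := by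
        gcongr
        linarith
    _ = _ := by
        rw [← Real.exp_add]
        congr 1
        ring

/-- Where the first block dominates (`4 T ≤ S`), the exponent is at most `-στ/(2S)`. -/
theorem lower_cone {a σ τ : ℝ} (ha : 0 < a) (hσ : 0 < σ) (hτ : 0 < τ) :
    ∃ S₁ > 0, ∃ c > 0, ∀ S T, S₁ ≤ S → 0 ≤ T → 4 * T ≤ S →
      c / S ≤ |1 - Real.exp (eE a σ τ S (S / a + T + 1))| := by
  set C := σ * τ * (1 + σ / a + τ / a) + σ * τ * (1 + σ + τ) + σ * τ / a * (a + σ + τ) with hC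
  have hCp : 0 < C := by positivity
  refine ⟨4 * C / (σ * τ) + 1, by positivity, σ * τ / 2 / (1 + σ * τ), by positivity,
    fun S T hS hT hTS => ?_⟩
  have hS1 : 1 ≤ S := le_trans (by
    have : 0 < 4 * C / (σ * τ) := by positivity
    linarith) hS
  have hS0 : 0 < S := by linarith
  have hSC : 4 * C ≤ σ * τ * S := by
    have : 4 * C / (σ * τ) ≤ S := by linarith
    rw [div_le_iff₀ (by positivity)] at this
    linarith
  have k1 := (abs_le.1 (lgD_approx (show 0 < σ / a by positivity) (show 0 < τ / a by positivity)
    (show 0 < S / a by positivity))).2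
  have k2 := (abs_le.1 (lgD_approx hσ hτ hS0)).1
  have k3 := le_lgD (show 0 < σ / a by positivity) (show 0 < τ / a by positivity)
    (show 0 < S / a + T + 1 by positivity)
  have e1 : σ / a * (τ / a) / (S / a) = σ * τ / a / S := by field_simp
  have e2 : σ / a * (τ / a) * (1 + σ / a + τ / a) / (S / a) ^ 2 =
    σ * τ * (1 + σ / a + τ / a) / S ^ 2 := by field_simp
  have e3 : σ / a * (τ / a) / (S / a + T + 1 + σ / a + τ / a) =
      σ * τ / a / (S + a * T + (a + σ + τ)) := by
    field_simp
    ring_nf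
  rw [e1, e2] at k1
  rw [e3] at k3
  have k4 : σ * τ / a / S - σ * τ / a / (S + a * T + (a + σ + τ)) ≤
      σ * τ / a * (a * T + (a + σ + τ)) / S ^ 2 := by
    rw [div_sub_div _ _ (by positivity) (by positivity), sq]
    have : σ * τ / a * (S + a * T + (a + σ + τ)) - S * (σ * τ / a) =
        σ * τ / a * (a * T + (a + σ + τ)) := by
      ring
    rw [this]
    gcongr
    nlinarith [mul_nonneg ha.le hT]
  have k5 : σ * τ / a * (a * T + (a + σ + τ)) / S ^ 2 =
      σ * τ * T / S ^ 2 + σ * τ / a * (a + σ + τ) / S ^ 2 := by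
    field_simp
  have k6 : σ * τ * T / S ^ 2 ≤ σ * τ / S / 4 := by
    rw [div_div, div_le_div_iff₀ (by positivity) (by positivity)]
    have := mul_le_mul_of_nonneg_left hTS (show 0 ≤ σ * τ * S by positivity)
    nlinarith
  have k7 : C / S ^ 2 ≤ σ * τ / S / 4 := by
    rw [div_div, div_le_div_iff₀ (by positivity) (by positivity)]
    have := mul_le_mul_of_nonneg_right hSC hS0.le
    nlinarith
  have k8 : C / S ^ 2 = σ * τ * (1 + σ / a + τ / a) / S ^ 2 + σ * τ * (1 + σ + τ) / S ^ 2
      + σ * τ / a * (a + σ + τ) / S ^ 2 := by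
    rw [hC]
    ring
  have hE : eE a σ τ S (S / a + T + 1) ≤ -(σ * τ / 2 / S) := by
    unfold eE
    have : σ * τ / 2 / S = σ * τ / S / 2 := by ring
    rw [this]
    linarith
  have hu : 0 < σ * τ / 2 / S := by positivity
  have h1 : Real.exp (eE a σ τ S (S / a + T + 1)) ≤ 1 / (1 + σ * τ / 2 / S) := by
    refine (Real.exp_le_exp.2 hE).trans ?_
    rw [Real.exp_neg, ← one_div]
    refine one_div_le_one_div_of_le (by positivity) ?_
    linarith [Real.add_one_le_exp (σ * τ / 2 / S)]
  refine le_trans ?_ (le_abs_self _)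
  refine le_trans ?_ (sub_le_sub_left h1 1)
  have h2 : 1 - 1 / (1 + σ * τ / 2 / S) = σ * τ / 2 / (S + σ * τ / 2) := by
    field_simp
    ring
  rw [h2, div_div]
  refine div_le_div_of_nonneg_left (by positivity) (by positivity) ?_
  nlinarith [mul_pos hσ hτ]

/-- When `a ≠ 1` and `S` is large, the exponent stays away from `0` as `Z → ∞`: its limit is
`στ (1/a - 1)/S + O(1/S²)`, and the contribution of `Z` tends to `0`. -/
theorem lower_fixed {a σ τ : ℝ} (ha : 0 < a) (ha1 : a ≠ 1) (hσ : 0 < σ) (hτ : 0 < τ) :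
    ∃ S₁ > 0, ∀ S, S₁ ≤ S → ∃ δ > 0, ∃ Z₀ > 0, ∀ Z, Z₀ ≤ Z →
      δ ≤ |1 - Real.exp (eE a σ τ S Z)| := by
  set C := σ * τ * (1 + σ / a + τ / a) + σ * τ * (1 + σ + τ) with hC
  have hCp : 0 < C := by positivity
  have hr : 0 < |1 / a - 1| := by
    rw [abs_pos, sub_ne_zero]
    intro h
    apply ha1
    field_simp at h
    exact h.symm
  refine ⟨2 * C / (σ * τ * |1 / a - 1|), by positivity, fun S hS => ?_⟩
  have hS0 : 0 < S := lt_of_lt_of_le (by positivity) hS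
  set η := σ * τ * |1 / a - 1| / S / 2 with hη
  have hηp : 0 < η := by positivity
  have hE0 : η ≤ |lgD (σ / a) (τ / a) (S / a) - lgD σ τ S| := by
    have k1 := lgD_approx (show 0 < σ / a by positivity) (show 0 < τ / a by positivity)
      (show 0 < S / a by positivity)
    have k2 := lgD_approx hσ hτ hS0
    have e1 : σ / a * (τ / a) / (S / a) = σ * τ / a / S := by field_simp
    have e2 : σ / a * (τ / a) * (1 + σ / a + τ / a) / (S / a) ^ 2 =
      σ * τ * (1 + σ / a + τ / a) / S ^ 2 := by field_simp
    rw [e1, e2] at k1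
    have k3 : C / S ^ 2 ≤ η := by
      rw [div_le_iff₀ (by positivity)] at hS
      rw [hη, div_div, div_le_div_iff₀ (by positivity) (by positivity)]
      nlinarith
    have k4 : C / S ^ 2 = σ * τ * (1 + σ / a + τ / a) / S ^ 2 + σ * τ * (1 + σ + τ) / S ^ 2 := by
      rw [hC]
      ring
    have k5 : |σ * τ / a / S - σ * τ / S| = 2 * η := by
      have : σ * τ / a / S - σ * τ / S = σ * τ / S * (1 / a - 1) := by ring
      rw [this, abs_mul, abs_of_pos (show 0 < σ * τ / S by positivity), hη]
      ring
    have k6 : |σ * τ / a / S - σ * τ / S| ≤ |lgD (σ / a) (τ / a) (S / a) - lgD σ τ S|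
        + |lgD (σ / a) (τ / a) (S / a) - σ * τ / a / S| + |lgD σ τ S - σ * τ / S| := by
      set u := lgD (σ / a) (τ / a) (S / a)
      set v := lgD σ τ S
      rw [show σ * τ / a / S - σ * τ / S = (u - v) - (u - σ * τ / a / S) + (v - σ * τ / S) by ring]
      exact (abs_add_le _ _).trans (by gcongr; exact abs_sub _ _)
    linarith
  refine ⟨1 - Real.exp (-(η / 2)), ?_, max 1 (σ / a * (τ / a) * 2 * 2 / η), by positivity,
    fun Z hZ => ?_⟩
  · have : Real.exp (-(η / 2)) < 1 :=
      (Real.exp_lt_exp.2 (by linarith)).trans_eq Real.exp_zero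
    linarith
  have hZ1 : 1 ≤ Z := (le_max_left _ _).trans hZ
  have hZ2 : σ / a * (τ / a) * 2 * 2 / η ≤ Z := (le_max_right _ _).trans hZ
  have hZ0 : 0 < Z := by linarith
  have k3 := lgD_le_div (show 0 < σ / a by positivity) (show 0 < τ / a by positivity) one_pos hZ1
  have k3p := lgD_pos (show 0 < σ / a by positivity) (show 0 < τ / a by positivity) hZ0
  have k4 : lgD (σ / a) (τ / a) Z ≤ η / 2 := by
    refine k3.trans ?_
    rw [div_le_iff₀ hηp] at hZ2
    rw [div_le_iff₀ hZ0]
    linarith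
  have hE : eE a σ τ S Z = lgD (σ / a) (τ / a) (S / a) - lgD σ τ S - lgD (σ / a) (τ / a) Z := rfl
  rcases le_abs.1 hE0 with h | h
  · have h1 : η / 2 ≤ eE a σ τ S Z := by linarith
    have h2 := Real.exp_le_exp.2 h1
    have h3 := Real.add_one_le_exp (η / 2)
    have h4 := Real.add_one_le_exp (-(η / 2))
    rw [abs_sub_comm]
    exact le_trans (by linarith) (le_abs_self _)
  · have h1 : eE a σ τ S Z ≤ -(η / 2) := by linarith
    have h2 := Real.exp_le_exp.2 h1
    exact le_trans (by linarith) (le_abs_self _)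

/-- The bound of `lower_cone` for the whole eigenvalue: if moreover `A` and `B` are comparable to
`S`, the prefactor `exp lP` is bounded below. -/
theorem lower_cone_mu {a σ τ x₀ r : ℝ} (ha : 0 < a) (hσ : 0 < σ) (hτ : 0 < τ) (hx₀ : 0 < x₀)
    (hr : 0 < r) :
    ∃ S₁ > 0, ∃ c > 0, ∀ A B S T, x₀ ≤ A → x₀ ≤ B → r * S ≤ A → r * S ≤ B → S₁ ≤ S → 0 ≤ T →
      4 * T ≤ S → c / S ≤ Real.exp (lP a σ τ A B S (S / a + T + 1)) *
        |1 - Real.exp (eE a σ τ S (S / a + T + 1))| := by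
  obtain ⟨S₁, hS₁, c, hc, h1⟩ := lower_cone ha hσ hτ
  obtain ⟨C, h2⟩ := lP_approx ha hσ hτ (lt_min hx₀ one_pos)
  refine ⟨max S₁ (max x₀ 1), lt_max_of_lt_left hS₁,
    Real.exp (σ * Real.log r / 2 + τ * Real.log r / 2 -
      (σ + τ) / (2 * a) * Real.log (1 / a + 2) - C) * c, by positivity,
    fun A B S T hA hB hSA hSB hS hT hTS => ?_⟩
  simp only [max_le_iff] at hS
  obtain ⟨hS1, hSx, hS2⟩ := hS
  have hS0 : 0 < S := by linarith
  set Z := S / a + T + 1 with hZ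
  have hSa : 0 < S / a := by positivity
  have hZ1 : 1 ≤ Z := by linarith
  have k1 := h1 S T hS1 hT hTS
  have k2 := (abs_le.1 (h2 A B S Z ((min_le_left _ _).trans hA) ((min_le_left _ _).trans hB)
    ((min_le_left _ _).trans hSx) ((min_le_right _ _).trans hZ1))).1
  have l1 : Real.log r + Real.log S ≤ Real.log A := by
    rw [← Real.log_mul hr.ne' hS0.ne']
    exact Real.log_le_log (by positivity) hSA
  have l2 : Real.log r + Real.log S ≤ Real.log B := by
    rw [← Real.log_mul hr.ne' hS0.ne']
    exact Real.log_le_log (by positivity) hSB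
  have l3 : Real.log Z ≤ Real.log (1 / a + 2) + Real.log S := by
    rw [← Real.log_mul (by positivity) hS0.ne']
    refine Real.log_le_log (by linarith) ?_
    have : (1 / a + 2) * S = S / a + 2 * S := by ring
    linarith
  have m1 := mul_le_mul_of_nonneg_left l1 hσ.le
  have m2 := mul_le_mul_of_nonneg_left l2 hτ.le
  have m3 := mul_le_mul_of_nonneg_left l3 (show 0 ≤ (σ + τ) / (2 * a) by positivity)
  rw [mul_div_assoc]
  refine mul_le_mul (Real.exp_le_exp.2 ?_) k1 (by positivity) (Real.exp_pos _).le
  linarith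

/-- With the first block frozen and `S` large, the eigenvalue decays no faster than a
multiple of `Z ^ (-(σ + τ) / (2 a))` as `Z → ∞`. -/
theorem lower_fixed_mu {a σ τ x₀ : ℝ} (ha : 0 < a) (ha1 : a ≠ 1) (hσ : 0 < σ) (hτ : 0 < τ)
    (hx₀ : 0 < x₀) :
    ∃ S₁ > 0, ∀ A B S, x₀ ≤ A → x₀ ≤ B → S₁ ≤ S → ∃ c, ∃ Z₀ > 0, ∀ Z, Z₀ ≤ Z →
      Real.exp (c - (σ + τ) / (2 * a) * Real.log Z) ≤
        Real.exp (lP a σ τ A B S Z) * |1 - Real.exp (eE a σ τ S Z)| := by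
  obtain ⟨S₁, hS₁, h1⟩ := lower_fixed ha ha1 hσ hτ
  obtain ⟨C, h2⟩ := lP_approx ha hσ hτ hx₀
  refine ⟨max S₁ x₀, lt_max_of_lt_left hS₁, fun A B S hA hB hS => ?_⟩
  obtain ⟨δ, hδ, Z₀, hZ₀, h3⟩ := h1 S ((le_max_left _ _).trans hS)
  refine ⟨σ * (Real.log A - Real.log S) / 2 + τ * (Real.log B - Real.log S) / 2
        + (σ + τ) / (2 * a) * Real.log S - C + Real.log δ, max Z₀ x₀, lt_max_of_lt_left hZ₀,
        fun Z hZ => ?_⟩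
  have k1 := h3 Z ((le_max_left _ _).trans hZ)
  have k2 := (abs_le.1 (h2 A B S Z hA hB ((le_max_right _ _).trans hS)
    ((le_max_right _ _).trans hZ))).1
  calc _ = Real.exp (σ * (Real.log A - Real.log S) / 2 + τ * (Real.log B - Real.log S) / 2
        + (σ + τ) / (2 * a) * (Real.log S - Real.log Z) - C) * δ := by
        nth_rewrite 2 [← Real.exp_log hδ]
        rw [← Real.exp_add]
        congr 1
        ring
    _ ≤ _ := mul_le_mul (Real.exp_le_exp.2 (by linarith)) k1 hδ.le (Real.exp_pos _).le

/-! ### Summability over multi-indices -/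

theorem summable_pi_prod {ι : Type*} [Fintype ι] [DecidableEq ι] (f : ι → ℕ → ℝ)
    (hf0 : ∀ i n, 0 ≤ f i n) (hf : ∀ i, Summable (f i)) :
    Summable (fun α : ι → ℕ => ∏ i, f i (α i)) := by
  refine summable_of_sum_le (c := ∏ i, ∑' n, f i n)
    (fun α => Finset.prod_nonneg fun i _ => hf0 i _) fun u => ?_
  calc _ ≤ ∑ α ∈ Fintype.piFinset (fun i => u.image (fun α => α i)), ∏ i, f i (α i) := by
        refine Finset.sum_le_sum_of_subset_of_nonneg (fun α hα => ?_)
          fun α _ _ => Finset.prod_nonneg fun i _ => hf0 i _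
        rw [Fintype.mem_piFinset]
        exact fun i => Finset.mem_image_of_mem _ hα
    _ = ∏ i, ∑ n ∈ u.image (fun α => α i), f i n := by rw [Finset.prod_univ_sum]
    _ ≤ _ := Finset.prod_le_prod (fun i _ => Finset.sum_nonneg fun n _ => hf0 i n)
        fun i _ => (hf i).sum_le_tsum _ fun n _ => hf0 i n

/-- A nonnegative function dominated by a multiple of `∏ (α_i + 1)^{-e_i}` with all `e_i > 1` is
summable; the bound is stated logarithmically. -/
theorem summable_exp_log {ι : Type*} [Fintype ι] [DecidableEq ι] (e : ι → ℝ) (he : ∀ i, 1 < e i)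
    (C : ℝ) (f : (ι → ℕ) → ℝ) (hf0 : ∀ α, 0 ≤ f α)
    (hf : ∀ α, f α ≤ Real.exp (C - ∑ i, e i * Real.log ((α i : ℝ) + 1))) :
    Summable f := by
  have h := summable_pi_prod (fun i n => ((n : ℝ) + 1) ^ (-e i)) (fun i n => by positivity)
    fun i => by
      have := (Real.summable_nat_rpow (p := - e i)).2 (by linarith [he i])
      simpa using (summable_nat_add_iff 1).2 this
  refine Summable.of_nonneg_of_le hf0 (fun α => ?_) (h.mul_left (Real.exp C))
  refine (hf α).trans (le_of_eq ?_)
  rw [sub_eq_add_neg, Real.exp_add, ← Finset.sum_neg_distrib, Real.exp_sum]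
  congr 1
  refine Finset.prod_congr rfl fun i _ => ?_
  rw [Real.rpow_def_of_pos (by positivity)]
  congr 1
  ring

/-- A nonnegative function whose sums over boxes escaping to infinity stay bounded below is not
summable. -/
theorem not_summable_of_boxes {ι : Type*} [Fintype ι] [DecidableEq ι] (f : (ι → ℕ) → ℝ)
    (I : ℕ → ι → Finset ℕ) (i₀ : ι) (hI : ∀ n, ∀ k ∈ I n i₀, n ≤ k) (v : ℕ → ℝ) (c : ℝ) (hc : 0 < c)
    (n₀ : ℕ) (hv : ∀ n, n₀ ≤ n → ∀ α, (∀ i, α i ∈ I n i) → v n ≤ f α)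
    (hcv : ∀ n, n₀ ≤ n → c ≤ (∏ i, ((I n i).card : ℝ)) * v n) : ¬ Summable f := by
  intro h
  obtain ⟨s, hs⟩ := summable_iff_vanishing_norm.1 h c hc
  set n := max n₀ (s.sup (fun α => α i₀) + 1) with hn
  have h1 := hs (Fintype.piFinset (I n)) (by
    rw [Finset.disjoint_left]
    intro α hα hαs
    have h2 := hI n _ (Fintype.mem_piFinset.1 hα i₀)
    have h3 : α i₀ ≤ s.sup (fun α => α i₀) := Finset.le_sup (f := fun α : ι → ℕ => α i₀) hαs
    have h4 : s.sup (fun α => α i₀) + 1 ≤ n := le_max_right _ _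
    omega)
  have hn0 : n₀ ≤ n := le_max_left _ _
  have h2 := Finset.card_nsmul_le_sum (Fintype.piFinset (I n)) f (v n)
    fun α hα => hv n hn0 α (Fintype.mem_piFinset.1 hα)
  rw [Fintype.card_piFinset, nsmul_eq_mul, Nat.cast_prod] at h2
  have h3 := hcv n hn0
  have h4 := le_abs_self (∑ α ∈ Fintype.piFinset (I n), f α)
  rw [Real.norm_eq_abs] at h1
  linarith

/-! ### The eigenvalue through Gamma ratios -/

/-- `∑_j (α_{jk}+1)/p_{jk}`. -/
noncomputable def blockSum {K : ℕ} {m : Fin K → ℕ} (p : (k : Fin K) → Fin (m k) → ℝ)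
    (α : (Σ k : Fin K, Fin (m k)) → ℕ) (k : Fin K) : ℝ :=
  ∑ j, ((α ⟨k, j⟩ : ℝ) + 1) / p k j

/-- `∑_{k ≠ k₀} s_k(α)`. -/
noncomputable def tailSum {K : ℕ} {m : Fin K → ℕ} (p : (k : Fin K) → Fin (m k) → ℝ)
    (a : Fin K → ℝ) (k₀ : Fin K) (α : (Σ k : Fin K, Fin (m k)) → ℕ) : ℝ :=
  ∑ k ∈ Finset.univ.erase k₀, blockSum p α k / a k

section
variable {K : ℕ} {m : Fin K → ℕ} {p : (k : Fin K) → Fin (m k) → ℝ} {a : Fin K → ℝ}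

theorem blockSum_pos (hm : ∀ k, 0 < m k) (hp : ∀ k j, 0 < p k j)
    (α : (Σ k : Fin K, Fin (m k)) → ℕ) (k : Fin K) : 0 < blockSum p α k := by
  refine Finset.sum_pos (fun j _ => ?_) ⟨⟨0, hm k⟩, Finset.mem_univ _⟩
  have := hp k j
  positivity

theorem tailSum_nonneg (hm : ∀ k, 0 < m k) (hp : ∀ k j, 0 < p k j) (ha : ∀ k, 0 < a k)
    (k₀ : Fin K) (α : (Σ k : Fin K, Fin (m k)) → ℕ) : 0 ≤ tailSum p a k₀ α :=
  Finset.sum_nonneg fun k _ => (div_pos (blockSum_pos hm hp α k) (ha k)).le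

/-- Splits `ω₂` into a positive factor not involving the two coordinates and the `Γ`-factors which do;
the denominator `∑ s_k` is absorbed through `s Γ(s) = Γ(s+1)`. -/
theorem omegaTwo_factor (hm : ∀ k, 0 < m k) (hp : ∀ k j, 0 < p k j) (ha : ∀ k, 0 < a k)
    (k₀ : Fin K) (i j : Fin (m k₀)) (hij : i ≠ j) :
    ∃ R : ((Σ k : Fin K, Fin (m k)) → ℕ) → ℝ, (∀ α, 0 < R α) ∧
      (∀ α β, (∀ w, w ≠ ⟨k₀, i⟩ → w ≠ ⟨k₀, j⟩ → α w = β w) → R α = R β) ∧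
      ∀ α, omegaTwo K m p a α = R α *
        (Real.Gamma (((α ⟨k₀, i⟩ : ℝ) + 1) / p k₀ i) * Real.Gamma (((α ⟨k₀, j⟩ : ℝ) + 1) / p k₀ j) *
          Real.Gamma (blockSum p α k₀ / a k₀) /
          (Real.Gamma (blockSum p α k₀) *
            Real.Gamma (blockSum p α k₀ / a k₀ + tailSum p a k₀ α + 1))) := by
  have hG : ∀ (α : (Σ k : Fin K, Fin (m k)) → ℕ) k j,
      0 < Real.Gamma (((α ⟨k, j⟩ : ℝ) + 1) / p k j) := fun α k j =>
    Real.Gamma_pos_of_pos (by have := hp k j; positivity)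
  have hB : ∀ (α : (Σ k : Fin K, Fin (m k)) → ℕ) k, 0 < blockSum p α k := blockSum_pos hm hp
  refine ⟨fun α => (Real.pi ^ (∑ k, m k) / ∏ k, ∏ j, p k j) * (1 / ∏ k, a k) *
    ((∏ l ∈ (Finset.univ.erase i).erase j, Real.Gamma (((α ⟨k₀, l⟩ : ℝ) + 1) / p k₀ l)) *
    (∏ k ∈ Finset.univ.erase k₀, (∏ l, Real.Gamma (((α ⟨k, l⟩ : ℝ) + 1) / p k l)) /
      Real.Gamma (blockSum p α k)) *
    ∏ k ∈ Finset.univ.erase k₀, Real.Gamma (blockSum p α k / a k)), fun α => ?_, fun α β h => ?_,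
    fun α => ?_⟩
  · have h1 : 0 < ∏ k, ∏ j, p k j := Finset.prod_pos fun k _ => Finset.prod_pos fun j _ => hp k j
    have h2 : 0 < ∏ k, a k := Finset.prod_pos fun k _ => ha k
    have h3 : 0 < ∏ l ∈ (Finset.univ.erase i).erase j,
      Real.Gamma (((α ⟨k₀, l⟩ : ℝ) + 1) / p k₀ l) := Finset.prod_pos fun l _ => hG α k₀ l
    have h4 : 0 < ∏ k ∈ Finset.univ.erase k₀,
        (∏ l, Real.Gamma (((α ⟨k, l⟩ : ℝ) + 1) / p k l)) / Real.Gamma (blockSum p α k) :=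
      Finset.prod_pos fun k _ => div_pos (Finset.prod_pos fun l _ => hG α k l)
        (Real.Gamma_pos_of_pos (hB α k))
    have h5 : 0 < ∏ k ∈ Finset.univ.erase k₀, Real.Gamma (blockSum p α k / a k) :=
      Finset.prod_pos fun k _ => Real.Gamma_pos_of_pos (div_pos (hB α k) (ha k))
    have := Real.pi_pos
    positivity
  · have hk : ∀ k ∈ Finset.univ.erase k₀, ∀ l, α ⟨k, l⟩ = β ⟨k, l⟩ := by
      intro k hk l
      have hk' := (Finset.mem_erase.1 hk).1
      apply h <;> · intro h'; exact hk' (congrArg Sigma.fst h')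
    have hb : ∀ k ∈ Finset.univ.erase k₀, blockSum p α k = blockSum p β k := fun k hk' =>
      Finset.sum_congr rfl fun l _ => by rw [hk k hk' l]
    dsimp only
    congr 2
    · congr 1
      · refine Finset.prod_congr rfl fun l hl => ?_
        rw [Finset.mem_erase, Finset.mem_erase] at hl
        rw [h ⟨k₀, l⟩ (fun e => hl.2.1 (by simpa using e)) (fun e => hl.1 (by simpa using e))]
      · refine Finset.prod_congr rfl fun k hk' => ?_
        rw [hb k hk']
        congr 1
        exact Finset.prod_congr rfl fun l _ => by rw [hk k hk' l]
    · exact Finset.prod_congr rfl fun k hk' => by rw [hb k hk']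
  · have e1 : ∀ k, ∑ j, ((α ⟨k, j⟩ : ℝ) + 1) / (a k * p k j) = blockSum p α k / a k := by
      intro k
      rw [blockSum, Finset.sum_div]
      refine Finset.sum_congr rfl fun j _ => ?_
      rw [div_div, mul_comm]
    have e2 : ∑ k, blockSum p α k / a k = blockSum p α k₀ / a k₀ + tailSum p a k₀ α :=
      (Finset.add_sum_erase _ _ (Finset.mem_univ k₀)).symm
    have e3 : ∏ l, Real.Gamma (((α ⟨k₀, l⟩ : ℝ) + 1) / p k₀ l) =
        Real.Gamma (((α ⟨k₀, i⟩ : ℝ) + 1) / p k₀ i) * (Real.Gamma (((α ⟨k₀, j⟩ : ℝ) + 1) / p k₀ j) *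
        ∏ l ∈ (Finset.univ.erase i).erase j, Real.Gamma (((α ⟨k₀, l⟩ : ℝ) + 1) / p k₀ l)) := by
      rw [Finset.mul_prod_erase _ (fun l => Real.Gamma (((α ⟨k₀, l⟩ : ℝ) + 1) / p k₀ l))
          (Finset.mem_erase.2 ⟨hij.symm, Finset.mem_univ j⟩),
        Finset.mul_prod_erase _ (fun l => Real.Gamma (((α ⟨k₀, l⟩ : ℝ) + 1) / p k₀ l))
          (Finset.mem_univ i)]
    unfold omegaTwo
    simp only [e1]
    have e4 := Finset.mul_prod_erase Finset.univ
      (fun k => (∏ l, Real.Gamma (((α ⟨k, l⟩ : ℝ) + 1) / p k l)) / Real.Gamma (blockSum p α k))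
      (Finset.mem_univ k₀)
    have e5 := Finset.mul_prod_erase Finset.univ
      (fun k => Real.Gamma (blockSum p α k / a k)) (Finset.mem_univ k₀)
    simp only [blockSum] at e4 e5 e2 ⊢
    rw [← e4, ← e5, e3, e2]
    have h1 : 0 < (∑ l, ((α ⟨k₀, l⟩ : ℝ) + 1) / p k₀ l) / a k₀ + tailSum p a k₀ α :=
      add_pos_of_pos_of_nonneg (div_pos (hB α k₀) (ha k₀)) (tailSum_nonneg hm hp ha k₀ α)
    rw [Real.Gamma_add_one h1.ne']
    simp only [div_eq_mul_inv, mul_inv]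
    ring

/-- The eigenvalue at `α = β + e_y`: the shift removes the natural-number subtraction, since then
`α - e_y = β`. -/
theorem muTwo_shift (hm : ∀ k, 0 < m k) (hp : ∀ k j, 0 < p k j) (ha : ∀ k, 0 < a k)
    (k₀ : Fin K) (i j : Fin (m k₀)) (hij : i ≠ j) (β : (Σ k : Fin K, Fin (m k)) → ℕ) :
    muTwo K m p a ⟨k₀, i⟩ ⟨k₀, j⟩ (Function.update β ⟨k₀, j⟩ (β ⟨k₀, j⟩ + 1)) =
      Real.exp (lP (a k₀) (1 / p k₀ i) (1 / p k₀ j) (((β ⟨k₀, i⟩ : ℝ) + 1) / p k₀ i)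
        (((β ⟨k₀, j⟩ : ℝ) + 1) / p k₀ j) (blockSum p β k₀)
        (blockSum p β k₀ / a k₀ + tailSum p a k₀ β + 1)) *
      |1 - Real.exp (eE (a k₀) (1 / p k₀ i) (1 / p k₀ j) (blockSum p β k₀)
        (blockSum p β k₀ / a k₀ + tailSum p a k₀ β + 1))| := by
  obtain ⟨R, hR0, hR, hω⟩ := omegaTwo_factor hm hp ha k₀ i j hij
  set x : Σ k : Fin K, Fin (m k) := ⟨k₀, i⟩ with hx
  set y : Σ k : Fin K, Fin (m k) := ⟨k₀, j⟩ with hy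
  have hxy : x ≠ y := by
    intro h
    apply hij
    simpa [hx, hy] using h
  set σ := 1 / p k₀ i with hσd
  set τ := 1 / p k₀ j with hτd
  have hσ : 0 < σ := one_div_pos.2 (hp _ _)
  have hτ : 0 < τ := one_div_pos.2 (hp _ _)
  have ha0 := ha k₀
  set A := ((β x : ℝ) + 1) / p k₀ i with hA
  set B := ((β y : ℝ) + 1) / p k₀ j with hB
  set S := blockSum p β k₀ with hS
  set T := tailSum p a k₀ β with hT
  have hA0 : 0 < A := by have := hp k₀ i; positivity
  have hB0 : 0 < B := by have := hp k₀ j; positivity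
  have hS0 : 0 < S := blockSum_pos hm hp _ _
  have hT0 : 0 ≤ T := tailSum_nonneg hm hp ha _ _
  -- `ω₂` at a point `γ = β + s e_x + t e_y`.
  have key : ∀ (γ : (Σ k : Fin K, Fin (m k)) → ℕ) (s t : ℕ), γ x = β x + s → γ y = β y + t →
      (∀ w, w ≠ x → w ≠ y → γ w = β w) → 
      omegaTwo K m p a γ = Real.exp (Real.log (R β) + Real.log (Real.Gamma (A + s * σ))
        + Real.log (Real.Gamma (B + t * τ))
        + Real.log (Real.Gamma ((S + s * σ + t * τ) / a k₀))
        - Real.log (Real.Gamma (S + s * σ + t * τ))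
        - Real.log (Real.Gamma ((S + s * σ + t * τ) / a k₀ + T + 1))) := by
    intro γ s t h1 h2 h3
    have f1 : ((γ x : ℝ) + 1) / p k₀ i = A + s * σ := by
      rw [h1, hA, hσd]; push_cast; ring
    have f2 : ((γ y : ℝ) + 1) / p k₀ j = B + t * τ := by
      rw [h2, hB, hτd]; push_cast; ring
    have f3 : tailSum p a k₀ γ = T := by
      refine Finset.sum_congr rfl fun k hk => ?_
      have hk' := (Finset.mem_erase.1 hk).1
      congr 1
      refine Finset.sum_congr rfl fun l _ => ?_
      rw [h3 ⟨k, l⟩ (fun h' => hk' (congrArg Sigma.fst h')) (fun h' => hk' (congrArg Sigma.fst h'))]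
    have f4 : blockSum p γ k₀ = S + s * σ + t * τ := by
      have g : ∀ δ : (Σ k : Fin K, Fin (m k)) → ℕ, blockSum p δ k₀ =
          ((δ x : ℝ) + 1) / p k₀ i + (((δ y : ℝ) + 1) / p k₀ j +
          ∑ l ∈ (Finset.univ.erase i).erase j, ((δ ⟨k₀, l⟩ : ℝ) + 1) / p k₀ l) := by
        intro δ
        rw [Finset.add_sum_erase _ (fun l => ((δ ⟨k₀, l⟩ : ℝ) + 1) / p k₀ l)
            (Finset.mem_erase.2 ⟨hij.symm, Finset.mem_univ j⟩),
          Finset.add_sum_erase _ (fun l => ((δ ⟨k₀, l⟩ : ℝ) + 1) / p k₀ l) (Finset.mem_univ i)]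
        rfl
      rw [hS, g γ, g β, f1, f2]
      have : ∑ l ∈ (Finset.univ.erase i).erase j, ((γ ⟨k₀, l⟩ : ℝ) + 1) / p k₀ l =
          ∑ l ∈ (Finset.univ.erase i).erase j, ((β ⟨k₀, l⟩ : ℝ) + 1) / p k₀ l := by
        refine Finset.sum_congr rfl fun l hl => ?_
        rw [Finset.mem_erase, Finset.mem_erase] at hl
        rw [h3 ⟨k₀, l⟩ (fun e => hl.2.1 (by simpa [hx] using e))
          (fun e => hl.1 (by simpa [hy] using e))]
      rw [this]
      ring
    rw [hω γ, f1, f2, f3, f4, hR γ β h3]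
    have q1 : 0 < Real.Gamma (A + s * σ) := Real.Gamma_pos_of_pos (by positivity)
    have q2 : 0 < Real.Gamma (B + t * τ) := Real.Gamma_pos_of_pos (by positivity)
    have q3 : 0 < Real.Gamma ((S + s * σ + t * τ) / a k₀) := Real.Gamma_pos_of_pos (by positivity)
    have q4 : 0 < Real.Gamma (S + s * σ + t * τ) := Real.Gamma_pos_of_pos (by positivity)
    have q5 : 0 < Real.Gamma ((S + s * σ + t * τ) / a k₀ + T + 1) :=
      Real.Gamma_pos_of_pos (by positivity)
    rw [Real.exp_sub, Real.exp_sub, Real.exp_add, Real.exp_add, Real.exp_add,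
      Real.exp_log (hR0 β), Real.exp_log q1, Real.exp_log q2, Real.exp_log q3, Real.exp_log q4,
      Real.exp_log q5]
    field_simp
  set α := Function.update β y (β y + 1) with hα
  have αy : α y = β y + 1 := by simp [hα]
  have αx : α x = β x := by simp [hα, hxy]
  have w1 := key α 0 1 (by rw [αx]; rfl) αy (fun w _ h2 => by simp [hα, h2])
  have w2 := key (Function.update (Function.update α x (α x + 1)) y (α y - 1)) 1 0
    (by simp [hxy, αx]) (by simp [αy]) (fun w h1 h2 => by simp [hα, h1, h2])
  have w3 := key (Function.update α y (α y - 1)) 0 0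
    (by simp [hxy, αx]) (by simp [αy]) (fun w h1 h2 => by simp [hα, h2])
  have w4 := key (Function.update α x (α x + 1)) 1 1
    (by simp [αx]) (by simp [αy, hxy.symm]) (fun w h1 h2 => by simp [hα, h1, h2])
  unfold muTwo
  rw [if_neg (by rw [αy]; omega), w1, w2, w3, w4]
  have sq : ∀ u : ℝ, Real.sqrt (Real.exp u) = Real.exp (u / 2) := fun u => by
    rw [Real.sqrt_eq_iff_mul_self_eq (Real.exp_pos _).le (Real.exp_pos _).le, ← Real.exp_add]
    congr 1; ring
  have sq2 : ∀ u : ℝ, Real.exp u ^ 2 = Real.exp (2 * u) := fun u => by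
    rw [← Real.exp_nat_mul]; norm_num
  simp only [sq2, ← Real.exp_add, ← Real.exp_sub, sq, Nat.cast_zero, Nat.cast_one, zero_mul, one_mul,
    add_zero]
  set E := eE (a k₀) σ τ S (S / a k₀ + T + 1) with hE
  rw [← abs_of_pos (Real.exp_pos (lP (a k₀) σ τ A B S (S / a k₀ + T + 1))), ← abs_mul,
    show ∀ P : ℝ, Real.exp P * (1 - Real.exp E) = Real.exp P - Real.exp (P + E) from fun P => by
      rw [Real.exp_add]; ring]
  have r1 : S / a k₀ + σ / a k₀ = (S + σ) / a k₀ := by ring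
  have r2 : S / a k₀ + τ / a k₀ = (S + τ) / a k₀ := by ring
  have r4 : S / a k₀ + T + 1 + σ / a k₀ = (S + σ) / a k₀ + T + 1 := by ring
  have r5 : S / a k₀ + T + 1 + τ / a k₀ = (S + τ) / a k₀ + T + 1 := by ring
  have r6 : (S + σ) / a k₀ + T + 1 + τ / a k₀ = (S + σ + τ) / a k₀ + T + 1 := by ring
  have r7 : (S + σ) / a k₀ + τ / a k₀ = (S + σ + τ) / a k₀ := by ring
  congr 3
  · simp only [lP, lgG, r1, r2, r4, r5]
    ring
  · simp only [hE, eE, lgD, lP, lgG, r1, r2, r4, r5, r6, r7]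
    ring

end

/-! ### Convergence and divergence -/

/-- The eigenvalue `μ(β + e_y)` in terms of the block sums of `β`. -/
noncomputable def muShift {K : ℕ} {m : Fin K → ℕ} (p : (k : Fin K) → Fin (m k) → ℝ)
    (a : Fin K → ℝ) (k₀ : Fin K) (i j : Fin (m k₀)) (β : (Σ k : Fin K, Fin (m k)) → ℕ) : ℝ :=
  Real.exp (lP (a k₀) (1 / p k₀ i) (1 / p k₀ j) (((β ⟨k₀, i⟩ : ℝ) + 1) / p k₀ i)
        (((β ⟨k₀, j⟩ : ℝ) + 1) / p k₀ j) (blockSum p β k₀)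
        (blockSum p β k₀ / a k₀ + tailSum p a k₀ β + 1)) *
      |1 - Real.exp (eE (a k₀) (1 / p k₀ i) (1 / p k₀ j) (blockSum p β k₀)
        (blockSum p β k₀ / a k₀ + tailSum p a k₀ β + 1))|

section
variable {K : ℕ} {m : Fin K → ℕ} {p : (k : Fin K) → Fin (m k) → ℝ} {a : Fin K → ℝ}

theorem muShift_nonneg (k₀ : Fin K) (i j : Fin (m k₀)) (β : (Σ k : Fin K, Fin (m k)) → ℕ) :
    0 ≤ muShift p a k₀ i j β := by unfold muShift; positivity

/-- `μ` vanishes off the image of the injection `β ↦ β + e_y`, so the series may be reindexed. -/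
theorem summable_muTwo_iff (hm : ∀ k, 0 < m k) (hp : ∀ k j, 0 < p k j) (ha : ∀ k, 0 < a k)
    (k₀ : Fin K) (i j : Fin (m k₀)) (hij : i ≠ j) (q : ℝ) (hq : 0 < q) :
    Summable (fun α => muTwo K m p a ⟨k₀, i⟩ ⟨k₀, j⟩ α ^ q) ↔
      Summable (fun β => muShift p a k₀ i j β ^ q) := by
  set y : Σ k : Fin K, Fin (m k) := ⟨k₀, j⟩ with hy
  have hinj : Function.Injective
      (fun β : (Σ k : Fin K, Fin (m k)) → ℕ => Function.update β y (β y + 1)) := by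
    intro β γ h
    funext w
    have h2 := congrFun h w
    by_cases hw : w = y
    · subst hw
      simpa using h2
    · simpa [hw] using h2
  rw [← hinj.summable_iff]
  · refine summable_congr fun β => ?_
    simp only [Function.comp]
    rw [hy, muTwo_shift hm hp ha k₀ i j hij β]
    rfl
  · intro α hα
    have h0 : α y = 0 := by
      by_contra h
      apply hα
      refine ⟨Function.update α y (α y - 1), ?_⟩
      funext w
      by_cases hw : w = y
      · subst hw
        simp
        omega
      · simp [hw]
    simp [muTwo, h0, Real.zero_rpow hq.ne']

theorem coord_le_block (hp : ∀ k j, 0 < p k j) (β : (Σ k : Fin K, Fin (m k)) → ℕ)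
    (w : Σ k : Fin K, Fin (m k)) :
    ((β w : ℝ) + 1) / p w.1 w.2 ≤ blockSum p β w.1 :=
  Finset.single_le_sum (f := fun j => ((β ⟨w.1, j⟩ : ℝ) + 1) / p w.1 j)
    (fun j _ => by have := hp w.1 j; positivity) (Finset.mem_univ w.2)

theorem block_le_total (hm : ∀ k, 0 < m k) (hp : ∀ k j, 0 < p k j) (ha : ∀ k, 0 < a k)
    (k₀ : Fin K) (β : (Σ k : Fin K, Fin (m k)) → ℕ) (k : Fin K) :
    blockSum p β k / a k ≤ blockSum p β k₀ / a k₀ + tailSum p a k₀ β + 1 := by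
  have h0 := tailSum_nonneg hm hp ha k₀ β
  by_cases h : k = k₀
  · subst h
    linarith
  · have h1 : blockSum p β k / a k ≤ tailSum p a k₀ β :=
      Finset.single_le_sum (f := fun k => blockSum p β k / a k)
        (fun k _ => (div_pos (blockSum_pos hm hp β k) (ha k)).le)
        (Finset.mem_erase.2 ⟨h, Finset.mem_univ k⟩)
    have h2 := div_pos (blockSum_pos hm hp β k₀) (ha k₀)
    linarith

/-- Both `S` and `Z` dominate each of their coordinates up to a multiplicative constant. -/
theorem log_coord_le (hm : ∀ k, 0 < m k) (hp : ∀ k j, 0 < p k j) (ha : ∀ k, 0 < a k)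
    (k₀ : Fin K) :
    ∃ κ : ℝ, 0 ≤ κ ∧ ∀ (β : (Σ k : Fin K, Fin (m k)) → ℕ) (w : Σ k : Fin K, Fin (m k)),
      Real.log ((β w : ℝ) + 1) ≤
        Real.log (blockSum p β k₀ / a k₀ + tailSum p a k₀ β + 1) + κ ∧
      (w.1 = k₀ → Real.log ((β w : ℝ) + 1) ≤ Real.log (blockSum p β k₀) + κ) := by
  set κ₀ : (Σ k : Fin K, Fin (m k)) → ℝ :=
    fun w => max |Real.log (p w.1 w.2 * a w.1)| |Real.log (p w.1 w.2)| with hκ₀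
  have hκ0 : ∀ w, 0 ≤ κ₀ w := fun w => (abs_nonneg _).trans (le_max_left _ _)
  refine ⟨∑ w, κ₀ w, Finset.sum_nonneg fun w _ => hκ0 w, fun β w => ?_⟩
  have hκ : κ₀ w ≤ ∑ w, κ₀ w := Finset.single_le_sum (fun w _ => hκ0 w) (Finset.mem_univ w)
  have hpw := hp w.1 w.2
  have haw := ha w.1
  have hb := blockSum_pos hm hp β w.1
  have h1 := coord_le_block hp β w
  have h2 := block_le_total hm hp ha k₀ β w.1
  constructor
  · have h3 : Real.log ((β w : ℝ) + 1) ≤ Real.log ((blockSum p β k₀ / a k₀ + tailSum p a k₀ β + 1)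
        * (p w.1 w.2 * a w.1)) := by
      refine Real.log_le_log (by positivity) ?_
      rw [div_le_iff₀ hpw] at h1
      rw [div_le_iff₀ haw] at h2
      calc _ ≤ _ := h1
        _ ≤ _ := mul_le_mul_of_nonneg_right h2 hpw.le
        _ = _ := by ring
    rw [Real.log_mul (lt_of_lt_of_le (by positivity) h2).ne' (by positivity)] at h3
    have h4 : Real.log (p w.1 w.2 * a w.1) ≤ κ₀ w := (le_abs_self _).trans (le_max_left _ _)
    linarith
  · intro hw
    have h3 : Real.log ((β w : ℝ) + 1) ≤ Real.log (blockSum p β k₀ * p w.1 w.2) := by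
      refine Real.log_le_log (by positivity) ?_
      rw [div_le_iff₀ hpw] at h1
      rwa [← hw]
    rw [Real.log_mul (by rw [← hw]; exact hb.ne') hpw.ne'] at h3
    have h4 : Real.log (p w.1 w.2) ≤ κ₀ w := (le_abs_self _).trans (le_max_right _ _)
    linarith

/-- A uniform bound on the coordinates of a block bounds its block sum. -/
theorem block_le_of_coord (hp : ∀ k j, 0 < p k j) :
    ∃ c > 0, ∀ (β : (Σ k : Fin K, Fin (m k)) → ℕ) (k : Fin K) (X : ℝ),
      (∀ j, (β ⟨k, j⟩ : ℝ) + 1 ≤ X) → 0 ≤ X → blockSum p β k ≤ c * X := by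
  have h0 : ∀ k, 0 ≤ ∑ j, 1 / p k j := fun k =>
    Finset.sum_nonneg fun j _ => (one_div_pos.2 (hp k j)).le
  refine ⟨1 + ∑ k, ∑ j, 1 / p k j, by
    have := Finset.sum_nonneg (s := Finset.univ) fun k _ => h0 k
    linarith, fun β k X h hX => ?_⟩
  have h1 : ∑ j, 1 / p k j ≤ ∑ k, ∑ j, 1 / p k j :=
    Finset.single_le_sum (f := fun k => ∑ j, 1 / p k j) (fun k _ => h0 k) (Finset.mem_univ k)
  calc blockSum p β k ≤ ∑ j, 1 / p k j * X := by
        refine Finset.sum_le_sum fun j _ => ?_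
        rw [one_div_mul_eq_div]
        exact div_le_div_of_nonneg_right (h j) (hp k j).le
    _ = (∑ j, 1 / p k j) * X := by rw [Finset.sum_mul]
    _ ≤ _ := by gcongr; linarith

/-- The analogue of `block_le_of_coord` for the blocks other than `k₀`. -/
theorem tail_le_of_coord (hp : ∀ k j, 0 < p k j) (ha : ∀ k, 0 < a k) (k₀ : Fin K) :
    ∃ c > 0, ∀ (β : (Σ k : Fin K, Fin (m k)) → ℕ) (X : ℝ),
      (∀ w, w.1 ≠ k₀ → (β w : ℝ) + 1 ≤ X) → 0 ≤ X → tailSum p a k₀ β ≤ c * X := by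
  obtain ⟨c, hc, h1⟩ := block_le_of_coord hp
  have h0 : 0 ≤ ∑ k ∈ Finset.univ.erase k₀, c / a k :=
    Finset.sum_nonneg fun k _ => (div_pos hc (ha k)).le
  refine ⟨1 + ∑ k ∈ Finset.univ.erase k₀, c / a k, by linarith, fun β X h hX => ?_⟩
  calc tailSum p a k₀ β ≤ ∑ k ∈ Finset.univ.erase k₀, c / a k * X := by
        refine Finset.sum_le_sum fun k hk => ?_
        have := h1 β k X (fun j => h _ (Finset.mem_erase.1 hk).1) hX
        rw [div_mul_eq_mul_div]
        exact div_le_div_of_nonneg_right this (ha k).le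
    _ = (∑ k ∈ Finset.univ.erase k₀, c / a k) * X := by rw [Finset.sum_mul]
    _ ≤ _ := by gcongr; linarith

/-- If `a_{k₀} = 1`, then `μ ≲ 1/Z`, and `Z` dominates all `d` coordinates. -/
theorem summable_case_one (hm : ∀ k, 0 < m k) (hp : ∀ k j, 0 < p k j) (ha : ∀ k, 0 < a k)
    (k₀ : Fin K) (i j : Fin (m k₀)) (h1 : a k₀ = 1) (q : ℝ)
    (hq : ((∑ k, m k : ℕ) : ℝ) < q) :
    Summable (fun β => muShift p a k₀ i j β ^ q) := by
  have hpi := hp k₀ i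
  have hpj := hp k₀ j
  have hσ : 0 < 1 / p k₀ i := by positivity
  have hτ : 0 < 1 / p k₀ j := by positivity
  obtain ⟨C, hC⟩ := upper_one hσ hτ (lt_min hσ hτ)
  obtain ⟨κ, hκ0, hκ⟩ := log_coord_le hm hp ha k₀
  set d : ℕ := ∑ k, m k with hd
  have hd0 : 0 < d := lt_of_lt_of_le (hm k₀) (Finset.single_le_sum (f := m) (fun _ _ => Nat.zero_le _)
    (Finset.mem_univ k₀))
  have hd0' : (0 : ℝ) < d := by exact_mod_cast hd0
  have hq0 : 0 < q := hd0'.trans hq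
  refine summable_exp_log (fun _ => q / d) (fun _ => by rwa [one_lt_div hd0']) (q * C + q * κ) _
    (fun β => Real.rpow_nonneg (muShift_nonneg _ _ _ _) _) fun β => ?_
  have hb : muShift p a k₀ i j β ≤
      Real.exp (C - Real.log (blockSum p β k₀ / a k₀ + tailSum p a k₀ β + 1)) := by
    unfold muShift
    rw [h1]
    refine hC _ _ _ _ ?_ ?_ (coord_le_block hp β ⟨k₀, i⟩) (coord_le_block hp β ⟨k₀, j⟩) ?_
    · refine (min_le_left _ _).trans ?_
      gcongr
      simp
    · refine (min_le_right _ _).trans ?_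
      gcongr
      simp
    · have := tailSum_nonneg hm hp ha k₀ β
      rw [div_one]
      linarith
  refine (Real.rpow_le_rpow (muShift_nonneg _ _ _ _) hb hq0.le).trans ?_
  rw [← Real.exp_mul]
  refine Real.exp_le_exp.2 ?_
  have hs : ∑ w : (Σ k : Fin K, Fin (m k)), q / d * Real.log ((β w : ℝ) + 1) ≤
      q * (Real.log (blockSum p β k₀ / a k₀ + tailSum p a k₀ β + 1) + κ) := by
    calc _ ≤ ∑ w : (Σ k : Fin K, Fin (m k)), q / d *
          (Real.log (blockSum p β k₀ / a k₀ + tailSum p a k₀ β + 1) + κ) := by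
          refine Finset.sum_le_sum fun w _ => ?_
          exact mul_le_mul_of_nonneg_left (hκ β w).1 (by positivity)
      _ = _ := by
          rw [Finset.sum_const, Finset.card_univ, Fintype.card_sigma]
          simp only [Fintype.card_fin]
          rw [← hd, nsmul_eq_mul]
          field_simp
  linarith

/-- Summing a weight that depends only on whether a coordinate lies in the block `k₀`. -/
theorem sum_sigma_ite (k₀ : Fin K) (u v : ℝ) :
    ∑ w : (Σ k : Fin K, Fin (m k)), (if w.1 = k₀ then u else v) =
      (m k₀ : ℝ) * u + (((∑ k, m k : ℕ) : ℝ) - m k₀) * v := by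
  rw [Fintype.sum_sigma]
  have e : ∀ k, (∑ _l : Fin (m k), if k = k₀ then u else v) =
      (m k : ℝ) * (if k = k₀ then u else v) := fun k => by
    rw [Finset.sum_const, Finset.card_univ, Fintype.card_fin, nsmul_eq_mul]
  simp only [e]
  rw [← Finset.add_sum_erase _ _ (Finset.mem_univ k₀), if_pos rfl]
  push_cast
  rw [← Finset.add_sum_erase _ (fun k => (m k : ℝ)) (Finset.mem_univ k₀), add_sub_cancel_left,
    Finset.sum_mul]
  congr 1
  refine Finset.sum_congr rfl fun k hk => ?_
  rw [if_neg (Finset.mem_erase.1 hk).1]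

/-- Uses `μ ≲ S⁻¹ (S/Z)^γ` with `γ = (1/p_x + 1/p_y)/(2a)`. For `d - m_{k₀} < θ < min (γ q) (q - m_{k₀})`
the `q`-th power is at most a multiple of `S^{-(q-θ)} Z^{-θ}`, and each factor has enough decay for
its own variables: `S` for the block `k₀`, `Z` for the `d - m_{k₀}` remaining ones. -/
theorem summable_case_general (hm : ∀ k, 0 < m k) (hp : ∀ k j, 0 < p k j) (ha : ∀ k, 0 < a k)
    (k₀ : Fin K) (i j : Fin (m k₀)) (q : ℝ)
    (hq : ((∑ k, m k : ℕ) : ℝ) < q)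
    (hq2 : ((∑ k, m k : ℕ) : ℝ) - m k₀ < (1 / p k₀ i + 1 / p k₀ j) / (2 * a k₀) * q) :
    Summable (fun β => muShift p a k₀ i j β ^ q) := by
  have hpi := hp k₀ i
  have hpj := hp k₀ j
  have ha0 := ha k₀
  have hσ : 0 < 1 / p k₀ i := by positivity
  have hτ : 0 < 1 / p k₀ j := by positivity
  obtain ⟨C, hC⟩ := upper_general ha0 hσ hτ (lt_min one_pos (lt_min hσ hτ))
  obtain ⟨κ, hκ0, hκ⟩ := log_coord_le hm hp ha k₀
  set γ := (1 / p k₀ i + 1 / p k₀ j) / (2 * a k₀) with hγ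
  have hm0 : (0 : ℝ) < m k₀ := by exact_mod_cast hm k₀
  set d : ℕ := ∑ k, m k with hd
  have hmd : m k₀ ≤ d := Finset.single_le_sum (f := m) (fun _ _ => Nat.zero_le _)
    (Finset.mem_univ k₀)
  have hn0 : (0 : ℝ) ≤ (d : ℝ) - m k₀ := by
    rw [sub_nonneg]; exact_mod_cast hmd
  obtain ⟨θ, hθ1, hθ2⟩ := exists_between
    (show (d : ℝ) - m k₀ < min (γ * q) (q - m k₀) from lt_min hq2 (by linarith))
  have hθγ : θ ≤ γ * q := hθ2.le.trans (min_le_left _ _)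
  have hθm : θ < q - m k₀ := hθ2.trans_le (min_le_right _ _)
  have hθ0 : 0 < θ := hn0.trans_lt hθ1
  have hq0 : 0 < q := by linarith
  refine summable_exp_log (fun w => if w.1 = k₀ then (q - θ) / m k₀ else θ / ((d : ℝ) - m k₀))
    (fun w => ?_) (q * C + (γ * q - θ) * |Real.log (a k₀)| + q * κ) _
    (fun β => Real.rpow_nonneg (muShift_nonneg _ _ _ _) _) fun β => ?_
  · split_ifs with h
    · rw [one_lt_div hm0]
      linarith
    · have h3 : m k₀ + m w.1 ≤ d := by
        rw [hd, ← Finset.add_sum_erase _ _ (Finset.mem_univ k₀)]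
        exact Nat.add_le_add_left (Finset.single_le_sum (f := m) (fun _ _ => Nat.zero_le _)
          (Finset.mem_erase.2 ⟨h, Finset.mem_univ _⟩)) _
      have h4 : (m k₀ : ℝ) < d := by
        have := hm w.1
        exact_mod_cast (show m k₀ < d by omega)
      rw [one_lt_div (by linarith)]
      exact hθ1
  set S := blockSum p β k₀ with hS
  have hS0 : 0 < S := blockSum_pos hm hp β k₀
  have hT0 := tailSum_nonneg hm hp ha k₀ β
  set Z := S / a k₀ + tailSum p a k₀ β + 1 with hZ
  have hSa : 0 < S / a k₀ := by positivity
  have hSZ : S / a k₀ ≤ Z := by linarith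
  have hZ1 : 1 ≤ Z := by linarith
  have hb : muShift p a k₀ i j β ≤ Real.exp (C - Real.log S + γ * (Real.log S - Real.log Z)) := by
    unfold muShift
    refine hC _ _ _ _ ?_ ?_ (coord_le_block hp β ⟨k₀, i⟩) (coord_le_block hp β ⟨k₀, j⟩)
      ((min_le_left _ _).trans hZ1) hSZ
    · refine (min_le_right _ _).trans ((min_le_left _ _).trans ?_)
      gcongr
      simp
    · refine (min_le_right _ _).trans ((min_le_right _ _).trans ?_)
      gcongr
      simp
  refine (Real.rpow_le_rpow (muShift_nonneg _ _ _ _) hb hq0.le).trans ?_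
  rw [← Real.exp_mul]
  refine Real.exp_le_exp.2 ?_
  have hlz : 0 ≤ Real.log Z := Real.log_nonneg hZ1
  have hlog : Real.log S - Real.log Z ≤ |Real.log (a k₀)| := by
    have h5 := Real.log_le_log hSa hSZ
    rw [Real.log_div hS0.ne' ha0.ne'] at h5
    have := le_abs_self (Real.log (a k₀))
    linarith
  have hs : ∑ w : (Σ k : Fin K, Fin (m k)),
      (if w.1 = k₀ then (q - θ) / m k₀ else θ / ((d : ℝ) - m k₀)) * Real.log ((β w : ℝ) + 1) ≤
      (q - θ) * (Real.log S + κ) + θ * (Real.log Z + κ) := by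
    calc _ ≤ ∑ w : (Σ k : Fin K, Fin (m k)), (if w.1 = k₀ then (q - θ) / m k₀ * (Real.log S + κ)
          else θ / ((d : ℝ) - m k₀) * (Real.log Z + κ)) := by
          refine Finset.sum_le_sum fun w _ => ?_
          split_ifs with h
          · exact mul_le_mul_of_nonneg_left ((hκ β w).2 h) (div_nonneg (by linarith) hm0.le)
          · exact mul_le_mul_of_nonneg_left (hκ β w).1 (div_nonneg hθ0.le hn0)
      _ = (m k₀ : ℝ) * ((q - θ) / m k₀ * (Real.log S + κ)) +
          ((d : ℝ) - m k₀) * (θ / ((d : ℝ) - m k₀) * (Real.log Z + κ)) := sum_sigma_ite _ _ _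
      _ ≤ _ := by
          refine add_le_add (le_of_eq (by field_simp)) ?_
          rw [← mul_assoc]
          refine mul_le_mul_of_nonneg_right ?_ (by linarith)
          -- with a single block the left side is `0`
          rcases hn0.eq_or_lt with h | h
          · rw [← h]; simpa using hθ0.le
          · exact (mul_div_cancel₀ θ h.ne').le
  have hfin := mul_le_mul_of_nonneg_left hlog (sub_nonneg.2 hθγ)
  nlinarith

/-- For `q ≤ d` the boxes of side about `n` on which the block `k₀` dominates carry `≳ n^d` points
with `μ ≳ 1/n`. -/
theorem not_summable_cone (hm : ∀ k, 0 < m k) (hp : ∀ k j, 0 < p k j) (ha : ∀ k, 0 < a k)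
    (k₀ : Fin K) (i j : Fin (m k₀)) (q : ℝ) (hq0 : 0 < q)
    (hq : q ≤ ((∑ k, m k : ℕ) : ℝ)) :
    ¬ Summable (fun β => muShift p a k₀ i j β ^ q) := by
  have hpi := hp k₀ i
  have hpj := hp k₀ j
  have ha0 := ha k₀
  have hσ : 0 < 1 / p k₀ i := by positivity
  have hτ : 0 < 1 / p k₀ j := by positivity
  set ρ := min (1 / p k₀ i) (1 / p k₀ j) with hρ
  have hρ0 : 0 < ρ := lt_min hσ hτ
  obtain ⟨c₁, hc₁, hblock⟩ := block_le_of_coord hp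
  obtain ⟨c₂, hc₂, htail⟩ := tail_le_of_coord hp ha k₀
  obtain ⟨S₁, hS₁, c, hc, hlow⟩ := lower_cone_mu (r := ρ / (2 * c₁)) ha0 hσ hτ hρ0 (by positivity)
  -- `M` makes the block `k₀` dominate: `4 T ≤ 8 c₂ n ≤ M ρ n ≤ S`.
  obtain ⟨M, hM⟩ := exists_nat_ge (8 * c₂ / ρ + 1)
  have hM1 : (1 : ℝ) ≤ M := le_trans (by
    have : 0 < 8 * c₂ / ρ := by positivity
    linarith) hM
  have hM1' : 1 ≤ M := by exact_mod_cast hM1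
  have hM2 : 8 * c₂ ≤ M * ρ := by
    rw [← div_le_iff₀ hρ0]
    linarith
  -- beyond `n₀` the block sum exceeds `S₁`
  obtain ⟨n₀, hn₀⟩ := exists_nat_ge (S₁ / ρ)
  refine not_summable_of_boxes _
    (fun n w => if w.1 = k₀ then Finset.Ico (M * n) (2 * (M * n)) else Finset.Ico n (2 * n))
    ⟨k₀, i⟩ (fun n k hk => ?_)
    (fun n => Real.exp (q * (Real.log (c / (c₁ * (2 * M))) - Real.log n)))
    (Real.exp (q * Real.log (c / (c₁ * (2 * M))))) (Real.exp_pos _) (n₀ + 1)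
    (fun n hn β hβ => ?_) (fun n hn => ?_)
  · rw [if_pos rfl, Finset.mem_Ico] at hk
    exact (Nat.le_mul_of_pos_left n hM1').trans hk.1
  · have hn1 : (1 : ℝ) ≤ n := by exact_mod_cast (show 1 ≤ n by omega)
    have hnn : (n₀ : ℝ) ≤ n := by exact_mod_cast (show n₀ ≤ n by omega)
    have hMn : (1 : ℝ) ≤ M * n := by nlinarith
    have b1 : ∀ l, (M : ℝ) * n ≤ β ⟨k₀, l⟩ ∧ (β ⟨k₀, l⟩ : ℝ) + 1 ≤ 2 * (M * n) := fun l => by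
      have := hβ ⟨k₀, l⟩
      rw [if_pos rfl, Finset.mem_Ico] at this
      exact ⟨by exact_mod_cast this.1, by exact_mod_cast this.2⟩
    have b2 : ∀ w : (Σ k : Fin K, Fin (m k)), w.1 ≠ k₀ → (β w : ℝ) + 1 ≤ 2 * n := fun w hw => by
      have := hβ w
      rw [if_neg hw, Finset.mem_Ico] at this
      exact_mod_cast this.2
    have hS2 := hblock β k₀ _ (fun l => (b1 l).2) (by positivity)
    have hT2 := htail β _ b2 (by positivity)
    have hT0 := tailSum_nonneg hm hp ha k₀ β
    have hS0 := blockSum_pos hm hp β k₀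
    have hA : ∀ l, ρ ≤ 1 / p k₀ l → ρ * (M * n) ≤ ((β ⟨k₀, l⟩ : ℝ) + 1) / p k₀ l := by
      intro l hl
      have := hp k₀ l
      rw [div_eq_mul_one_div, mul_comm]
      exact mul_le_mul (by linarith [(b1 l).1]) hl hρ0.le (by positivity)
    have hAi := hA i (min_le_left _ _)
    have hAj := hA j (min_le_right _ _)
    have hSM : ρ * (M * n) ≤ blockSum p β k₀ := hAi.trans (coord_le_block hp β ⟨k₀, i⟩)
    have hρS : ρ / (2 * c₁) * blockSum p β k₀ ≤ ρ * (M * n) := by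
      rw [div_mul_eq_mul_div, div_le_iff₀ (by positivity)]
      nlinarith
    have hρM : ρ ≤ ρ * (M * n) := le_mul_of_one_le_right hρ0.le hMn
    have hS1S : S₁ ≤ blockSum p β k₀ := by
      refine le_trans ?_ hSM
      rw [div_le_iff₀ hρ0] at hn₀
      have : (n : ℝ) ≤ M * n := by nlinarith
      nlinarith
    have h4T : 4 * tailSum p a k₀ β ≤ blockSum p β k₀ := by
      refine le_trans ?_ hSM
      nlinarith
    have key := hlow (((β ⟨k₀, i⟩ : ℝ) + 1) / p k₀ i) (((β ⟨k₀, j⟩ : ℝ) + 1) / p k₀ j)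
      (blockSum p β k₀) (tailSum p a k₀ β) (hρM.trans hAi) (hρM.trans hAj) (hρS.trans hAi)
      (hρS.trans hAj) hS1S hT0 h4T
    have key2 : c / (c₁ * (2 * M)) / n ≤ muShift p a k₀ i j β := by
      refine le_trans ?_ key
      rw [div_div]
      refine div_le_div_of_nonneg_left hc.le hS0 ?_
      linarith
    have hpos : 0 < c / (c₁ * (2 * M)) := by positivity
    have hpos2 : 0 < c / (c₁ * (2 * M)) / n := by positivity
    have := Real.rpow_le_rpow hpos2.le key2 hq0.le
    refine le_trans (le_of_eq ?_) this
    rw [Real.rpow_def_of_pos hpos2, Real.log_div hpos.ne' (by positivity), mul_comm]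
  · have hn1 : (1 : ℝ) ≤ n := by exact_mod_cast (show 1 ≤ n by omega)
    have hcard : (n : ℝ) ^ (∑ k, m k) ≤ ∏ w : (Σ k : Fin K, Fin (m k)),
        ((if w.1 = k₀ then Finset.Ico (M * n) (2 * (M * n)) else Finset.Ico n (2 * n)).card : ℝ) := by
      have : (n : ℝ) ^ (∑ k, m k) = ∏ w : (Σ k : Fin K, Fin (m k)), (n : ℝ) := by
        rw [Finset.prod_const, Finset.card_univ, Fintype.card_sigma]
        simp
      rw [this]
      refine Finset.prod_le_prod (fun _ _ => by positivity) fun w _ => ?_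
      split_ifs with h
      · rw [Nat.card_Ico, show 2 * (M * n) - M * n = M * n by omega]
        exact_mod_cast Nat.le_mul_of_pos_left n hM1'
      · rw [Nat.card_Ico, show 2 * n - n = n by omega]
    refine le_trans ?_ (mul_le_mul_of_nonneg_right hcard (Real.exp_pos _).le)
    have h6 : (n : ℝ) ^ (∑ k, m k) = Real.exp (((∑ k, m k : ℕ) : ℝ) * Real.log n) := by
      rw [Real.exp_nat_mul, Real.exp_log (by positivity)]
    rw [h6, ← Real.exp_add]
    refine Real.exp_le_exp.2 ?_
    have := mul_le_mul_of_nonneg_right hq (Real.log_nonneg hn1)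
    linarith

/-- For `γ q ≤ d - m_{k₀}` (and `a_{k₀} ≠ 1`), freeze the block `k₀` and let the other coordinates
run over `[n, 2n)`: this gives `n^{d - m_{k₀}}` points with `μ ≳ n^{-γ}`. -/
theorem not_summable_tail (hm : ∀ k, 0 < m k) (hp : ∀ k j, 0 < p k j) (ha : ∀ k, 0 < a k)
    (k₀ : Fin K) (i j : Fin (m k₀)) (h1 : a k₀ ≠ 1) (q : ℝ) (hq0 : 0 < q)
    (hq : (1 / p k₀ i + 1 / p k₀ j) / (2 * a k₀) * q ≤ ((∑ k, m k : ℕ) : ℝ) - m k₀) :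
    ¬ Summable (fun β => muShift p a k₀ i j β ^ q) := by
  have hpi := hp k₀ i
  have hpj := hp k₀ j
  have ha0 := ha k₀
  have hσ : 0 < 1 / p k₀ i := by positivity
  have hτ : 0 < 1 / p k₀ j := by positivity
  set γ := (1 / p k₀ i + 1 / p k₀ j) / (2 * a k₀) with hγ
  have hγ0 : 0 < γ := by positivity
  set ρ := min (1 / p k₀ i) (1 / p k₀ j) with hρ
  have hρ0 : 0 < ρ := lt_min hσ hτ
  -- there is a second block, since otherwise the right side of `hq` vanishes
  obtain ⟨k₁, hk₁⟩ : ∃ k₁, k₁ ≠ k₀ := by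
    by_contra! hall
    have : ∑ k, m k = m k₀ := by
      rw [← Finset.add_sum_erase _ _ (Finset.mem_univ k₀)]
      rw [show (Finset.univ.erase k₀ : Finset (Fin K)) = ∅ from by
        ext k; simp [hall k]]
      simp
    rw [this, sub_self] at hq
    have : 0 < γ * q := by positivity
    linarith
  obtain ⟨c₂, hc₂, htail⟩ := tail_le_of_coord hp ha k₀
  obtain ⟨S₁, hS₁, hlow⟩ := lower_fixed_mu ha0 h1 hσ hτ hρ0
  -- `N` is the frozen value of the coordinates in the block `k₀`
  obtain ⟨N, hN⟩ := exists_nat_ge (S₁ / (1 / p k₀ i))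
  rw [div_le_iff₀ hσ] at hN
  set A : ℝ := ((N : ℝ) + 1) / p k₀ i with hA
  set B : ℝ := ((N : ℝ) + 1) / p k₀ j with hB
  set S : ℝ := ∑ l, ((N : ℝ) + 1) / p k₀ l with hS
  have hAS : A ≤ S := Finset.single_le_sum (f := fun l => ((N : ℝ) + 1) / p k₀ l)
    (fun l _ => by have := hp k₀ l; positivity) (Finset.mem_univ i)
  have hS₁S : S₁ ≤ S := by
    refine le_trans ?_ hAS
    have : A = N * (1 / p k₀ i) + 1 / p k₀ i := by rw [hA]; ring
    linarith
  have hρA : ρ ≤ A := (min_le_left _ _).trans (by rw [hA]; gcongr; simp)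
  have hρB : ρ ≤ B := (min_le_right _ _).trans (by rw [hB]; gcongr; simp)
  obtain ⟨c, Z₀, hZ₀, hlow⟩ := hlow A B S hρA hρB hS₁S
  have hS0 : 0 < S := hS₁.trans_le hS₁S
  set w₁ : Σ k : Fin K, Fin (m k) := ⟨k₁, ⟨0, hm k₁⟩⟩ with hw₁
  have hp1 := hp k₁ ⟨0, hm k₁⟩
  have ha1 := ha k₁
  obtain ⟨n₀, hn₀⟩ := exists_nat_ge (Z₀ * (p k₁ ⟨0, hm k₁⟩ * a k₁))
  set c₃ := S / a k₀ + c₂ * 2 + 1 with hc₃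
  have hc₃0 : 0 < c₃ := by positivity
  refine not_summable_of_boxes _
    (fun n w => if w.1 = k₀ then {N} else Finset.Ico n (2 * n))
    w₁ (fun n k hk => ?_)
    (fun n => Real.exp (q * (c - γ * (Real.log c₃ + Real.log n))))
    (Real.exp (q * (c - γ * Real.log c₃))) (Real.exp_pos _) (n₀ + 1)
    (fun n hn β hβ => ?_) (fun n hn => ?_)
  · rw [if_neg hk₁, Finset.mem_Ico] at hk
    exact hk.1
  · have hn1 : (1 : ℝ) ≤ n := by exact_mod_cast (show 1 ≤ n by omega)
    have hnn : (n₀ : ℝ) ≤ n := by exact_mod_cast (show n₀ ≤ n by omega)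
    have b1 : ∀ l, β ⟨k₀, l⟩ = N := fun l => by
      have := hβ ⟨k₀, l⟩
      rwa [if_pos rfl, Finset.mem_singleton] at this
    have b2 : ∀ w : (Σ k : Fin K, Fin (m k)), w.1 ≠ k₀ → (β w : ℝ) + 1 ≤ 2 * n := fun w hw => by
      have := hβ w
      rw [if_neg hw, Finset.mem_Ico] at this
      exact_mod_cast this.2
    have hT2 := htail β _ b2 (by positivity)
    have hT0 := tailSum_nonneg hm hp ha k₀ β
    have eS : blockSum p β k₀ = S := Finset.sum_congr rfl fun l _ => by rw [b1 l]
    have hZ : Z₀ ≤ S / a k₀ + tailSum p a k₀ β + 1 := by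
      have g1 := block_le_total hm hp ha k₀ β k₁
      have g2 := coord_le_block hp β w₁
      rw [eS] at g1
      refine le_trans ?_ g1
      rw [le_div_iff₀ ha1]
      refine le_trans ?_ g2
      rw [le_div_iff₀ hp1]
      have g3 : (n : ℝ) ≤ β w₁ := by
        have := hβ w₁
        rw [if_neg hk₁, Finset.mem_Ico] at this
        exact_mod_cast this.1
      linarith
    have key := hlow _ hZ
    have hmu : muShift p a k₀ i j β = Real.exp (lP (a k₀) (1 / p k₀ i) (1 / p k₀ j) A B S
        (S / a k₀ + tailSum p a k₀ β + 1)) * |1 - Real.exp (eE (a k₀) (1 / p k₀ i) (1 / p k₀ j) S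
        (S / a k₀ + tailSum p a k₀ β + 1))| := by
      rw [muShift, eS, b1 i, b1 j]
    rw [← hmu] at key
    have hlZ : Real.log (S / a k₀ + tailSum p a k₀ β + 1) ≤ Real.log c₃ + Real.log n := by
      rw [← Real.log_mul hc₃0.ne' (by positivity)]
      refine Real.log_le_log (by positivity) ?_
      rw [hc₃]
      have : 0 < S / a k₀ := by positivity
      nlinarith
    have := Real.rpow_le_rpow (Real.exp_pos _).le key hq0.le
    refine le_trans ?_ this
    rw [← Real.exp_mul, mul_comm]
    refine Real.exp_le_exp.2 (mul_le_mul_of_nonneg_right ?_ hq0.le)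
    have := mul_le_mul_of_nonneg_left hlZ hγ0.le
    linarith
  · have hn1 : (1 : ℝ) ≤ n := by exact_mod_cast (show 1 ≤ n by omega)
    have hcard : ∏ w : (Σ k : Fin K, Fin (m k)),
        ((if w.1 = k₀ then {N} else Finset.Ico n (2 * n)).card : ℝ) =
        Real.exp ((((∑ k, m k : ℕ) : ℝ) - m k₀) * Real.log n) := by
      have e0 : ∀ w : (Σ k : Fin K, Fin (m k)),
          ((if w.1 = k₀ then {N} else Finset.Ico n (2 * n)).card : ℝ) =
          Real.exp (if w.1 = k₀ then 0 else Real.log n) := by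
        intro w
        split_ifs with h
        · simp
        · rw [Nat.card_Ico, show 2 * n - n = n by omega, Real.exp_log (by positivity)]
      simp only [e0]
      rw [← Real.exp_sum, sum_sigma_ite]
      simp
    rw [hcard, ← Real.exp_add]
    refine Real.exp_le_exp.2 ?_
    have := mul_le_mul_of_nonneg_right hq (Real.log_nonneg hn1)
    linarith

end

/-- Summability criterion for `∑_{α ∈ ℕ^d} μ(α)^q`, `μ` being built from the two first
coordinates of the first block (assumed to have more than one variable). -/
theorem cross_commutator_same_block_summable_iff_egg_two (K : ℕ) (hK : 0 < K)
    (m : Fin K → ℕ) (hm : ∀ k, 0 < m k) (hm1 : 1 < m ⟨0, hK⟩)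
    (p : (k : Fin K) → Fin (m k) → ℝ) (hp : ∀ k j, 0 < p k j)
    (a : Fin K → ℝ) (ha : ∀ k, 0 < a k)
    (d : ℕ) (hd : d = ∑ k, m k) (q : ℝ) (hq : 0 < q) :
    Summable (fun α : (Σ k : Fin K, Fin (m k)) → ℕ =>
        muTwo K m p a ⟨⟨0, hK⟩, ⟨0, by omega⟩⟩ ⟨⟨0, hK⟩, ⟨1, hm1⟩⟩ α ^ q) ↔
      ((a ⟨0, hK⟩ = 1 ∧ (d : ℝ) < q) ∨
        (a ⟨0, hK⟩ ≠ 1 ∧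
          max (d : ℝ)
            (2 * a ⟨0, hK⟩ * ((d : ℝ) - (m ⟨0, hK⟩ : ℝ)) /
              (1 / p ⟨0, hK⟩ ⟨0, by omega⟩ + 1 / p ⟨0, hK⟩ ⟨1, hm1⟩)) < q)) := by
  have hij : (⟨0, by omega⟩ : Fin (m ⟨0, hK⟩)) ≠ ⟨1, hm1⟩ := by
    intro h
    have := congrArg Fin.val h
    simp at this
  rw [summable_muTwo_iff hm hp ha ⟨0, hK⟩ ⟨0, by omega⟩ ⟨1, hm1⟩ hij q hq]
  subst hd
  set k₀ : Fin K := ⟨0, hK⟩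
  set i : Fin (m k₀) := ⟨0, by omega⟩
  set j : Fin (m k₀) := ⟨1, hm1⟩
  have ha0 := ha k₀
  have hσ : 0 < 1 / p k₀ i := one_div_pos.2 (hp k₀ i)
  have hτ : 0 < 1 / p k₀ j := one_div_pos.2 (hp k₀ j)
  have hthr : 2 * a k₀ * (((∑ k, m k : ℕ) : ℝ) - m k₀) / (1 / p k₀ i + 1 / p k₀ j) < q ↔
      ((∑ k, m k : ℕ) : ℝ) - m k₀ < (1 / p k₀ i + 1 / p k₀ j) / (2 * a k₀) * q := by
    rw [div_lt_iff₀ (by positivity), div_mul_eq_mul_div, lt_div_iff₀ (by positivity)]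
    constructor <;> intro h <;> linarith
  constructor
  · intro h
    have hd : ((∑ k, m k : ℕ) : ℝ) < q := by
      by_contra! hle
      exact not_summable_cone hm hp ha k₀ i j q hq hle h
    by_cases h1 : a k₀ = 1
    · exact Or.inl ⟨h1, hd⟩
    · refine Or.inr ⟨h1, max_lt hd (hthr.2 ?_)⟩
      by_contra! hle
      exact not_summable_tail hm hp ha k₀ i j h1 q hq hle h
  · rintro (⟨h1, h2⟩ | ⟨_, h2⟩)
    · exact summable_case_one hm hp ha k₀ i j h1 q h2
    · obtain ⟨h3, h4⟩ := max_lt_iff.1 h2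
      exact summable_case_general hm hp ha k₀ i j q h3 (hthr.1 h4)
end
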